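/- Let t₀ ∈ ℝ, let k, p ∈ ℕ with k ≥ 2 and p ≥ 2, let R > 0 and ε > 0. Then there exist constants C, T > 0 and a functional 𝓔_k : H^k(𝕋) → ℝ of the form 𝓔_k(u) = ‖u‖²_{H^k(𝕋)} + 𝓕_k(u) such that: for every solution u ∈ C(ℝ; H^k(𝕋)) of the defocusing NLS i∂_t u + ∂_x²u − u|u|^{2p} = 0 with ‖u(t₀)‖_{H¹(𝕋)} ≤ R, one has (i) sup_{t ∈ (t₀−T, t₀+T)} |𝓕_k(u(t))| ≤ C ‖u(t₀)‖_{H^k(𝕋)}^{(2k−4)/(k−1)}, and (ii) 𝓔_k(u(t)) ≤ 𝓔_k(u(t₀)) + C ‖u(t₀)‖_{H^k(𝕋)}^{(2k−4)/(k−1)+ε} for all t ∈ (t₀−T, t₀+T). Moreover, when k is not divisible by 3, (ii) holds with ε = 0. -/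

import Mathlib

open MeasureTheory
open scoped Real BigOperators ENNReal

noncomputable section

/-- `n`-th spatial derivative. -/
def pD (n : ℕ) (f : ℝ → ℂ) : ℝ → ℂ := iteratedDeriv n f

/-- Complex conjugate of the `n`-th spatial derivative. -/
def cD (n : ℕ) (f : ℝ → ℂ) (x : ℝ) : ℂ := (starRingEnd ℂ) (iteratedDeriv n f x)

/-- Integral over one period of the torus `𝕋 = ℝ/2πℤ`. -/
def tInt (f : ℝ → ℂ) : ℂ := ∫ x in (0:ℝ)..(2 * Real.pi), f x

/-- Squared `L²(𝕋)` norm. -/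
def L2sq (f : ℝ → ℂ) : ℝ := ∫ x in (0:ℝ)..(2 * Real.pi), ‖f x‖ ^ 2

/-- Squared `Hᵏ(𝕋)` norm: `‖u‖² = ‖u‖²_{L²} + ‖∂ₓᵏu‖²_{L²}`. -/
def HkSq (k : ℕ) (f : ℝ → ℂ) : ℝ := L2sq f + L2sq (pD k f)

/-- `Hᵏ(𝕋)` norm. -/
def HkNorm (k : ℕ) (f : ℝ → ℂ) : ℝ := Real.sqrt (HkSq k f)

/-- A classical (smooth and `2π`-periodic in space, differentiable in time) solution of the
defocusing NLS `i ∂ₜ u + ∂ₓ² u - u |u|^{2p} = 0` for times in the set `I`. -/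
structure IsNLS (p : ℕ) (I : Set ℝ) (u : ℝ → ℝ → ℂ) : Prop where
  smooth : ∀ t ∈ I, ContDiff ℝ (⊤ : ℕ∞) (u t)
  periodic : ∀ t ∈ I, Function.Periodic (u t) (2 * Real.pi)
  tdiff : ∀ (x : ℝ), ∀ t ∈ I, DifferentiableAt ℝ (fun s => u s x) t
  eqn : ∀ t ∈ I, ∀ x : ℝ,
    Complex.I * deriv (fun s => u s x) t + pD 2 (u t) x
      = u t x * ((‖u t x‖ : ℂ)) ^ (2 * p)
/-!
The proof works on the Fourier side and shows more than an almost conservation law for a modified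
energy: over a time of order one, `‖u(t)‖²_{Hᵏ}` itself moves by at most
`C ‖u(t₀)‖_{Hᵏ}^{(2k-4)/(k-1)}`.

Its time derivative is a sum over frequencies `n₀, …, n_{2p+1}` with `∑ σᵢ nᵢ = 0` of the symbol
`Ψ = ∑ σᵢ nᵢ^{2k}` times a product of Fourier coefficients which oscillates with phase
`Ω = ∑ σᵢ nᵢ²`. Integrating in time gains `(1 + |Ω|)⁻¹`. Ordering the frequencies by size,
`|Ψ| / (1 + |Ω|)` is at most `n₀^{2k-2}`, up to an error of size `n₀^{k-1} n₁^{k-1} |n₂ n₃|` that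
still carries a power of `(1 + |Ω|)⁻¹`; that power pays for the error because a quadratic polynomial
takes each value boundedly often (Schur's test). Two derivatives are thus gained, and interpolating
`H^{k-1}` between `H¹`, controlled by mass and energy, and `Hᵏ` yields the exponent.

Classical solutions in the sense of `IsNLS` carry no a priori uniformity in time, so one first shows
that Sobolev norms are locally bounded in time. Baire's theorem gives this on a dense open set
of times, and the tame estimate for the nonlinearity propagates the bound across the rest.
-/

/-! ### Fourier coefficients of smooth periodic functions -/

/-- Smooth functions on `𝕋 = ℝ/2πℤ`, as `2π`-periodic functions on `ℝ`. -/
structure SmoothPeriodic (f : ℝ → ℂ) : Prop where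
  smooth : ContDiff ℝ (⊤ : ℕ∞) f
  periodic : Function.Periodic f (2 * π)

/-- The character `x ↦ e^{ilx}` of `𝕋`, pulled back to `ℝ`. -/
def fourierMode (l : ℤ) (x : ℝ) : ℂ := fourier l (x : AddCircle (2 * π))

/-- The `l`-th Fourier coefficient of a function on `𝕋`, with normalised Lebesgue measure. -/
def torusCoeff (f : ℝ → ℂ) (l : ℤ) : ℂ :=
  (1 / (2 * π) : ℝ) * ∫ x in (0 : ℝ)..(2 * π), fourierMode (-l) x * f x

lemma norm_fourierMode (l : ℤ) (x : ℝ) : ‖fourierMode l x‖ = 1 := Circle.norm_coe _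

lemma fourierMode_zero (x : ℝ) : fourierMode 0 x = 1 := fourier_zero

lemma fourierMode_add (l m : ℤ) (x : ℝ) :
    fourierMode (l + m) x = fourierMode l x * fourierMode m x := fourier_add

lemma conj_fourierMode (l : ℤ) (x : ℝ) : starRingEnd ℂ (fourierMode l x) = fourierMode (-l) x :=
  fourier_neg.symm

lemma continuous_fourierMode (l : ℤ) : Continuous (fourierMode l) :=
  (fourier l).continuous.comp (AddCircle.continuous_mk' _)

lemma hasDerivAt_fourierMode (l : ℤ) (x : ℝ) :
    HasDerivAt (fourierMode l) (Complex.I * l * fourierMode l x) x := by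
  have hπ : (π : ℂ) ≠ 0 := mod_cast Real.pi_ne_zero
  refine (hasDerivAt_fourier (2 * π) l x).congr_deriv ?_
  unfold fourierMode
  push_cast
  field_simp

lemma fourierMode_two_pi (l : ℤ) : fourierMode l (2 * π) = fourierMode l 0 := by
  simp [fourierMode, AddCircle.coe_period]

namespace SmoothPeriodic

variable {f g : ℝ → ℂ}

protected lemma continuous (hf : SmoothPeriodic f) : Continuous f := hf.smooth.continuous

lemma mul (hf : SmoothPeriodic f) (hg : SmoothPeriodic g) :
    SmoothPeriodic (fun x => f x * g x) :=
  ⟨hf.smooth.mul hg.smooth, fun x => by simp only [hf.periodic x, hg.periodic x]⟩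

lemma add (hf : SmoothPeriodic f) (hg : SmoothPeriodic g) :
    SmoothPeriodic (fun x => f x + g x) :=
  ⟨hf.smooth.add hg.smooth, fun x => by simp only [hf.periodic x, hg.periodic x]⟩

lemma const_mul (hf : SmoothPeriodic f) (c : ℂ) : SmoothPeriodic (fun x => c * f x) :=
  ⟨contDiff_const.mul hf.smooth, fun x => by simp only [hf.periodic x]⟩

lemma conj (hf : SmoothPeriodic f) : SmoothPeriodic (fun x => starRingEnd ℂ (f x)) :=
  ⟨Complex.conjCLE.contDiff.comp hf.smooth, fun x => by simp only [hf.periodic x]⟩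

lemma const (c : ℂ) : SmoothPeriodic (fun _ => c) := ⟨contDiff_const, fun _ => rfl⟩

lemma pow (hf : SmoothPeriodic f) (n : ℕ) : SmoothPeriodic (fun x => f x ^ n) :=
  ⟨hf.smooth.pow n, fun x => by simp only [hf.periodic x]⟩

lemma prod {ι : Type*} (s : Finset ι) {f : ι → ℝ → ℂ} (hf : ∀ i, SmoothPeriodic (f i)) :
    SmoothPeriodic (fun x => ∏ i ∈ s, f i x) :=
  ⟨contDiff_prod fun i _ => (hf i).smooth, fun x => by simp only [(hf _).periodic x]⟩

lemma deriv (hf : SmoothPeriodic f) : SmoothPeriodic (deriv f) where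
  smooth := (contDiff_infty_iff_deriv.1 hf.smooth).2
  periodic x := by rw [← deriv_comp_add_const f (2 * π) x, funext hf.periodic]

lemma hasDerivAt (hf : SmoothPeriodic f) (x : ℝ) : HasDerivAt f (_root_.deriv f x) x :=
  (hf.smooth.differentiable (by simp) x).hasDerivAt

lemma iteratedDeriv (hf : SmoothPeriodic f) (n : ℕ) : SmoothPeriodic (iteratedDeriv n f) := by
  induction n with
  | zero => simpa using hf
  | succ n ih => rw [iteratedDeriv_succ]; exact ih.deriv

lemma exists_norm_le (hf : SmoothPeriodic f) : ∃ C, ∀ x, ‖f x‖ ≤ C := by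
  have hbdd := hf.periodic.isBounded_of_continuous Real.two_pi_pos.ne' hf.continuous
  obtain ⟨C, hC⟩ := hbdd.exists_norm_le
  exact ⟨C, fun x => hC _ ⟨x, rfl⟩⟩

end SmoothPeriodic

section TorusCoeff

variable {f g : ℝ → ℂ}

lemma torusCoeff_deriv (hf : SmoothPeriodic f) (l : ℤ) :
    torusCoeff (deriv f) l = Complex.I * l * torusCoeff f l := by
  have hparts := intervalIntegral.integral_mul_deriv_eq_deriv_mul (a := 0) (b := 2 * π)
    (fun x _ => hasDerivAt_fourierMode (-l) x) (fun x _ => hf.hasDerivAt x)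
    ((continuous_const.mul (continuous_fourierMode _)).intervalIntegrable _ _)
    (hf.deriv.continuous.intervalIntegrable _ _)
  have hend : f (2 * π) = f 0 := by simpa using hf.periodic 0
  rw [fourierMode_two_pi, hend, sub_self, zero_sub] at hparts
  simp_rw [torusCoeff, hparts, mul_assoc, intervalIntegral.integral_const_mul]
  push_cast
  ring

lemma torusCoeff_iteratedDeriv (hf : SmoothPeriodic f) (n : ℕ) (l : ℤ) :
    torusCoeff (iteratedDeriv n f) l = (Complex.I * l) ^ n * torusCoeff f l := by
  induction n with
  | zero => simp
  | succ n ih => rw [iteratedDeriv_succ, torusCoeff_deriv (hf.iteratedDeriv n), ih]; ring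

lemma torusCoeff_add (hf : Continuous f) (hg : Continuous g) (l : ℤ) :
    torusCoeff (fun x => f x + g x) l = torusCoeff f l + torusCoeff g l := by
  have hintegrable {h : ℝ → ℂ} (hh : Continuous h) :
      IntervalIntegrable (fun x => fourierMode (-l) x * h x) volume 0 (2 * π) :=
    ((continuous_fourierMode _).mul hh).intervalIntegrable _ _
  simp_rw [torusCoeff, mul_add]
  rw [intervalIntegral.integral_add (hintegrable hf) (hintegrable hg), mul_add]

lemma torusCoeff_const_mul (f : ℝ → ℂ) (c : ℂ) (l : ℤ) :
    torusCoeff (fun x => c * f x) l = c * torusCoeff f l := by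
  simp_rw [torusCoeff, mul_left_comm _ c, intervalIntegral.integral_const_mul,
    mul_left_comm _ c]

lemma torusCoeff_conj (f : ℝ → ℂ) (l : ℤ) :
    torusCoeff (fun x => starRingEnd ℂ (f x)) l = starRingEnd ℂ (torusCoeff f (-l)) := by
  simp_rw [torusCoeff, map_mul, Complex.conj_ofReal,
    intervalIntegral.integral_of_le Real.two_pi_pos.le, ← integral_conj, map_mul,
    conj_fourierMode, neg_neg]

lemma torusCoeff_fourierMode_mul (g : ℝ → ℂ) (n l : ℤ) :
    torusCoeff (fun x => fourierMode n x * g x) l = torusCoeff g (l - n) := by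
  simp_rw [torusCoeff, ← mul_assoc, ← fourierMode_add, neg_sub, sub_eq_neg_add n l]

lemma torusCoeff_zero (f : ℝ → ℂ) :
    torusCoeff f 0 = (1 / (2 * π) : ℝ) * ∫ x in (0 : ℝ)..(2 * π), f x := by
  simp only [torusCoeff, neg_zero, fourierMode_zero, one_mul]

lemma torusCoeff_one (l : ℤ) : torusCoeff (fun _ => 1) l = if l = 0 then 1 else 0 := by
  split_ifs with hl
  · have hπ : (π : ℂ) ≠ 0 := mod_cast Real.pi_ne_zero
    simp only [hl, torusCoeff_zero, intervalIntegral.integral_const, sub_zero, Complex.real_smul]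
    push_cast
    field_simp
  · have hderiv := torusCoeff_deriv (SmoothPeriodic.const 1) l
    have hl' : Complex.I * (l : ℂ) ≠ 0 := mul_ne_zero Complex.I_ne_zero (mod_cast hl)
    simpa [torusCoeff, hl'] using hderiv

lemma norm_torusCoeff_le {C : ℝ} (hC : ∀ x, ‖f x‖ ≤ C) (l : ℤ) : ‖torusCoeff f l‖ ≤ C := by
  have hint : ‖∫ x in (0 : ℝ)..(2 * π), fourierMode (-l) x * f x‖ ≤ C * |2 * π - 0| :=
    intervalIntegral.norm_integral_le_of_norm_le_const fun x _ => by
      rw [norm_mul, norm_fourierMode, one_mul]; exact hC x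
  rw [sub_zero, abs_of_pos Real.two_pi_pos] at hint
  rw [torusCoeff, norm_mul, Complex.norm_of_nonneg (by positivity)]
  calc 1 / (2 * π) * ‖∫ x in (0 : ℝ)..(2 * π), fourierMode (-l) x * f x‖
      ≤ 1 / (2 * π) * (C * (2 * π)) := by gcongr
    _ = C := by field_simp

end TorusCoeff

/-- The square `⟨l⟩² = 1 + l²` of the Japanese bracket. -/
def japaneseSq (l : ℤ) : ℝ := 1 + (l : ℝ) ^ 2

lemma japaneseSq_pos (l : ℤ) : 0 < japaneseSq l := by unfold japaneseSq; positivity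

lemma one_le_japaneseSq (l : ℤ) : 1 ≤ japaneseSq l := le_add_of_nonneg_right (sq_nonneg _)

lemma japaneseSq_neg (l : ℤ) : japaneseSq (-l) = japaneseSq l := by simp [japaneseSq]

lemma summable_inv_japaneseSq : Summable fun l : ℤ => (japaneseSq l)⁻¹ := by
  have hsq : Summable fun l : ℤ => 1 / (l : ℝ) ^ 2 := Real.summable_one_div_int_pow.2 one_lt_two
  have hzero : Summable fun l : ℤ => if l = 0 then (1 : ℝ) else 0 :=
    (hasSum_ite_eq 0 (1 : ℝ)).summable
  refine .of_nonneg_of_le (fun l => (inv_pos.2 (japaneseSq_pos l)).le) (fun l => ?_) (hzero.add hsq)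
  by_cases hl : l = 0
  · simp [hl, japaneseSq]
  · simp only [hl, if_false, zero_add, one_div, japaneseSq]
    gcongr
    exact le_add_of_nonneg_left zero_le_one

section FourierSeries

variable {f g : ℝ → ℂ}

lemma exists_japaneseSq_pow_mul_norm_torusCoeff_le (hf : SmoothPeriodic f) (M : ℕ) :
    ∃ C, ∀ l, japaneseSq l ^ M * ‖torusCoeff f l‖ ≤ C := by
  induction M generalizing f with
  | zero =>
    obtain ⟨C, hC⟩ := hf.exists_norm_le
    exact ⟨C, fun l => by simpa using norm_torusCoeff_le hC l⟩
  | succ M ih =>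
    -- Multiplying the coefficients by `⟨l⟩²` amounts to applying `1 - ∂ₓ²`.
    have hf₂ := (hf.iteratedDeriv 2).const_mul (-1)
    obtain ⟨C, hC⟩ := ih (hf.add hf₂)
    refine ⟨C, fun l => ?_⟩
    have hcoeff : torusCoeff (fun x => f x + -1 * iteratedDeriv 2 f x) l
        = (japaneseSq l : ℂ) * torusCoeff f l := by
      rw [torusCoeff_add hf.continuous hf₂.continuous, torusCoeff_const_mul,
        torusCoeff_iteratedDeriv hf, mul_pow, Complex.I_sq, japaneseSq]
      push_cast
      ring
    have hle := hC l
    rwa [hcoeff, norm_mul, Complex.norm_of_nonneg (japaneseSq_pos l).le, ← mul_assoc,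
      ← pow_succ] at hle

lemma summable_japaneseSq_pow_mul_norm_torusCoeff (hf : SmoothPeriodic f) (M : ℕ) :
    Summable fun l => japaneseSq l ^ M * ‖torusCoeff f l‖ := by
  obtain ⟨C, hC⟩ := exists_japaneseSq_pow_mul_norm_torusCoeff_le hf (M + 1)
  refine .of_nonneg_of_le (fun l => ?_) (fun l => ?_) (summable_inv_japaneseSq.mul_left C)
  · have := japaneseSq_pos l
    positivity
  · rw [← div_eq_mul_inv, le_div_iff₀ (japaneseSq_pos l), mul_right_comm, ← pow_succ]
    exact hC l

lemma summable_norm_torusCoeff (hf : SmoothPeriodic f) : Summable fun l => ‖torusCoeff f l‖ := by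
  simpa using summable_japaneseSq_pow_mul_norm_torusCoeff hf 0

lemma hasSum_torusCoeff_mul_fourierMode (hf : SmoothPeriodic f) (x : ℝ) :
    HasSum (fun l => torusCoeff f l * fourierMode l x) (f x) := by
  have : Fact (0 < 2 * π) := ⟨Real.two_pi_pos⟩
  let F : C(AddCircle (2 * π), ℂ) :=
    ⟨hf.periodic.lift, continuous_coinduced_dom.2 hf.continuous⟩
  have hF (y : ℝ) : F (y : AddCircle (2 * π)) = f y := hf.periodic.lift_coe y
  have hcoeff : fourierCoeff F = torusCoeff f := by
    funext l
    rw [fourierCoeff_eq_intervalIntegral F l 0, zero_add, Complex.real_smul, torusCoeff]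
    simp_rw [smul_eq_mul, hF, fourierMode]
  have hsum : Summable (fourierCoeff F) := hcoeff ▸ (summable_norm_torusCoeff hf).of_norm
  simpa only [hcoeff, hF, smul_eq_mul, fourierMode] using
    has_pointwise_sum_fourier_series_of_summable hsum x

lemma hasSum_torusCoeff_mul (hf : SmoothPeriodic f) (hg : SmoothPeriodic g) (l : ℤ) :
    HasSum (fun n => torusCoeff f n * torusCoeff g (l - n))
      (torusCoeff (fun x => f x * g x) l) := by
  obtain ⟨C, hC⟩ := hg.exists_norm_le
  have hint : HasSum
      (fun n => ∫ x in (0 : ℝ)..(2 * π),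
        fourierMode (-l) x * (torusCoeff f n * (fourierMode n x * g x)))
      (∫ x in (0 : ℝ)..(2 * π), fourierMode (-l) x * (f x * g x)) := by
    refine intervalIntegral.hasSum_integral_of_dominated_convergence
      (fun n _ => ‖torusCoeff f n‖ * C) (fun n => ?_) (fun n => .of_forall fun x _ => ?_)
      (.of_forall fun x _ => (summable_norm_torusCoeff hf).mul_right C) (by simp)
      (.of_forall fun x _ => ?_)
    · exact ((continuous_fourierMode _).mul (continuous_const.mul
        ((continuous_fourierMode n).mul hg.continuous))).aestronglyMeasurable
    · simp only [norm_mul, norm_fourierMode, one_mul]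
      gcongr
      exact hC x
    · simpa only [mul_assoc] using
        ((hasSum_torusCoeff_mul_fourierMode hf x).mul_right (g x)).mul_left (fourierMode (-l) x)
  refine (hint.mul_left _).congr_fun fun n => ?_
  rw [← torusCoeff_fourierMode_mul, ← torusCoeff_const_mul]
  rfl

lemma summable_prod_fin {α : Type*} {m : ℕ} (a : Fin m → α → ℝ) (ha : ∀ i x, 0 ≤ a i x)
    (hsum : ∀ i, Summable (a i)) : Summable fun n : Fin m → α => ∏ i, a i (n i) := by
  induction m with
  | zero => exact (hasSum_unique _).summable
  | succ m ih =>
    have htail := ih (fun i => a i.succ) (fun i => ha _) fun i => hsum _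
    rw [← (Fin.consEquiv fun _ => α).summable_iff]
    refine ((hsum 0).mul_of_nonneg htail (ha 0) fun n => Finset.prod_nonneg fun i _ => ha _ _).congr
      fun n => ?_
    simp [Fin.prod_univ_succ, Fin.consEquiv]

lemma summable_prod_pi {ι α : Type*} [Fintype ι] (a : ι → α → ℝ) (ha : ∀ i x, 0 ≤ a i x)
    (hsum : ∀ i, Summable (a i)) : Summable fun n : ι → α => ∏ i, a i (n i) := by
  let e := (Fintype.equivFin ι).symm
  rw [← (e.arrowCongr (Equiv.refl α)).summable_iff]
  refine (summable_prod_fin (fun i => a (e i)) (fun i => ha _) fun i => hsum _).congr fun n => ?_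
  simp [← e.prod_comp]

lemma summable_ite_prod_torusCoeff {ι : Type*} [Fintype ι] (f : ι → ℝ → ℂ)
    (hf : ∀ i, SmoothPeriodic (f i)) (l : ℤ) :
    Summable fun n : ι → ℤ => if ∑ i, n i = l then ∏ i, torusCoeff (f i) (n i) else 0 := by
  refine .of_norm_bounded (summable_prod_pi (fun i l => ‖torusCoeff (f i) l‖)
    (fun _ _ => norm_nonneg _) fun i => summable_norm_torusCoeff (hf i)) fun n => ?_
  split_ifs
  · rw [norm_prod]
  · rw [norm_zero]
    positivity

lemma hasSum_torusCoeff_prod_fin {m : ℕ} (f : Fin m → ℝ → ℂ) (hf : ∀ i, SmoothPeriodic (f i))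
    (l : ℤ) :
    HasSum (fun n : Fin m → ℤ => if ∑ i, n i = l then ∏ i, torusCoeff (f i) (n i) else 0)
      (torusCoeff (fun x => ∏ i, f i x) l) := by
  induction m generalizing l with
  | zero =>
    convert hasSum_unique fun n : Fin 0 → ℤ =>
      if ∑ i, n i = l then ∏ i, torusCoeff (f i) (n i) else 0 using 1
    simp [torusCoeff_one, eq_comm]
  | succ m ih =>
    let e := Fin.consEquiv fun _ : Fin (m + 1) => ℤ
    have hsum := (e.summable_iff.2 (summable_ite_prod_torusCoeff f hf l)).hasSum
    have hfiber (n₀ : ℤ) : HasSum (fun n : Fin m → ℤ =>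
        if ∑ i, e (n₀, n) i = l then ∏ i, torusCoeff (f i) (e (n₀, n) i) else 0)
        (torusCoeff (f 0) n₀ * torusCoeff (fun x => ∏ i : Fin m, f i.succ x) (l - n₀)) := by
      refine ((ih (fun i => f i.succ) (fun i => hf _) (l - n₀)).mul_left _).congr_fun fun n => ?_
      simp [e, Fin.sum_univ_succ, Fin.prod_univ_succ, Fin.consEquiv, eq_sub_iff_add_eq']
    have hconv := hasSum_torusCoeff_mul (hf 0)
      (SmoothPeriodic.prod Finset.univ fun i : Fin m => hf i.succ) l
    simp_rw [fun x => Fin.prod_univ_succ fun i => f i x]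
    rw [← e.hasSum_iff, ← (hsum.prod_fiberwise hfiber).unique hconv]
    exact hsum

lemma hasSum_torusCoeff_prod {ι : Type*} [Fintype ι] (f : ι → ℝ → ℂ)
    (hf : ∀ i, SmoothPeriodic (f i)) (l : ℤ) :
    HasSum (fun n : ι → ℤ => if ∑ i, n i = l then ∏ i, torusCoeff (f i) (n i) else 0)
      (torusCoeff (fun x => ∏ i, f i x) l) := by
  let e := (Fintype.equivFin ι).symm
  rw [← (e.arrowCongr (Equiv.refl ℤ)).hasSum_iff]
  simpa [Function.comp_def, ← e.prod_comp, ← e.sum_comp] using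
    hasSum_torusCoeff_prod_fin (fun i => f (e i)) (fun i => hf _) l

lemma hasSum_torusCoeff_mul_conj (hf : SmoothPeriodic f) (hg : SmoothPeriodic g) :
    HasSum (fun n => torusCoeff f n * starRingEnd ℂ (torusCoeff g n))
      (torusCoeff (fun x => f x * starRingEnd ℂ (g x)) 0) := by
  simpa only [torusCoeff_conj, zero_sub, neg_neg] using hasSum_torusCoeff_mul hf hg.conj 0

lemma torusCoeff_ofReal_zero (f : ℝ → ℝ) :
    torusCoeff (fun x => (f x : ℂ)) 0
      = ((1 / (2 * π) * ∫ x in (0 : ℝ)..(2 * π), f x : ℝ) : ℂ) := by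
  rw [torusCoeff_zero, intervalIntegral.integral_ofReal]
  push_cast
  ring

lemma hasSum_L2sq (hf : SmoothPeriodic f) :
    HasSum (fun n => 2 * π * ‖torusCoeff f n‖ ^ 2) (L2sq f) := by
  have hparseval := hasSum_torusCoeff_mul_conj hf hf
  simp only [Complex.mul_conj, Complex.normSq_eq_norm_sq, torusCoeff_ofReal_zero] at hparseval
  have hmean : L2sq f = 2 * π * (1 / (2 * π) * ∫ x in (0 : ℝ)..(2 * π), ‖f x‖ ^ 2) := by
    unfold L2sq
    field_simp
  exact hmean ▸ (Complex.hasSum_ofReal.1 hparseval).mul_left (2 * π)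

lemma hasSum_HkSq (hf : SmoothPeriodic f) (k : ℕ) :
    HasSum (fun n : ℤ => 2 * π * ((1 + (n : ℝ) ^ (2 * k)) * ‖torusCoeff f n‖ ^ 2)) (HkSq k f) := by
  refine ((hasSum_L2sq hf).add (hasSum_L2sq (hf.iteratedDeriv k))).congr_fun fun n => ?_
  rw [torusCoeff_iteratedDeriv hf, norm_mul, norm_pow, norm_mul, Complex.norm_I, one_mul,
    Complex.norm_intCast, mul_pow, ← pow_mul, mul_comm k 2, pow_mul |(n : ℝ)|, sq_abs, ← pow_mul]
  ring

end FourierSeries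

/-! ### Wiener and Sobolev norms of products -/

/-- The norm of the Wiener algebra of `𝕋`: the `ℓ¹` norm of the Fourier coefficients. -/
def wienerNorm (f : ℝ → ℂ) : ℝ≥0∞ := ∑' l : ℤ, ‖torusCoeff f l‖ₑ

/-- The squared inhomogeneous `Hˢ(𝕋)` norm, as a weighted `ℓ²` norm of the Fourier coefficients.
It takes values in `ℝ≥0∞`, so that no summability has to be carried along. -/
def sobolevSq (s : ℕ) (f : ℝ → ℂ) : ℝ≥0∞ :=
  ∑' l : ℤ, ENNReal.ofReal (japaneseSq l ^ s) * ‖torusCoeff f l‖ₑ ^ 2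

lemma sq_tsum_mul_le_tsum_sq_mul_tsum_sq {α : Type*} (a b : α → ℝ≥0∞) :
    (∑' i, a i * b i) ^ 2 ≤ (∑' i, a i ^ 2) * ∑' i, b i ^ 2 := by
  let _ : MeasurableSpace α := ⊤
  have holder := ENNReal.lintegral_mul_le_Lp_mul_Lq (Measure.count : Measure α)
    Real.HolderConjugate.two_two (f := a) (g := b)
    measurable_from_top.aemeasurable measurable_from_top.aemeasurable
  simp only [lintegral_count, Pi.mul_apply, ENNReal.rpow_two] at holder
  calc (∑' i, a i * b i) ^ 2
      ≤ ((∑' i, a i ^ 2) ^ (1 / 2 : ℝ) * (∑' i, b i ^ 2) ^ (1 / 2 : ℝ)) ^ 2 := by gcongr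
    _ = (∑' i, a i ^ 2) * ∑' i, b i ^ 2 := by
        rw [mul_pow, ← ENNReal.rpow_two, ← ENNReal.rpow_two, ← ENNReal.rpow_mul,
          ← ENNReal.rpow_mul]
        norm_num

lemma tsum_comp_sub_left (a : ℤ → ℝ≥0∞) (l : ℤ) : ∑' n, a (l - n) = ∑' n, a n :=
  (Equiv.subLeft l).tsum_eq a

lemma tsum_comp_sub_right (a : ℤ → ℝ≥0∞) (n : ℤ) : ∑' l, a (l - n) = ∑' l, a l :=
  (Equiv.subRight n).tsum_eq a

lemma sq_tsum_convolution_le (a b : ℤ → ℝ≥0∞) (l : ℤ) :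
    (∑' n, a n * b (l - n)) ^ 2 ≤ (∑' n, b n) * ∑' n, a n ^ 2 * b (l - n) := by
  have sq_sqrt (x : ℝ≥0∞) : (x ^ (1 / 2 : ℝ)) ^ 2 = x := by
    rw [← ENNReal.rpow_two, ← ENNReal.rpow_mul]
    norm_num
  have cauchySchwarz := sq_tsum_mul_le_tsum_sq_mul_tsum_sq
    (fun n => a n * b (l - n) ^ (1 / 2 : ℝ)) (fun n => b (l - n) ^ (1 / 2 : ℝ))
  simp only [mul_assoc, mul_pow, ← sq, sq_sqrt] at cauchySchwarz
  rwa [tsum_comp_sub_left b l, mul_comm] at cauchySchwarz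

lemma tsum_sq_convolution_le (a b : ℤ → ℝ≥0∞) :
    ∑' l : ℤ, (∑' n, a n * b (l - n)) ^ 2 ≤ (∑' n, b n) ^ 2 * ∑' n, a n ^ 2 :=
  calc ∑' l : ℤ, (∑' n, a n * b (l - n)) ^ 2
      ≤ ∑' l : ℤ, (∑' n, b n) * ∑' n, a n ^ 2 * b (l - n) :=
        ENNReal.tsum_le_tsum (sq_tsum_convolution_le a b)
    _ = (∑' n, b n) * ∑' n, ∑' l, a n ^ 2 * b (l - n) := by
        rw [ENNReal.tsum_mul_left, ENNReal.tsum_comm]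
    _ = (∑' n, b n) * ∑' n, a n ^ 2 * ∑' l, b l := by
        simp_rw [ENNReal.tsum_mul_left, tsum_comp_sub_right]
    _ = (∑' n, b n) ^ 2 * ∑' n, a n ^ 2 := by rw [ENNReal.tsum_mul_right]; ring

lemma tsum_ofReal_ne_top {α : Type*} {a : α → ℝ} (h : Summable a) (h0 : ∀ i, 0 ≤ a i) :
    ∑' i, ENNReal.ofReal (a i) ≠ ⊤ := by
  rw [← ENNReal.ofReal_tsum_of_nonneg h0 h]
  exact ENNReal.ofReal_ne_top

section Norms

variable {f g : ℝ → ℂ}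

lemma summable_japaneseSq_pow_mul_sq_norm_torusCoeff (hf : SmoothPeriodic f) (s : ℕ) :
    Summable fun l => japaneseSq l ^ s * ‖torusCoeff f l‖ ^ 2 := by
  obtain ⟨C, hC⟩ := hf.exists_norm_le
  have weight_nonneg (l : ℤ) : 0 ≤ japaneseSq l ^ s := (pow_pos (japaneseSq_pos l) s).le
  refine .of_nonneg_of_le (fun l => mul_nonneg (weight_nonneg l) (sq_nonneg _)) (fun l => ?_)
    ((summable_japaneseSq_pow_mul_norm_torusCoeff hf s).mul_left C)
  calc japaneseSq l ^ s * ‖torusCoeff f l‖ ^ 2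
      = ‖torusCoeff f l‖ * (japaneseSq l ^ s * ‖torusCoeff f l‖) := by ring
    _ ≤ C * (japaneseSq l ^ s * ‖torusCoeff f l‖) :=
        mul_le_mul_of_nonneg_right (norm_torusCoeff_le hC l)
          (mul_nonneg (weight_nonneg l) (norm_nonneg _))

lemma ofReal_mul_enorm_sq {w : ℝ} (hw : 0 ≤ w) (z : ℂ) :
    ENNReal.ofReal w * ‖z‖ₑ ^ 2 = ENNReal.ofReal (w * ‖z‖ ^ 2) := by
  rw [ENNReal.ofReal_mul hw, ← ofReal_norm, ENNReal.ofReal_pow (norm_nonneg _)]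

lemma sobolevSq_eq_ofReal (hf : SmoothPeriodic f) (s : ℕ) :
    sobolevSq s f = ENNReal.ofReal (∑' l, japaneseSq l ^ s * ‖torusCoeff f l‖ ^ 2) := by
  have weight_nonneg (l : ℤ) : 0 ≤ japaneseSq l ^ s := (pow_pos (japaneseSq_pos l) s).le
  rw [ENNReal.ofReal_tsum_of_nonneg (fun l => mul_nonneg (weight_nonneg l) (sq_nonneg _))
    (summable_japaneseSq_pow_mul_sq_norm_torusCoeff hf s)]
  exact tsum_congr fun l => ofReal_mul_enorm_sq (weight_nonneg l) _

lemma sobolevSq_ne_top (hf : SmoothPeriodic f) (s : ℕ) : sobolevSq s f ≠ ⊤ := by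
  rw [sobolevSq_eq_ofReal hf]
  exact ENNReal.ofReal_ne_top

lemma toReal_sobolevSq (hf : SmoothPeriodic f) (s : ℕ) :
    (sobolevSq s f).toReal = ∑' l, japaneseSq l ^ s * ‖torusCoeff f l‖ ^ 2 := by
  rw [sobolevSq_eq_ofReal hf, ENNReal.toReal_ofReal]
  exact tsum_nonneg fun l => mul_nonneg (pow_pos (japaneseSq_pos l) s).le (sq_nonneg _)

lemma sobolevSq_mono {s t : ℕ} (h : s ≤ t) (f : ℝ → ℂ) : sobolevSq s f ≤ sobolevSq t f := by
  unfold sobolevSq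
  gcongr with l
  exact one_le_japaneseSq l

/-- The squared norm of the embedding of `H¹(𝕋)` into the Wiener algebra. -/
def sumInvJapaneseSq : ℝ≥0∞ := ∑' l : ℤ, ENNReal.ofReal (japaneseSq l)⁻¹

lemma sumInvJapaneseSq_ne_top : sumInvJapaneseSq ≠ ⊤ :=
  tsum_ofReal_ne_top summable_inv_japaneseSq fun l => (inv_pos.2 (japaneseSq_pos l)).le

lemma sq_tsum_le_sumInvJapaneseSq_mul (a : ℤ → ℝ≥0∞) :
    (∑' l, a l) ^ 2 ≤ sumInvJapaneseSq * ∑' l, ENNReal.ofReal (japaneseSq l) * a l ^ 2 := by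
  have sq_ofReal_sqrt {x : ℝ} (hx : 0 ≤ x) : ENNReal.ofReal √x ^ 2 = ENNReal.ofReal x := by
    rw [← ENNReal.ofReal_pow (Real.sqrt_nonneg _), Real.sq_sqrt hx]
  have unweight (l : ℤ) :
      ENNReal.ofReal √(japaneseSq l)⁻¹ * (ENNReal.ofReal √(japaneseSq l) * a l) = a l := by
    rw [← mul_assoc, ← ENNReal.ofReal_mul (Real.sqrt_nonneg _),
      ← Real.sqrt_mul (inv_pos.2 (japaneseSq_pos l)).le, inv_mul_cancel₀ (japaneseSq_pos l).ne',
      Real.sqrt_one, ENNReal.ofReal_one, one_mul]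
  have cauchySchwarz := sq_tsum_mul_le_tsum_sq_mul_tsum_sq
    (fun l : ℤ => ENNReal.ofReal √(japaneseSq l)⁻¹)
    (fun l => ENNReal.ofReal √(japaneseSq l) * a l)
  simpa only [sumInvJapaneseSq, unweight, mul_pow, sq_ofReal_sqrt (japaneseSq_pos _).le,
    sq_ofReal_sqrt (inv_pos.2 (japaneseSq_pos _)).le] using cauchySchwarz

lemma sq_wienerNorm_le (f : ℝ → ℂ) : wienerNorm f ^ 2 ≤ sumInvJapaneseSq * sobolevSq 1 f := by
  simpa only [wienerNorm, sobolevSq, pow_one] using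
    sq_tsum_le_sumInvJapaneseSq_mul fun l => ‖torusCoeff f l‖ₑ

lemma enorm_torusCoeff_mul_le (hf : SmoothPeriodic f) (hg : SmoothPeriodic g) (l : ℤ) :
    ‖torusCoeff (fun x => f x * g x) l‖ₑ ≤ ∑' n, ‖torusCoeff f n‖ₑ * ‖torusCoeff g (l - n)‖ₑ := by
  rw [← (hasSum_torusCoeff_mul hf hg l).tsum_eq]
  simpa only [enorm_mul] using
    enorm_tsum_le_tsum_enorm (f := fun n => torusCoeff f n * torusCoeff g (l - n))

lemma wienerNorm_mul_le (hf : SmoothPeriodic f) (hg : SmoothPeriodic g) :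
    wienerNorm (fun x => f x * g x) ≤ wienerNorm f * wienerNorm g :=
  calc wienerNorm (fun x => f x * g x)
      ≤ ∑' l, ∑' n, ‖torusCoeff f n‖ₑ * ‖torusCoeff g (l - n)‖ₑ :=
        ENNReal.tsum_le_tsum fun l => enorm_torusCoeff_mul_le hf hg l
    _ = wienerNorm f * wienerNorm g := by
        rw [ENNReal.tsum_comm]
        simp_rw [ENNReal.tsum_mul_left, tsum_comp_sub_right (fun l => ‖torusCoeff g l‖ₑ)]
        exact ENNReal.tsum_mul_right

lemma enorm_le_wienerNorm (hf : SmoothPeriodic f) (x : ℝ) : ‖f x‖ₑ ≤ wienerNorm f := by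
  have enorm_mode (l : ℤ) : ‖fourierMode l x‖ₑ = 1 := by
    rw [← ofReal_norm, norm_fourierMode, ENNReal.ofReal_one]
  rw [← (hasSum_torusCoeff_mul_fourierMode hf x).tsum_eq]
  simpa only [wienerNorm, enorm_mul, enorm_mode, mul_one] using
    enorm_tsum_le_tsum_enorm (f := fun l => torusCoeff f l * fourierMode l x)

/-- The weight `⟨l⟩ˢ` of the `Hˢ` norm, whose square is the weight in `sobolevSq s`. -/
def sobolevWeight (s : ℕ) (l : ℤ) : ℝ≥0∞ := ENNReal.ofReal (√(japaneseSq l) ^ s)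

lemma sobolevWeight_sq (s : ℕ) (l : ℤ) :
    sobolevWeight s l ^ 2 = ENNReal.ofReal (japaneseSq l ^ s) := by
  rw [sobolevWeight, ← ENNReal.ofReal_pow (by positivity), ← pow_mul, mul_comm, pow_mul,
    Real.sq_sqrt (japaneseSq_pos l).le]

lemma sobolevSq_eq_tsum_sq (s : ℕ) (f : ℝ → ℂ) :
    sobolevSq s f = ∑' l, (sobolevWeight s l * ‖torusCoeff f l‖ₑ) ^ 2 := by
  simp_rw [sobolevSq, mul_pow, sobolevWeight_sq]

lemma japaneseSq_le_four_mul_max (l n : ℤ) :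
    japaneseSq l ≤ 4 * max (japaneseSq n) (japaneseSq (l - n)) := by
  have parallelogram : japaneseSq l ≤ 2 * japaneseSq n + 2 * japaneseSq (l - n) := by
    unfold japaneseSq
    push_cast
    nlinarith [sq_nonneg ((l : ℝ) - 2 * n)]
  linarith [le_max_left (japaneseSq n) (japaneseSq (l - n)),
    le_max_right (japaneseSq n) (japaneseSq (l - n))]

lemma sobolevWeight_le (s : ℕ) (l n : ℤ) :
    sobolevWeight s l ≤ 2 ^ s * (sobolevWeight s n + sobolevWeight s (l - n)) := by
  have two_pow : (2 : ℝ≥0∞) ^ s = ENNReal.ofReal (2 ^ s) := by simp [ENNReal.ofReal_pow]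
  have sqrt_four : √4 = 2 := by rw [show (4 : ℝ) = 2 ^ 2 by norm_num, Real.sqrt_sq zero_le_two]
  rw [sobolevWeight, sobolevWeight, sobolevWeight,
    ← ENNReal.ofReal_add (by positivity) (by positivity), two_pow,
    ← ENNReal.ofReal_mul (by positivity)]
  refine ENNReal.ofReal_le_ofReal ?_
  calc √(japaneseSq l) ^ s ≤ √(4 * max (japaneseSq n) (japaneseSq (l - n))) ^ s := by
        gcongr
        exact japaneseSq_le_four_mul_max l n
    _ = 2 ^ s * √(max (japaneseSq n) (japaneseSq (l - n))) ^ s := by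
        rw [Real.sqrt_mul zero_le_four, sqrt_four, mul_pow]
    _ ≤ 2 ^ s * (√(japaneseSq n) ^ s + √(japaneseSq (l - n)) ^ s) := by
        gcongr
        rcases max_choice (japaneseSq n) (japaneseSq (l - n)) with h | h <;> rw [h]
        · exact le_add_of_nonneg_right (by positivity)
        · exact le_add_of_nonneg_left (by positivity)

lemma sobolevWeight_mul_enorm_torusCoeff_mul_le (s : ℕ) (hf : SmoothPeriodic f)
    (hg : SmoothPeriodic g) (l : ℤ) :
    sobolevWeight s l * ‖torusCoeff (fun x => f x * g x) l‖ₑ ≤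
      2 ^ s * (∑' n, (sobolevWeight s n * ‖torusCoeff f n‖ₑ) * ‖torusCoeff g (l - n)‖ₑ
        + ∑' n, (sobolevWeight s n * ‖torusCoeff g n‖ₑ) * ‖torusCoeff f (l - n)‖ₑ) := by
  set w := sobolevWeight s
  set F := fun n => ‖torusCoeff f n‖ₑ
  set G := fun n => ‖torusCoeff g n‖ₑ
  have reflect : ∑' n, (w (l - n) * G (l - n)) * F n = ∑' n, (w n * G n) * F (l - n) := by
    simpa only [sub_sub_cancel] using
      tsum_comp_sub_left (fun n => (w n * G n) * F (l - n)) l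
  calc w l * ‖torusCoeff (fun x => f x * g x) l‖ₑ
      ≤ w l * ∑' n, F n * G (l - n) := by gcongr; exact enorm_torusCoeff_mul_le hf hg l
    _ = ∑' n, w l * (F n * G (l - n)) := ENNReal.tsum_mul_left.symm
    _ ≤ ∑' n, (2 ^ s * (w n + w (l - n))) * (F n * G (l - n)) :=
        ENNReal.tsum_le_tsum fun n => by gcongr; exact sobolevWeight_le s l n
    _ = ∑' n, 2 ^ s * ((w n * F n) * G (l - n) + (w (l - n) * G (l - n)) * F n) :=
        tsum_congr fun n => by ring
    _ = 2 ^ s * (∑' n, (w n * F n) * G (l - n) + ∑' n, (w n * G n) * F (l - n)) := by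
        rw [ENNReal.tsum_mul_left, ENNReal.tsum_add, reflect]

lemma sq_add_le_four_mul_sq_add_sq (a b : ℝ≥0∞) : (a + b) ^ 2 ≤ 4 * (a ^ 2 + b ^ 2) :=
  calc (a + b) ^ 2 ≤ (2 * max a b) ^ 2 := by
        gcongr
        rw [two_mul]
        exact add_le_add (le_max_left a b) (le_max_right a b)
    _ = 4 * max a b ^ 2 := by ring
    _ ≤ 4 * (a ^ 2 + b ^ 2) := by
        gcongr
        rcases max_choice a b with h | h <;> rw [h]
        exacts [le_self_add, le_add_self]

lemma sobolevSq_mul_le (s : ℕ) (hf : SmoothPeriodic f) (hg : SmoothPeriodic g) :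
    sobolevSq s (fun x => f x * g x) ≤
      (4 * 4 ^ s) * (wienerNorm g ^ 2 * sobolevSq s f + wienerNorm f ^ 2 * sobolevSq s g) := by
  have two_pow_sq : ((2 : ℝ≥0∞) ^ s) ^ 2 = 4 ^ s := by
    rw [← pow_mul, mul_comm s 2, pow_mul]
    norm_num
  simp only [sobolevSq_eq_tsum_sq]
  set w := sobolevWeight s
  set F := fun n => ‖torusCoeff f n‖ₑ
  set G := fun n => ‖torusCoeff g n‖ₑ
  calc ∑' l, (w l * ‖torusCoeff (fun x => f x * g x) l‖ₑ) ^ 2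
      ≤ ∑' l, (4 * 4 ^ s) * ((∑' n, (w n * F n) * G (l - n)) ^ 2
        + (∑' n, (w n * G n) * F (l - n)) ^ 2) := by
        refine ENNReal.tsum_le_tsum fun l => ?_
        calc (w l * ‖torusCoeff (fun x => f x * g x) l‖ₑ) ^ 2
            ≤ (2 ^ s * (∑' n, (w n * F n) * G (l - n) + ∑' n, (w n * G n) * F (l - n))) ^ 2 :=
              pow_le_pow_left' (sobolevWeight_mul_enorm_torusCoeff_mul_le s hf hg l) 2
          _ ≤ 4 ^ s * (4 * ((∑' n, (w n * F n) * G (l - n)) ^ 2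
              + (∑' n, (w n * G n) * F (l - n)) ^ 2)) := by
              rw [mul_pow, two_pow_sq]
              gcongr
              exact sq_add_le_four_mul_sq_add_sq _ _
          _ = _ := by ring
    _ ≤ (4 * 4 ^ s) * (wienerNorm g ^ 2 * ∑' l, (w l * F l) ^ 2
        + wienerNorm f ^ 2 * ∑' l, (w l * G l) ^ 2) := by
        rw [ENNReal.tsum_mul_left, ENNReal.tsum_add]
        gcongr
        exacts [tsum_sq_convolution_le (fun n => w n * F n) G,
          tsum_sq_convolution_le (fun n => w n * G n) F]

lemma wienerNorm_conj (f : ℝ → ℂ) : wienerNorm (fun x => starRingEnd ℂ (f x)) = wienerNorm f := by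
  simp_rw [wienerNorm, torusCoeff_conj, RCLike.enorm_conj]
  exact (Equiv.neg ℤ).tsum_eq fun l => ‖torusCoeff f l‖ₑ

lemma sobolevSq_conj (s : ℕ) (f : ℝ → ℂ) :
    sobolevSq s (fun x => starRingEnd ℂ (f x)) = sobolevSq s f := by
  simp_rw [sobolevSq, torusCoeff_conj, RCLike.enorm_conj]
  rw [← (Equiv.neg ℤ).tsum_eq fun l => ENNReal.ofReal (japaneseSq l ^ s) * ‖torusCoeff f l‖ₑ ^ 2]
  simp only [Equiv.neg_apply, japaneseSq_neg]

/-- The nonlinearity `f |f|^{2p}`. -/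
def powerNonlinearity (p : ℕ) (f : ℝ → ℂ) (x : ℝ) : ℂ := f x * (‖f x‖ : ℂ) ^ (2 * p)

lemma powerNonlinearity_eq (p : ℕ) (f : ℝ → ℂ) (x : ℝ) :
    powerNonlinearity p f x = f x * (f x * starRingEnd ℂ (f x)) ^ p := by
  rw [powerNonlinearity, Complex.mul_conj, Complex.normSq_eq_norm_sq, pow_mul]
  push_cast
  rfl

lemma powerNonlinearity_zero (f : ℝ → ℂ) : powerNonlinearity 0 f = f := by
  funext x
  simp [powerNonlinearity]

lemma powerNonlinearity_succ (p : ℕ) (f : ℝ → ℂ) :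
    powerNonlinearity (p + 1) f =
      fun x => (powerNonlinearity p f x * f x) * starRingEnd ℂ (f x) := by
  funext x
  rw [powerNonlinearity_eq, powerNonlinearity_eq]
  ring

lemma SmoothPeriodic.powerNonlinearity (hf : SmoothPeriodic f) (p : ℕ) :
    SmoothPeriodic (powerNonlinearity p f) := by
  induction p with
  | zero => rwa [powerNonlinearity_zero]
  | succ p ih =>
    rw [powerNonlinearity_succ]
    exact (ih.mul hf).mul hf.conj

lemma wienerNorm_powerNonlinearity_le (hf : SmoothPeriodic f) (p : ℕ) :
    wienerNorm (powerNonlinearity p f) ≤ wienerNorm f ^ (2 * p + 1) := by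
  induction p with
  | zero => simp [powerNonlinearity_zero]
  | succ p ih =>
    have hfp := hf.powerNonlinearity p
    rw [powerNonlinearity_succ]
    calc _ ≤ wienerNorm (fun x => powerNonlinearity p f x * f x) * wienerNorm f := by
          rw [← wienerNorm_conj f]
          exact wienerNorm_mul_le (hfp.mul hf) hf.conj
      _ ≤ (wienerNorm (powerNonlinearity p f) * wienerNorm f) * wienerNorm f := by
          gcongr
          exact wienerNorm_mul_le hfp hf
      _ ≤ (wienerNorm f ^ (2 * p + 1) * wienerNorm f) * wienerNorm f := by gcongr
      _ = wienerNorm f ^ (2 * (p + 1) + 1) := by ring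

lemma sobolevSq_powerNonlinearity_le (s : ℕ) (hf : SmoothPeriodic f) (p : ℕ) :
    sobolevSq s (powerNonlinearity p f) ≤
      (3 * (4 * 4 ^ s) ^ 2) ^ p * wienerNorm f ^ (4 * p) * sobolevSq s f := by
  set c : ℝ≥0∞ := 4 * 4 ^ s
  have one_le_c : 1 ≤ c := one_le_mul (by norm_num) (one_le_pow₀ (by norm_num))
  induction p with
  | zero => simp [powerNonlinearity_zero]
  | succ p ih =>
    set C : ℝ≥0∞ := (3 * c ^ 2) ^ p
    have one_le_C : 1 ≤ C := one_le_pow₀ (one_le_mul (by norm_num) (one_le_pow₀ one_le_c))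
    have hfp := hf.powerNonlinearity p
    have wiener_fp := wienerNorm_powerNonlinearity_le hf p
    have sobolev_fp_mul : sobolevSq s (fun x => powerNonlinearity p f x * f x)
        ≤ c * (C + 1) * (wienerNorm f ^ (4 * p + 2) * sobolevSq s f) :=
      calc _ ≤ c * (wienerNorm f ^ 2 * sobolevSq s (powerNonlinearity p f)
              + wienerNorm (powerNonlinearity p f) ^ 2 * sobolevSq s f) :=
            sobolevSq_mul_le s hfp hf
        _ ≤ c * (wienerNorm f ^ 2 * (C * wienerNorm f ^ (4 * p) * sobolevSq s f)
              + (wienerNorm f ^ (2 * p + 1)) ^ 2 * sobolevSq s f) := by gcongr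
        _ = _ := by ring
    have wiener_fp_mul : wienerNorm (fun x => powerNonlinearity p f x * f x)
        ≤ wienerNorm f ^ (2 * p + 2) :=
      calc _ ≤ wienerNorm (powerNonlinearity p f) * wienerNorm f := wienerNorm_mul_le hfp hf
        _ ≤ wienerNorm f ^ (2 * p + 1) * wienerNorm f := by gcongr
        _ = wienerNorm f ^ (2 * p + 2) := by ring
    have sobolev_mul_conj := sobolevSq_mul_le s (hfp.mul hf) hf.conj
    rw [wienerNorm_conj, sobolevSq_conj] at sobolev_mul_conj
    rw [powerNonlinearity_succ]
    calc _ ≤ c * (wienerNorm f ^ 2 * (c * (C + 1) * (wienerNorm f ^ (4 * p + 2) * sobolevSq s f))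
          + (wienerNorm f ^ (2 * p + 2)) ^ 2 * sobolevSq s f) :=
          sobolev_mul_conj.trans (by gcongr)
      _ = (c ^ 2 * C + c ^ 2 * 1 + c * 1 * 1) * (wienerNorm f ^ (4 * p + 4) * sobolevSq s f) := by
          ring
      _ ≤ (c ^ 2 * C + c ^ 2 * C + c * c * C) * (wienerNorm f ^ (4 * p + 4) * sobolevSq s f) := by
          gcongr
      _ = (3 * c ^ 2) ^ (p + 1) * wienerNorm f ^ (4 * (p + 1)) * sobolevSq s f := by ring

/-- A bound for the ratio `‖f |f|^{2p}‖²_{Hˢ} / ‖f‖²_{Hˢ}` when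
`‖f‖²_{H¹} ≤ L`. -/
def tameConst (s p : ℕ) (L : ℝ≥0∞) : ℝ≥0∞ :=
  (3 * (4 * 4 ^ s) ^ 2) ^ p * (sumInvJapaneseSq * L) ^ (2 * p)

lemma tameConst_ne_top (s p : ℕ) {L : ℝ≥0∞} (hL : L ≠ ⊤) : tameConst s p L ≠ ⊤ := by
  have h := sumInvJapaneseSq_ne_top
  unfold tameConst
  finiteness

lemma sobolevSq_powerNonlinearity_le_tameConst_mul (s p : ℕ) {L : ℝ≥0∞} (hf : SmoothPeriodic f)
    (h : sobolevSq 1 f ≤ L) :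
    sobolevSq s (powerNonlinearity p f) ≤ tameConst s p L * sobolevSq s f := by
  have wiener_sq_le : wienerNorm f ^ 2 ≤ sumInvJapaneseSq * L :=
    (sq_wienerNorm_le f).trans (by gcongr)
  refine (sobolevSq_powerNonlinearity_le s hf p).trans ?_
  rw [show 4 * p = 2 * (2 * p) by ring, pow_mul, tameConst]
  gcongr

end Norms

/-! ### Evolution of the Fourier coefficients -/

/-- The bound on `sup |f|` given by the embedding of `H¹(𝕋)` into the Wiener algebra when
`‖f‖²_{H¹} ≤ Q`. It is a junk value for `Q = ⊤`. -/
def supBound (Q : ℝ≥0∞) : ℝ := √(sumInvJapaneseSq * Q).toReal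

lemma supBound_nonneg (Q : ℝ≥0∞) : 0 ≤ supBound Q := Real.sqrt_nonneg _

section Bounds

variable {f : ℝ → ℂ} {Q : ℝ≥0∞}

lemma norm_le_supBound (hf : SmoothPeriodic f) (hQ : Q ≠ ⊤) (h : sobolevSq 1 f ≤ Q) (x : ℝ) :
    ‖f x‖ ≤ supBound Q := by
  have enorm_sq_le : ‖f x‖ₑ ^ 2 ≤ sumInvJapaneseSq * Q :=
    calc ‖f x‖ₑ ^ 2 ≤ wienerNorm f ^ 2 := by gcongr; exact enorm_le_wienerNorm hf x
      _ ≤ sumInvJapaneseSq * sobolevSq 1 f := sq_wienerNorm_le f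
      _ ≤ sumInvJapaneseSq * Q := by gcongr
  refine Real.le_sqrt_of_sq_le ?_
  rw [← ofReal_norm, ← ENNReal.ofReal_pow (norm_nonneg _)] at enorm_sq_le
  exact (ENNReal.ofReal_le_iff_le_toReal
    (ENNReal.mul_ne_top sumInvJapaneseSq_ne_top hQ)).1 enorm_sq_le

lemma pow_two_mul_le_japaneseSq_pow (l : ℤ) (s : ℕ) : (l : ℝ) ^ (2 * s) ≤ japaneseSq l ^ s := by
  rw [pow_mul]
  gcongr
  exact le_add_of_nonneg_left zero_le_one

lemma pow_two_mul_nonneg (l : ℤ) (s : ℕ) : 0 ≤ (l : ℝ) ^ (2 * s) := (even_two_mul s).pow_nonneg _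

lemma sobolevSq_iteratedDeriv_le (hf : SmoothPeriodic f) (s m : ℕ) :
    sobolevSq s (iteratedDeriv m f) ≤ sobolevSq (s + m) f := by
  refine ENNReal.tsum_le_tsum fun l => ?_
  have hl := japaneseSq_pos l
  rw [ofReal_mul_enorm_sq (by positivity), ofReal_mul_enorm_sq (by positivity)]
  refine ENNReal.ofReal_le_ofReal ?_
  have norm_sq_coeff : ‖torusCoeff (iteratedDeriv m f) l‖ ^ 2
      = (l : ℝ) ^ (2 * m) * ‖torusCoeff f l‖ ^ 2 := by
    rw [torusCoeff_iteratedDeriv hf, norm_mul, norm_pow, norm_mul, Complex.norm_I, one_mul,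
      Complex.norm_intCast, mul_pow, ← pow_mul, mul_comm m, pow_mul, sq_abs, ← pow_mul]
  calc japaneseSq l ^ s * ‖torusCoeff (iteratedDeriv m f) l‖ ^ 2
      = japaneseSq l ^ s * ((l : ℝ) ^ (2 * m) * ‖torusCoeff f l‖ ^ 2) := by rw [norm_sq_coeff]
    _ ≤ japaneseSq l ^ s * (japaneseSq l ^ m * ‖torusCoeff f l‖ ^ 2) := by
        gcongr
        exact pow_two_mul_le_japaneseSq_pow l m
    _ = japaneseSq l ^ (s + m) * ‖torusCoeff f l‖ ^ 2 := by ring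

lemma japaneseSq_pow_mul_norm_torusCoeff_le_sqrt (hQ : Q ≠ ⊤) (m : ℕ)
    (h : sobolevSq (2 * m) f ≤ Q) (l : ℤ) : japaneseSq l ^ m * ‖torusCoeff f l‖ ≤ √Q.toReal := by
  have term_le : ENNReal.ofReal (japaneseSq l ^ (2 * m)) * ‖torusCoeff f l‖ₑ ^ 2 ≤ Q :=
    (ENNReal.le_tsum l).trans h
  rw [ofReal_mul_enorm_sq (pow_pos (japaneseSq_pos l) _).le] at term_le
  refine Real.le_sqrt_of_sq_le ?_
  rw [mul_pow, ← pow_mul, mul_comm m]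
  exact (ENNReal.ofReal_le_iff_le_toReal hQ).1 term_le

lemma norm_powerNonlinearity_le {K x : ℝ} (h : ‖f x‖ ≤ K) (p : ℕ) :
    ‖powerNonlinearity p f x‖ ≤ K ^ (2 * p + 1) := by
  rw [powerNonlinearity, norm_mul, norm_pow, Complex.norm_real, norm_norm, ← pow_succ']
  gcongr

end Bounds

lemma continuousOn_torusCoeff {w : ℝ → ℝ → ℂ} {S : Set ℝ} {K : ℝ} (hw : ∀ t, Continuous (w t))
    (hc : ∀ x, Continuous fun t => w t x) (hK : ∀ t ∈ S, ∀ x, ‖w t x‖ ≤ K) (l : ℤ) :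
    ContinuousOn (fun t => torusCoeff (w t) l) S := by
  intro t _
  refine ContinuousWithinAt.mul continuousWithinAt_const ?_
  refine intervalIntegral.continuousWithinAt_of_dominated_interval (bound := fun _ => K)
    (.of_forall fun s => ((continuous_fourierMode _).mul (hw s)).aestronglyMeasurable) ?_
    intervalIntegrable_const
    (.of_forall fun x _ => (continuous_const.mul (hc x)).continuousWithinAt)
  filter_upwards [self_mem_nhdsWithin] with s hs
  refine .of_forall fun x _ => ?_
  rw [norm_mul, norm_fourierMode, one_mul]
  exact hK s hs x

lemma hasDerivAt_torusCoeff {w w' : ℝ → ℝ → ℂ} {S : Set ℝ} {K t : ℝ}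
    (hw : ∀ t, Continuous (w t)) (hw' : Continuous (w' t)) (hS : S ∈ nhds t)
    (hd : ∀ s x, HasDerivAt (fun s => w s x) (w' s x) s)
    (hK : ∀ t ∈ S, ∀ x, ‖w' t x‖ ≤ K) (l : ℤ) :
    HasDerivAt (fun t => torusCoeff (w t) l) (torusCoeff (w' t) l) t := by
  have hmode := continuous_fourierMode (-l)
  refine HasDerivAt.const_mul _ (intervalIntegral.hasDerivAt_integral_of_dominated_loc_of_deriv_le
    (F := fun t x => fourierMode (-l) x * w t x)
    (F' := fun t x => fourierMode (-l) x * w' t x) (bound := fun _ => K) hS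
    (.of_forall fun s => (hmode.mul (hw s)).aestronglyMeasurable)
    ((hmode.mul (hw t)).intervalIntegrable _ _) (hmode.mul hw').aestronglyMeasurable
    (.of_forall fun x _ s hs => ?_) intervalIntegrable_const
    (.of_forall fun x _ s _ => (hd s x).const_mul _)).2
  rw [norm_mul, norm_fourierMode, one_mul]
  exact hK s hs x

/-- The time derivative `i ∂ₓ² u - i u |u|^{2p}` prescribed by the equation. -/
def nlsVelocity (p : ℕ) (f : ℝ → ℂ) (x : ℝ) : ℂ :=
  Complex.I * iteratedDeriv 2 f x + (-Complex.I) * powerNonlinearity p f x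

lemma SmoothPeriodic.nlsVelocity {f : ℝ → ℂ} (hf : SmoothPeriodic f) (p : ℕ) :
    SmoothPeriodic (nlsVelocity p f) :=
  ((hf.iteratedDeriv 2).const_mul _).add ((hf.powerNonlinearity p).const_mul _)

lemma torusCoeff_nlsVelocity {f : ℝ → ℂ} (hf : SmoothPeriodic f) (p : ℕ) (l : ℤ) :
    torusCoeff (nlsVelocity p f) l =
      -Complex.I * ((l : ℂ) ^ 2 * torusCoeff f l + torusCoeff (powerNonlinearity p f) l) := by
  unfold nlsVelocity
  rw [torusCoeff_add ((hf.iteratedDeriv 2).const_mul _).continuous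
      ((hf.powerNonlinearity p).const_mul _).continuous,
    torusCoeff_const_mul, torusCoeff_const_mul, torusCoeff_iteratedDeriv hf, mul_pow, Complex.I_sq]
  ring

lemma norm_nlsVelocity_le {f : ℝ → ℂ} (hf : SmoothPeriodic f) (p : ℕ) {Q : ℝ≥0∞} (hQ : Q ≠ ⊤)
    (h : sobolevSq 3 f ≤ Q) (x : ℝ) :
    ‖nlsVelocity p f x‖ ≤ supBound Q + supBound Q ^ (2 * p + 1) := by
  have laplacian_le := norm_le_supBound (hf.iteratedDeriv 2) hQ
    ((sobolevSq_iteratedDeriv_le hf 1 2).trans h) x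
  have nonlinearity_le := norm_powerNonlinearity_le
    (norm_le_supBound hf hQ ((sobolevSq_mono (by norm_num) f).trans h) x) p
  refine (norm_add_le _ _).trans ?_
  rw [norm_mul, norm_mul, norm_neg, Complex.norm_I, one_mul, one_mul]
  exact add_le_add laplacian_le nonlinearity_le

lemma abs_sub_le_of_abs_hasDerivAt_le {f f' : ℝ → ℝ} {a b D : ℝ}
    (hc : ContinuousOn f (Set.Icc a b)) (hd : ∀ x ∈ Set.Ioo a b, HasDerivAt f (f' x) x)
    (hD : ∀ x ∈ Set.Ioo a b, |f' x| ≤ D) {t t' : ℝ} (ht : t ∈ Set.Icc a b)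
    (ht' : t' ∈ Set.Icc a b) : |f t - f t'| ≤ D * |t - t'| := by
  wlog h : t' < t generalizing t t'
  · rcases (not_lt.1 h).eq_or_lt with rfl | h
    · simp
    · rw [abs_sub_comm, abs_sub_comm t]
      exact this ht' ht h
  have Ioo_subset : Set.Ioo t' t ⊆ Set.Ioo a b := Set.Ioo_subset_Ioo ht'.1 ht.2
  obtain ⟨c, hct, slope⟩ := exists_hasDerivAt_eq_slope f f' h
    (hc.mono (Set.Icc_subset_Icc ht'.1 ht.2)) (fun x hx => hd x (Ioo_subset hx))
  rw [← (eq_div_iff (sub_pos.2 h).ne').1 slope, abs_mul]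
  exact mul_le_mul_of_nonneg_right (hD c (Ioo_subset hct)) (abs_nonneg _)

namespace IsNLS

variable {p : ℕ} {u : ℝ → ℝ → ℂ}

lemma smoothPeriodic (hu : IsNLS p Set.univ u) (t : ℝ) : SmoothPeriodic (u t) :=
  ⟨hu.smooth t trivial, hu.periodic t trivial⟩

lemma hasDerivAt (hu : IsNLS p Set.univ u) (t x : ℝ) :
    HasDerivAt (fun s => u s x) (nlsVelocity p (u t) x) t := by
  have eqn := hu.eqn t trivial x
  refine (hu.tdiff x t trivial).hasDerivAt.congr_deriv ?_
  rw [nlsVelocity, powerNonlinearity, ← eqn, pD]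
  linear_combination (deriv (fun s => u s x) t) * Complex.I_sq

lemma continuous_time (hu : IsNLS p Set.univ u) (x : ℝ) : Continuous fun t => u t x :=
  continuous_iff_continuousAt.2 fun t => (hu.hasDerivAt t x).continuousAt

lemma continuous_powerNonlinearity_time (hu : IsNLS p Set.univ u) (x : ℝ) :
    Continuous fun t => powerNonlinearity p (u t) x := by
  have := hu.continuous_time x
  unfold powerNonlinearity
  fun_prop

variable {S : Set ℝ} {Q : ℝ≥0∞}

lemma continuousOn_torusCoeff (hu : IsNLS p Set.univ u) (hQ : Q ≠ ⊤)
    (h : ∀ t ∈ S, sobolevSq 1 (u t) ≤ Q) (l : ℤ) :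
    ContinuousOn (fun t => torusCoeff (u t) l) S :=
  _root_.continuousOn_torusCoeff (fun t => (hu.smoothPeriodic t).continuous) hu.continuous_time
    (fun t ht x => norm_le_supBound (hu.smoothPeriodic t) hQ (h t ht) x) l

lemma continuousOn_torusCoeff_powerNonlinearity (hu : IsNLS p Set.univ u) (hQ : Q ≠ ⊤)
    (h : ∀ t ∈ S, sobolevSq 1 (u t) ≤ Q) (l : ℤ) :
    ContinuousOn (fun t => torusCoeff (powerNonlinearity p (u t)) l) S :=
  _root_.continuousOn_torusCoeff (fun t => ((hu.smoothPeriodic t).powerNonlinearity p).continuous)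
    hu.continuous_powerNonlinearity_time
    (fun t ht x => norm_powerNonlinearity_le
      (norm_le_supBound (hu.smoothPeriodic t) hQ (h t ht) x) p) l

lemma hasDerivAt_torusCoeff (hu : IsNLS p Set.univ u) (hQ : Q ≠ ⊤)
    (h : ∀ t ∈ S, sobolevSq 3 (u t) ≤ Q) {t : ℝ} (ht : S ∈ nhds t) (l : ℤ) :
    HasDerivAt (fun t => torusCoeff (u t) l)
      (-Complex.I * ((l : ℂ) ^ 2 * torusCoeff (u t) l + torusCoeff (powerNonlinearity p (u t)) l))
      t := by
  rw [← torusCoeff_nlsVelocity (hu.smoothPeriodic t)]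
  exact _root_.hasDerivAt_torusCoeff (fun t => (hu.smoothPeriodic t).continuous)
    ((hu.smoothPeriodic t).nlsVelocity p).continuous ht hu.hasDerivAt
    (fun s hs x => norm_nlsVelocity_le (hu.smoothPeriodic s) p hQ (h s hs) x) l

lemma hasDerivAt_norm_sq_torusCoeff (hu : IsNLS p Set.univ u) (hQ : Q ≠ ⊤)
    (h : ∀ t ∈ S, sobolevSq 3 (u t) ≤ Q) {t : ℝ} (ht : S ∈ nhds t) (l : ℤ) :
    HasDerivAt (fun t => ‖torusCoeff (u t) l‖ ^ 2)
      (2 * (torusCoeff (powerNonlinearity p (u t)) l * starRingEnd ℂ (torusCoeff (u t) l)).im)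
      t := by
  refine (hu.hasDerivAt_torusCoeff hQ h ht l).norm_sq.congr_deriv ?_
  have hl : (l : ℂ) ^ 2 = ((l ^ 2 : ℝ) : ℂ) := by push_cast; rfl
  rw [Complex.inner, hl]
  generalize torusCoeff (u t) l = c
  generalize torusCoeff (powerNonlinearity p (u t)) l = g
  simp only [Complex.mul_re, Complex.mul_im, Complex.add_re, Complex.add_im, Complex.neg_re,
    Complex.neg_im, Complex.I_re, Complex.I_im, Complex.ofReal_re, Complex.ofReal_im,
    Complex.conj_re, Complex.conj_im]
  ring

end IsNLS

/-! ### Short-time growth and conservation laws -/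

lemma sum_weight_mul_enorm_sq (F : Finset ℤ) (s : ℕ) (f : ℝ → ℂ) :
    ∑ l ∈ F, ENNReal.ofReal (japaneseSq l ^ s) * ‖torusCoeff f l‖ₑ ^ 2 =
      ENNReal.ofReal (∑ l ∈ F, japaneseSq l ^ s * ‖torusCoeff f l‖ ^ 2) := by
  have weight_nonneg (l : ℤ) : 0 ≤ japaneseSq l ^ s := (pow_pos (japaneseSq_pos l) s).le
  rw [ENNReal.ofReal_sum_of_nonneg fun l _ => mul_nonneg (weight_nonneg l) (sq_nonneg _)]
  exact Finset.sum_congr rfl fun l _ => ofReal_mul_enorm_sq (weight_nonneg l) _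

lemma ofReal_sum_le_sobolevSq (F : Finset ℤ) (s : ℕ) (f : ℝ → ℂ) :
    ENNReal.ofReal (∑ l ∈ F, japaneseSq l ^ s * ‖torusCoeff f l‖ ^ 2) ≤ sobolevSq s f :=
  (sum_weight_mul_enorm_sq F s f).symm.trans_le (ENNReal.sum_le_tsum F)

lemma sobolevSq_le_of_forall_finset {s : ℕ} {f : ℝ → ℂ} {B : ℝ≥0∞}
    (h : ∀ F : Finset ℤ,
      ENNReal.ofReal (∑ l ∈ F, japaneseSq l ^ s * ‖torusCoeff f l‖ ^ 2) ≤ B) :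
    sobolevSq s f ≤ B := by
  rw [sobolevSq, ENNReal.tsum_eq_iSup_sum]
  exact iSup_le fun F => (sum_weight_mul_enorm_sq F s f).trans_le (h F)

lemma two_mul_abs_im_mul_conj_le (z w : ℂ) :
    2 * |(z * starRingEnd ℂ w).im| ≤ ‖z‖ ^ 2 + ‖w‖ ^ 2 := by
  have h := Complex.abs_im_le_norm (z * starRingEnd ℂ w)
  rw [norm_mul, RCLike.norm_conj] at h
  linarith [two_mul_le_add_sq ‖z‖ ‖w‖]

lemma ofReal_abs_sum_im_le (F : Finset ℤ) (s : ℕ) (f g : ℝ → ℂ) :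
    ENNReal.ofReal |∑ l ∈ F, japaneseSq l ^ s *
      (2 * (torusCoeff f l * starRingEnd ℂ (torusCoeff g l)).im)| ≤
        sobolevSq s f + sobolevSq s g := by
  have weight_nonneg (l : ℤ) : 0 ≤ japaneseSq l ^ s := (pow_pos (japaneseSq_pos l) s).le
  calc _ ≤ ENNReal.ofReal (∑ l ∈ F, japaneseSq l ^ s * ‖torusCoeff f l‖ ^ 2
          + ∑ l ∈ F, japaneseSq l ^ s * ‖torusCoeff g l‖ ^ 2) := by
        refine ENNReal.ofReal_le_ofReal ?_
        rw [← Finset.sum_add_distrib]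
        refine (Finset.abs_sum_le_sum_abs _ _).trans (Finset.sum_le_sum fun l _ => ?_)
        rw [abs_mul, abs_mul, abs_of_nonneg (weight_nonneg l), abs_two, ← mul_add]
        exact mul_le_mul_of_nonneg_left (two_mul_abs_im_mul_conj_le _ _) (weight_nonneg l)
    _ ≤ _ := ENNReal.ofReal_add_le.trans
        (add_le_add (ofReal_sum_le_sobolevSq F s f) (ofReal_sum_le_sobolevSq F s g))

/-- The homogeneous energy `∑ l^{2s} |f̂(l)|²`, i.e. the mean of `|∂ₓˢ f|²`. -/
def homogSobolevSq (s : ℕ) (f : ℝ → ℂ) : ℝ := ∑' l : ℤ, (l : ℝ) ^ (2 * s) * ‖torusCoeff f l‖ ^ 2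

/-- The Fourier multiplier `(-∂ₓ²)ˢ`. -/
def negLaplacianPow (s : ℕ) (f : ℝ → ℂ) (x : ℝ) : ℂ := (-1) ^ s * iteratedDeriv (2 * s) f x

/-- The mean of `|f|^{2p+2}` over `𝕋`: up to a constant, the potential part of the Hamiltonian. -/
def potentialEnergy (p : ℕ) (f : ℝ → ℂ) : ℝ :=
  (torusCoeff (fun x => (f x * starRingEnd ℂ (f x)) ^ (p + 1)) 0).re

section Energies

variable {f : ℝ → ℂ}

lemma summable_pow_mul_sq_norm_torusCoeff (hf : SmoothPeriodic f) (s : ℕ) :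
    Summable fun l : ℤ => (l : ℝ) ^ (2 * s) * ‖torusCoeff f l‖ ^ 2 :=
  .of_nonneg_of_le (fun l => mul_nonneg (pow_two_mul_nonneg l s) (sq_nonneg _))
    (fun l => mul_le_mul_of_nonneg_right (pow_two_mul_le_japaneseSq_pow l s) (sq_nonneg _))
    (summable_japaneseSq_pow_mul_sq_norm_torusCoeff hf s)

lemma sobolevSq_one_eq (hf : SmoothPeriodic f) :
    sobolevSq 1 f = ENNReal.ofReal (homogSobolevSq 0 f + homogSobolevSq 1 f) := by
  rw [sobolevSq_eq_ofReal hf, homogSobolevSq, homogSobolevSq,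
    ← (summable_pow_mul_sq_norm_torusCoeff hf 0).tsum_add
      (summable_pow_mul_sq_norm_torusCoeff hf 1)]
  congr 2 with l
  unfold japaneseSq
  ring

lemma SmoothPeriodic.negLaplacianPow (hf : SmoothPeriodic f) (s : ℕ) :
    SmoothPeriodic (negLaplacianPow s f) := (hf.iteratedDeriv _).const_mul _

lemma torusCoeff_negLaplacianPow (hf : SmoothPeriodic f) (s : ℕ) (l : ℤ) :
    torusCoeff (negLaplacianPow s f) l = ((l : ℝ) ^ (2 * s) : ℝ) * torusCoeff f l := by
  unfold negLaplacianPow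
  rw [torusCoeff_const_mul, torusCoeff_iteratedDeriv hf, mul_pow, pow_mul Complex.I, Complex.I_sq,
    ← mul_assoc, ← mul_assoc, ← mul_pow]
  simp

lemma tsum_im_torusCoeff_mul_conj {g : ℝ → ℂ} (hg : SmoothPeriodic g) (hf : SmoothPeriodic f)
    (s : ℕ) :
    ∑' l : ℤ, (l : ℝ) ^ (2 * s) * (2 * (torusCoeff g l * starRingEnd ℂ (torusCoeff f l)).im) =
      2 * (torusCoeff (fun x => g x * starRingEnd ℂ (negLaplacianPow s f x)) 0).im := by
  have parseval := (Complex.hasSum_im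
    (hasSum_torusCoeff_mul_conj hg (hf.negLaplacianPow s))).mul_left 2
  rw [← parseval.tsum_eq]
  refine tsum_congr fun l => ?_
  rw [torusCoeff_negLaplacianPow hf, map_mul, Complex.conj_ofReal, mul_left_comm (torusCoeff g l),
    Complex.im_ofReal_mul]
  ring

lemma japaneseSq_pow_mul_norm_torusCoeff_le_inv {Q : ℝ≥0∞} (hQ : Q ≠ ⊤) {s : ℕ}
    (h : sobolevSq (2 * (s + 1)) f ≤ Q) (l : ℤ) :
    japaneseSq l ^ s * ‖torusCoeff f l‖ ≤ √Q.toReal * (japaneseSq l)⁻¹ := by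
  rw [← div_eq_mul_inv, le_div_iff₀ (japaneseSq_pos l)]
  calc japaneseSq l ^ s * ‖torusCoeff f l‖ * japaneseSq l
      = japaneseSq l ^ (s + 1) * ‖torusCoeff f l‖ := by ring
    _ ≤ √Q.toReal := japaneseSq_pow_mul_norm_torusCoeff_le_sqrt hQ (s + 1) h l

lemma mul_conj_pow_succ (p : ℕ) (z : ℂ) :
    (z * starRingEnd ℂ z) ^ (p + 1) = ((‖z‖ ^ (2 * p + 2) : ℝ) : ℂ) := by
  rw [Complex.mul_conj, Complex.normSq_eq_norm_sq]
  push_cast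
  ring

lemma norm_mul_conj_pow_succ_le {K : ℝ} (p : ℕ) {z : ℂ} (h : ‖z‖ ≤ K) :
    ‖(z * starRingEnd ℂ z) ^ (p + 1)‖ ≤ K ^ (2 * p + 2) := by
  rw [mul_conj_pow_succ, Complex.norm_real, Real.norm_of_nonneg (by positivity)]
  gcongr

lemma powerNonlinearity_mul_conj (p : ℕ) (f : ℝ → ℂ) (x : ℝ) :
    powerNonlinearity p f x * starRingEnd ℂ (f x) = ((‖f x‖ ^ (2 * p + 2) : ℝ) : ℂ) := by
  rw [powerNonlinearity_eq, ← mul_conj_pow_succ]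
  ring

lemma potentialEnergy_nonneg (p : ℕ) (f : ℝ → ℂ) : 0 ≤ potentialEnergy p f := by
  simp_rw [potentialEnergy, mul_conj_pow_succ]
  rw [torusCoeff_ofReal_zero, Complex.ofReal_re]
  exact mul_nonneg (by positivity)
    (intervalIntegral.integral_nonneg (by positivity) fun x _ => by positivity)

lemma potentialEnergy_le (p : ℕ) {K : ℝ} (h : ∀ x, ‖f x‖ ≤ K) :
    potentialEnergy p f ≤ K ^ (2 * p + 2) :=
  (Complex.re_le_norm _).trans (norm_torusCoeff_le (fun x => norm_mul_conj_pow_succ_le p (h x)) 0)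

/-- A bound for `‖u(t)‖²_{H¹}` in terms of `x = ‖u(t')‖²_{H¹}` provided by the conservation of mass
and energy. -/
def energyBound (p : ℕ) (x : ℝ≥0∞) : ℝ≥0∞ := x + (sumInvJapaneseSq * x) ^ (p + 1)

lemma energyBound_mono (p : ℕ) {x y : ℝ≥0∞} (h : x ≤ y) : energyBound p x ≤ energyBound p y := by
  unfold energyBound
  gcongr

lemma energyBound_ne_top (p : ℕ) {x : ℝ≥0∞} (h : x ≠ ⊤) : energyBound p x ≠ ⊤ := by
  have := sumInvJapaneseSq_ne_top
  unfold energyBound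
  finiteness

lemma ofReal_supBound_pow (p : ℕ) {Q : ℝ≥0∞} (hQ : Q ≠ ⊤) :
    ENNReal.ofReal (supBound Q ^ (2 * p + 2)) = (sumInvJapaneseSq * Q) ^ (p + 1) := by
  rw [supBound, show 2 * p + 2 = 2 * (p + 1) by ring, pow_mul,
    Real.sq_sqrt ENNReal.toReal_nonneg, ENNReal.ofReal_pow ENNReal.toReal_nonneg,
    ENNReal.ofReal_toReal (ENNReal.mul_ne_top sumInvJapaneseSq_ne_top hQ)]

end Energies

namespace IsNLS

variable {p : ℕ} {u : ℝ → ℝ → ℂ} {a b : ℝ} {Q : ℝ≥0∞}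

lemma sobolevSq_le_add (hu : IsNLS p Set.univ u) {s : ℕ} {L W : ℝ≥0∞} (hQ : Q ≠ ⊤)
    (h : ∀ t ∈ Set.Icc a b, sobolevSq 3 (u t) ≤ Q) (hL : L ≠ ⊤)
    (h1 : ∀ t ∈ Set.Icc a b, sobolevSq 1 (u t) ≤ L) (hW : W ≠ ⊤)
    (hsW : ∀ t ∈ Set.Icc a b, sobolevSq s (u t) ≤ W) {t t' : ℝ} (ht : t ∈ Set.Icc a b)
    (ht' : t' ∈ Set.Icc a b) :
    sobolevSq s (u t) ≤
      sobolevSq s (u t') + (tameConst s p L + 1) * W * ENNReal.ofReal (b - a) := by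
  have tame_ne_top := tameConst_ne_top s p hL
  set D : ℝ≥0∞ := (tameConst s p L + 1) * W
  have hD : D ≠ ⊤ := by finiteness
  refine sobolevSq_le_of_forall_finset fun F => ?_
  set E : ℝ → ℝ := fun t => ∑ l ∈ F, japaneseSq l ^ s * ‖torusCoeff (u t) l‖ ^ 2
  have lipschitz : |E t - E t'| ≤ D.toReal * |t - t'| := by
    refine abs_sub_le_of_abs_hasDerivAt_le
      (f' := fun t => ∑ l ∈ F, japaneseSq l ^ s * (2 * (torusCoeff (powerNonlinearity p (u t)) l *
        starRingEnd ℂ (torusCoeff (u t) l)).im))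
      (continuousOn_finsetSum _ fun l _ => continuousOn_const.mul
        ((hu.continuousOn_torusCoeff hL h1 l).norm.pow 2))
      (fun x hx => .fun_sum fun l _ => .const_mul _
        (hu.hasDerivAt_norm_sq_torusCoeff hQ h (Icc_mem_nhds hx.1 hx.2) l))
      (fun x hx => ?_) ht ht'
    have hx := Set.Ioo_subset_Icc_self hx
    rw [← ENNReal.ofReal_le_iff_le_toReal hD]
    calc _ ≤ sobolevSq s (powerNonlinearity p (u x)) + sobolevSq s (u x) :=
          ofReal_abs_sum_im_le F s _ _
      _ ≤ tameConst s p L * sobolevSq s (u x) + sobolevSq s (u x) := by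
          gcongr
          exact sobolevSq_powerNonlinearity_le_tameConst_mul s p (hu.smoothPeriodic x) (h1 x hx)
      _ = (tameConst s p L + 1) * sobolevSq s (u x) := by ring
      _ ≤ D := mul_le_mul' le_rfl (hsW x hx)
  have dist_le : |t - t'| ≤ b - a := abs_sub_le_of_le_of_le ht.1 ht.2 ht'.1 ht'.2
  calc ENNReal.ofReal (E t) ≤ ENNReal.ofReal (E t' + D.toReal * (b - a)) := by
        refine ENNReal.ofReal_le_ofReal ?_
        have := mul_le_mul_of_nonneg_left dist_le (ENNReal.toReal_nonneg (a := D))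
        linarith [le_abs_self (E t - E t')]
    _ ≤ ENNReal.ofReal (E t') + ENNReal.ofReal (D.toReal * (b - a)) := ENNReal.ofReal_add_le
    _ ≤ sobolevSq s (u t') + D * ENNReal.ofReal (b - a) := by
        rw [ENNReal.ofReal_mul ENNReal.toReal_nonneg, ENNReal.ofReal_toReal hD]
        gcongr
        exact ofReal_sum_le_sobolevSq F s (u t')

lemma sobolevSq_le_two_mul (hu : IsNLS p Set.univ u) {M s : ℕ} {L : ℝ≥0∞} (hQ : Q ≠ ⊤)
    (hM : 3 ≤ M) (hs : s ≤ M) (h : ∀ t ∈ Set.Icc a b, sobolevSq M (u t) ≤ Q) (hL : L ≠ ⊤)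
    (h1 : ∀ t ∈ Set.Icc a b, sobolevSq 1 (u t) ≤ L)
    (hab : (tameConst s p L + 1) * ENNReal.ofReal (b - a) ≤ 1 / 2)
    {t t' : ℝ} (ht : t ∈ Set.Icc a b) (ht' : t' ∈ Set.Icc a b) :
    sobolevSq s (u t) ≤ 2 * sobolevSq s (u t') := by
  set W : ℝ≥0∞ := ⨆ τ ∈ Set.Icc a b, sobolevSq s (u τ)
  have le_W : ∀ τ ∈ Set.Icc a b, sobolevSq s (u τ) ≤ W := fun τ hτ =>
    le_iSup₂ (f := fun τ (_ : τ ∈ Set.Icc a b) => sobolevSq s (u τ)) τ hτ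
  have hW : W ≠ ⊤ := ne_top_of_le_ne_top hQ
    (iSup₂_le fun τ hτ => (sobolevSq_mono hs _).trans (h τ hτ))
  have self_improve : W ≤ sobolevSq s (u t') + W / 2 := iSup₂_le fun τ hτ =>
    calc _ ≤ sobolevSq s (u t') + (tameConst s p L + 1) * W * ENNReal.ofReal (b - a) :=
          hu.sobolevSq_le_add hQ (fun t ht => (sobolevSq_mono hM _).trans (h t ht)) hL h1 hW le_W
            hτ ht'
      _ = sobolevSq s (u t') + (tameConst s p L + 1) * ENNReal.ofReal (b - a) * W := by ring
      _ ≤ sobolevSq s (u t') + 1 / 2 * W := by gcongr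
      _ = sobolevSq s (u t') + W / 2 := by rw [one_div, mul_comm, div_eq_mul_inv]
  have half_le : W / 2 ≤ sobolevSq s (u t') := by
    rw [← ENNReal.add_le_add_iff_right (ENNReal.div_ne_top hW two_ne_zero), ENNReal.add_halves]
    exact self_improve
  calc sobolevSq s (u t) ≤ W := le_W t ht
    _ = 2 * (W / 2) := (ENNReal.mul_div_cancel two_ne_zero ENNReal.ofNat_ne_top).symm
    _ ≤ 2 * sobolevSq s (u t') := by gcongr

lemma abs_pow_mul_im_le (hu : IsNLS p Set.univ u) {s : ℕ} {t : ℝ} (hQ : Q ≠ ⊤)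
    (h : sobolevSq (2 * (s + 1)) (u t) ≤ Q) (l : ℤ) :
    |(l : ℝ) ^ (2 * s) * (2 * (torusCoeff (powerNonlinearity p (u t)) l *
        starRingEnd ℂ (torusCoeff (u t) l)).im)|
      ≤ 2 * supBound Q ^ (2 * p + 1) * √Q.toReal * (japaneseSq l)⁻¹ := by
  have nonlinearity_le : ‖torusCoeff (powerNonlinearity p (u t)) l‖ ≤ supBound Q ^ (2 * p + 1) :=
    norm_torusCoeff_le (fun x => norm_powerNonlinearity_le (norm_le_supBound (hu.smoothPeriodic t)
      hQ ((sobolevSq_mono (by omega) _).trans h) x) p) l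
  have im_le := Complex.abs_im_le_norm
    (torusCoeff (powerNonlinearity p (u t)) l * starRingEnd ℂ (torusCoeff (u t) l))
  rw [norm_mul, RCLike.norm_conj] at im_le
  have supBound_nonneg := supBound_nonneg Q
  have weight_le := pow_two_mul_le_japaneseSq_pow l s
  have weight_nonneg := pow_two_mul_nonneg l s
  have japanese_nonneg := (japaneseSq_pos l).le
  rw [abs_mul, abs_mul, abs_of_nonneg weight_nonneg, abs_two]
  calc _ ≤ japaneseSq l ^ s *
        (2 * (‖torusCoeff (powerNonlinearity p (u t)) l‖ * ‖torusCoeff (u t) l‖)) := by gcongr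
    _ = 2 * ‖torusCoeff (powerNonlinearity p (u t)) l‖ *
        (japaneseSq l ^ s * ‖torusCoeff (u t) l‖) := by ring
    _ ≤ 2 * supBound Q ^ (2 * p + 1) * (√Q.toReal * (japaneseSq l)⁻¹) :=
        mul_le_mul (mul_le_mul_of_nonneg_left nonlinearity_le zero_le_two)
          (japaneseSq_pow_mul_norm_torusCoeff_le_inv hQ h l) (by positivity) (by positivity)
    _ = _ := by ring

lemma hasDerivAt_homogSobolevSq (hu : IsNLS p Set.univ u) {M s : ℕ} (hQ : Q ≠ ⊤) (hM : 3 ≤ M)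
    (hs : 2 * (s + 1) ≤ M) (h : ∀ t ∈ Set.Icc a b, sobolevSq M (u t) ≤ Q) {t : ℝ}
    (ht : t ∈ Set.Ioo a b) :
    HasDerivAt (fun t => homogSobolevSq s (u t))
      (2 * (torusCoeff (fun x => powerNonlinearity p (u t) x *
        starRingEnd ℂ (negLaplacianPow s (u t) x)) 0).im) t := by
  have hut := hu.smoothPeriodic t
  rw [← tsum_im_torusCoeff_mul_conj (hut.powerNonlinearity p) hut]
  refine hasDerivAt_tsum_of_isPreconnected
    (u := fun l => 2 * supBound Q ^ (2 * p + 1) * √Q.toReal * (japaneseSq l)⁻¹)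
    (summable_inv_japaneseSq.mul_left _) isOpen_Ioo isPreconnected_Ioo
    (fun l y hy => (hu.hasDerivAt_norm_sq_torusCoeff hQ
      (fun t ht => (sobolevSq_mono hM _).trans (h t ht)) (Icc_mem_nhds hy.1 hy.2) l).const_mul _)
    (fun l y hy => hu.abs_pow_mul_im_le hQ
      ((sobolevSq_mono hs _).trans (h y (Set.Ioo_subset_Icc_self hy))) l)
    ht (summable_pow_mul_sq_norm_torusCoeff hut s) ht

lemma continuousOn_homogSobolevSq (hu : IsNLS p Set.univ u) {S : Set ℝ} {s : ℕ} (hQ : Q ≠ ⊤)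
    (h : ∀ t ∈ S, sobolevSq (2 * (s + 1)) (u t) ≤ Q) :
    ContinuousOn (fun t => homogSobolevSq s (u t)) S := by
  refine continuousOn_tsum (u := fun l => √Q.toReal * √Q.toReal * (japaneseSq l)⁻¹)
    (fun l => continuousOn_const.mul ((hu.continuousOn_torusCoeff hQ (fun t ht =>
      (sobolevSq_mono (by omega) _).trans (h t ht)) l).norm.pow 2))
    (summable_inv_japaneseSq.mul_left _) (fun l t ht => ?_)
  have coeff_le : ‖torusCoeff (u t) l‖ ≤ √Q.toReal := by
    simpa using japaneseSq_pow_mul_norm_torusCoeff_le_sqrt hQ 0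
      ((sobolevSq_mono (by omega) _).trans (h t ht)) l
  have japanese_nonneg := (japaneseSq_pos l).le
  rw [Real.norm_of_nonneg (mul_nonneg (pow_two_mul_nonneg l s) (sq_nonneg _))]
  calc _ ≤ japaneseSq l ^ s * ‖torusCoeff (u t) l‖ ^ 2 := by
        gcongr
        exact pow_two_mul_le_japaneseSq_pow l s
    _ = ‖torusCoeff (u t) l‖ * (japaneseSq l ^ s * ‖torusCoeff (u t) l‖) := by ring
    _ ≤ √Q.toReal * (√Q.toReal * (japaneseSq l)⁻¹) :=
        mul_le_mul coeff_le (japaneseSq_pow_mul_norm_torusCoeff_le_inv hQ (h t ht) l)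
          (by positivity) (by positivity)
    _ = _ := by ring

lemma homogSobolevSq_zero_eq_of_sobolevSq_le (hu : IsNLS p Set.univ u) (hQ : Q ≠ ⊤)
    (h : ∀ t ∈ Set.Icc a b, sobolevSq 3 (u t) ≤ Q) {t t' : ℝ} (ht : t ∈ Set.Icc a b)
    (ht' : t' ∈ Set.Icc a b) : homogSobolevSq 0 (u t) = homogSobolevSq 0 (u t') := by
  have constant := abs_sub_le_of_abs_hasDerivAt_le (D := 0)
    (hu.continuousOn_homogSobolevSq (s := 0) hQ fun t ht =>
      (sobolevSq_mono (by norm_num) _).trans (h t ht))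
    (fun x hx => hu.hasDerivAt_homogSobolevSq hQ le_rfl (s := 0) (by norm_num) h hx)
    (fun x _ => by
      simp only [negLaplacianPow, pow_zero, one_mul, mul_zero, iteratedDeriv_zero,
        powerNonlinearity_mul_conj]
      rw [torusCoeff_ofReal_zero, Complex.ofReal_im, mul_zero, abs_zero]) ht ht'
  rw [zero_mul] at constant
  exact sub_eq_zero.1 (abs_nonpos_iff.1 constant)

lemma continuousOn_potentialEnergy (hu : IsNLS p Set.univ u) {S : Set ℝ} (hQ : Q ≠ ⊤)
    (h : ∀ t ∈ S, sobolevSq 1 (u t) ≤ Q) : ContinuousOn (fun t => potentialEnergy p (u t)) S := by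
  refine Complex.continuous_re.comp_continuousOn (_root_.continuousOn_torusCoeff
    (fun t => (((hu.smoothPeriodic t).mul (hu.smoothPeriodic t).conj).pow _).continuous)
    (fun x => ?_) (fun t ht x => norm_mul_conj_pow_succ_le p
      (norm_le_supBound (hu.smoothPeriodic t) hQ (h t ht) x)) 0)
  have := hu.continuous_time x
  exact (this.mul (Complex.continuous_conj.comp this)).pow _

lemma hasDerivAt_torusCoeff_mul_conj_pow (hu : IsNLS p Set.univ u) {S : Set ℝ} (hQ : Q ≠ ⊤)
    (h : ∀ t ∈ S, sobolevSq 3 (u t) ≤ Q) {t : ℝ} (ht : S ∈ nhds t) (l : ℤ) :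
    HasDerivAt (fun t => torusCoeff (fun x => (u t x * starRingEnd ℂ (u t x)) ^ (p + 1)) l)
      (torusCoeff (fun x => ((p + 1 : ℕ) : ℂ) * (u t x * starRingEnd ℂ (u t x)) ^ p *
        (nlsVelocity p (u t) x * starRingEnd ℂ (u t x)
          + u t x * starRingEnd ℂ (nlsVelocity p (u t) x))) l) t := by
  set K := supBound Q
  have hK : 0 ≤ K := supBound_nonneg Q
  have hsp := hu.smoothPeriodic
  have hvel := (hsp t).nlsVelocity p
  refine _root_.hasDerivAt_torusCoeff
    (w' := fun t x => ((p + 1 : ℕ) : ℂ) * (u t x * starRingEnd ℂ (u t x)) ^ p *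
      (nlsVelocity p (u t) x * starRingEnd ℂ (u t x)
        + u t x * starRingEnd ℂ (nlsVelocity p (u t) x)))
    (K := (p + 1 : ℕ) * (K * K) ^ p * ((K + K ^ (2 * p + 1)) * K + K * (K + K ^ (2 * p + 1))))
    (fun t => (((hsp t).mul (hsp t).conj).pow _).continuous)
    (((((hsp t).mul (hsp t).conj).pow p).const_mul _).mul
      ((hvel.mul (hsp t).conj).add ((hsp t).mul hvel.conj))).continuous ht
    (fun s x => ((hu.hasDerivAt s x).mul (hu.hasDerivAt s x).star).pow (p + 1))
    (fun s hs x => ?_) l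
  have u_le : ‖u s x‖ ≤ K :=
    norm_le_supBound (hsp s) hQ ((sobolevSq_mono (by norm_num) _).trans (h s hs)) x
  have velocity_le : ‖nlsVelocity p (u s) x‖ ≤ K + K ^ (2 * p + 1) :=
    norm_nlsVelocity_le (hsp s) p hQ (h s hs) x
  rw [norm_mul, norm_mul, norm_pow, norm_mul, RCLike.norm_conj, Complex.norm_natCast]
  gcongr
  refine (norm_add_le _ _).trans ?_
  rw [norm_mul, norm_mul, RCLike.norm_conj, RCLike.norm_conj]
  gcongr

lemma hasDerivAt_potentialEnergy (hu : IsNLS p Set.univ u) {S : Set ℝ} (hQ : Q ≠ ⊤)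
    (h : ∀ t ∈ S, sobolevSq 3 (u t) ≤ Q) {t : ℝ} (ht : S ∈ nhds t) :
    HasDerivAt (fun t => potentialEnergy p (u t))
      (-((p + 1 : ℕ) * (2 * (torusCoeff (fun x => powerNonlinearity p (u t) x *
        starRingEnd ℂ (negLaplacianPow 1 (u t) x)) 0).im))) t := by
  have hsp := ((hu.smoothPeriodic t).powerNonlinearity p).mul
    ((hu.smoothPeriodic t).negLaplacianPow 1).conj
  refine (Complex.reCLM.hasFDerivAt.comp_hasDerivAt t
    (hu.hasDerivAt_torusCoeff_mul_conj_pow hQ h ht 0)).congr_deriv ?_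
  have integrand_eq (x : ℝ) : ((p + 1 : ℕ) : ℂ) * (u t x * starRingEnd ℂ (u t x)) ^ p *
      (nlsVelocity p (u t) x * starRingEnd ℂ (u t x)
        + u t x * starRingEnd ℂ (nlsVelocity p (u t) x)) =
      ((p + 1 : ℕ) : ℂ) *
        (Complex.I * (powerNonlinearity p (u t) x * starRingEnd ℂ (negLaplacianPow 1 (u t) x)) +
        (-Complex.I) * starRingEnd ℂ
          (powerNonlinearity p (u t) x * starRingEnd ℂ (negLaplacianPow 1 (u t) x))) := by
    simp only [negLaplacianPow, nlsVelocity, powerNonlinearity_eq, map_mul, map_add, map_neg,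
      map_pow, Complex.conj_I, Complex.conj_conj, map_one]
    ring
  simp_rw [Complex.reCLM_apply, integrand_eq]
  rw [torusCoeff_const_mul, torusCoeff_add (hsp.const_mul _).continuous
    (hsp.conj.const_mul _).continuous, torusCoeff_const_mul, torusCoeff_const_mul, torusCoeff_conj]
  simp only [neg_zero, neg_mul, Complex.mul_re, Complex.add_re, Complex.natCast_re,
    Complex.natCast_im, Complex.neg_re, Complex.I_re, Complex.I_im, Complex.conj_re,
    Complex.conj_im, zero_mul]
  ring

lemma energy_eq (hu : IsNLS p Set.univ u) (hQ : Q ≠ ⊤)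
    (h : ∀ t ∈ Set.Icc a b, sobolevSq 4 (u t) ≤ Q) {t t' : ℝ} (ht : t ∈ Set.Icc a b)
    (ht' : t' ∈ Set.Icc a b) :
    (p + 1 : ℕ) * homogSobolevSq 1 (u t) + potentialEnergy p (u t)
      = (p + 1 : ℕ) * homogSobolevSq 1 (u t') + potentialEnergy p (u t') := by
  have lower {m : ℕ} (hm : m ≤ 4) : ∀ t ∈ Set.Icc a b, sobolevSq m (u t) ≤ Q :=
    fun t ht => (sobolevSq_mono hm _).trans (h t ht)
  have constant := abs_sub_le_of_abs_hasDerivAt_le (D := 0)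
    (f := fun t => (p + 1 : ℕ) * homogSobolevSq 1 (u t) + potentialEnergy p (u t))
    ((continuousOn_const.mul (hu.continuousOn_homogSobolevSq (s := 1) hQ h)).add
      (hu.continuousOn_potentialEnergy hQ (lower (by norm_num))))
    (fun x hx =>
      ((hu.hasDerivAt_homogSobolevSq hQ (by norm_num) (s := 1) le_rfl h hx).const_mul _).add
      (hu.hasDerivAt_potentialEnergy hQ (lower (by norm_num)) (Icc_mem_nhds hx.1 hx.2)))
    (fun x _ => by rw [add_neg_cancel, abs_zero]) ht ht'
  rw [zero_mul] at constant
  exact sub_eq_zero.1 (abs_nonpos_iff.1 constant)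

lemma sobolevSq_one_le_energyBound_of_sobolevSq_le (hu : IsNLS p Set.univ u) (hQ : Q ≠ ⊤)
    (h : ∀ t ∈ Set.Icc a b, sobolevSq 4 (u t) ≤ Q) {t t' : ℝ} (ht : t ∈ Set.Icc a b)
    (ht' : t' ∈ Set.Icc a b) : sobolevSq 1 (u t) ≤ energyBound p (sobolevSq 1 (u t')) := by
  have fin := sobolevSq_ne_top (hu.smoothPeriodic t') 1
  set K := supBound (sobolevSq 1 (u t'))
  have mass := hu.homogSobolevSq_zero_eq_of_sobolevSq_le hQ
    (fun t ht => (sobolevSq_mono (by norm_num) _).trans (h t ht)) ht ht'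
  have kinetic_le : homogSobolevSq 1 (u t) ≤ homogSobolevSq 1 (u t') + K ^ (2 * p + 2) := by
    have energy := hu.energy_eq hQ h ht ht'
    have pot_nonneg := potentialEnergy_nonneg p (u t)
    have pot_le := potentialEnergy_le p (norm_le_supBound (hu.smoothPeriodic t') fin le_rfl)
    have hK : 0 ≤ K ^ (2 * p + 2) := pow_nonneg (supBound_nonneg _) _
    have hp : (1 : ℝ) ≤ (p + 1 : ℕ) := by exact_mod_cast Nat.succ_pos p
    by_contra! hlt
    nlinarith
  calc sobolevSq 1 (u t)
      = ENNReal.ofReal (homogSobolevSq 0 (u t') + homogSobolevSq 1 (u t)) := by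
        rw [sobolevSq_one_eq (hu.smoothPeriodic t), mass]
    _ ≤ ENNReal.ofReal ((homogSobolevSq 0 (u t') + homogSobolevSq 1 (u t')) + K ^ (2 * p + 2)) :=
        ENNReal.ofReal_le_ofReal (by linarith)
    _ ≤ energyBound p (sobolevSq 1 (u t')) := by
        refine ENNReal.ofReal_add_le.trans ?_
        rw [ofReal_supBound_pow p fin, ← sobolevSq_one_eq (hu.smoothPeriodic t'), energyBound]

end IsNLS

/-! ### Local boundedness in time of the Sobolev norms -/

lemma exists_pos_forall_add_one_mul_ofReal_le {G : ℝ≥0∞} (hG : G ≠ ⊤) :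
    ∃ r : ℝ, 0 < r ∧ ∀ r' ≤ r, (G + 1) * ENNReal.ofReal r' ≤ 1 / 2 := by
  obtain ⟨r, hr, h⟩ := ENNReal.exists_nnreal_pos_mul_lt (a := G + 1) (b := 1 / 2) (by finiteness)
    (by simp)
  refine ⟨r, hr, fun r' hr' => ?_⟩
  calc (G + 1) * ENNReal.ofReal r' ≤ (G + 1) * r := by
        gcongr
        exact ENNReal.ofReal_le_of_le_toReal hr'
    _ = r * (G + 1) := mul_comm _ _
    _ ≤ 1 / 2 := h.le

/-- The times at which the squared `H^M` norm of `u` is at most `n`. -/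
def sobolevSublevel (u : ℝ → ℝ → ℂ) (M n : ℕ) : Set ℝ := {t | sobolevSq M (u t) ≤ n}

/-- The times around which the `H^M` norm of `u` is bounded. No continuity in time with values in
`H^M` is part of `IsNLS`, so that every time is of this kind requires a proof. -/
def locallyBoundedTimes (u : ℝ → ℝ → ℂ) (M : ℕ) : Set ℝ := ⋃ n, interior (sobolevSublevel u M n)

/-- The symmetry `(t, x) ↦ conj u(-t, x)` of the equation. -/
def timeReversal (u : ℝ → ℝ → ℂ) (t x : ℝ) : ℂ := starRingEnd ℂ (u (-t) x)

section LocallyBoundedTimes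

variable {u : ℝ → ℝ → ℂ} {M : ℕ}

lemma isOpen_locallyBoundedTimes : IsOpen (locallyBoundedTimes u M) :=
  isOpen_iUnion fun _ => isOpen_interior

lemma exists_sobolevSq_le_of_isCompact {K : Set ℝ} (hK : IsCompact K)
    (h : K ⊆ locallyBoundedTimes u M) : ∃ Q : ℝ≥0∞, Q ≠ ⊤ ∧ ∀ t ∈ K, sobolevSq M (u t) ≤ Q := by
  obtain ⟨n, hn⟩ := hK.elim_directed_cover (fun n => interior (sobolevSublevel u M n))
    (fun n => isOpen_interior) h (directed_of_isDirected_le fun m n hmn =>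
      interior_mono fun t (ht : sobolevSq M (u t) ≤ m) => ht.trans (by exact_mod_cast hmn))
  exact ⟨n, ENNReal.natCast_ne_top n, fun t ht =>
    interior_subset (s := sobolevSublevel u M n) (hn ht)⟩

lemma sobolevSq_timeReversal (s : ℕ) (t : ℝ) :
    sobolevSq s (timeReversal u t) = sobolevSq s (u (-t)) := sobolevSq_conj s (u (-t))

lemma locallyBoundedTimes_timeReversal :
    locallyBoundedTimes (timeReversal u) M = Neg.neg ⁻¹' locallyBoundedTimes u M := by
  have sublevel (n : ℕ) :
      sobolevSublevel (timeReversal u) M n = Neg.neg ⁻¹' sobolevSublevel u M n := by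
    simp only [sobolevSublevel, sobolevSq_timeReversal, Set.preimage_ofPred_eq]
  simp_rw [locallyBoundedTimes, Set.preimage_iUnion, sublevel]
  exact Set.iUnion_congr fun n => ((Homeomorph.neg ℝ).preimage_interior _).symm

lemma iteratedDeriv_conj {f : ℝ → ℂ} (hf : SmoothPeriodic f) (n : ℕ) :
    iteratedDeriv n (fun x => starRingEnd ℂ (f x)) =
      fun x => starRingEnd ℂ (iteratedDeriv n f x) := by
  induction n with
  | zero => simp only [iteratedDeriv_zero]
  | succ n ih =>
    funext x
    rw [iteratedDeriv_succ, iteratedDeriv_succ, ih]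
    exact ((hf.iteratedDeriv n).hasDerivAt x).star.deriv

end LocallyBoundedTimes

namespace IsNLS

variable {p : ℕ} {u : ℝ → ℝ → ℂ} {M n : ℕ} {a b : ℝ}

lemma isClosed_sobolevSublevel (hu : IsNLS p Set.univ u) (hM : 1 ≤ M) (n : ℕ) :
    IsClosed (sobolevSublevel u M n) := by
  rw [← closure_subset_iff_isClosed]
  refine fun t ht => sobolevSq_le_of_forall_finset fun F => ?_
  have fin : (n : ℝ≥0∞) + sobolevSq M (u t) ≠ ⊤ :=
    ENNReal.add_ne_top.2 ⟨ENNReal.natCast_ne_top n, sobolevSq_ne_top (hu.smoothPeriodic t) M⟩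
  have bound : ∀ τ ∈ insert t (sobolevSublevel u M n),
      sobolevSq 1 (u τ) ≤ n + sobolevSq M (u t) := by
    rintro τ (rfl | hτ)
    · exact (sobolevSq_mono hM _).trans le_add_self
    · exact (sobolevSq_mono hM _).trans (le_add_right hτ)
  have continuous_partialSum : ContinuousOn
      (fun τ => ENNReal.ofReal (∑ l ∈ F, japaneseSq l ^ M * ‖torusCoeff (u τ) l‖ ^ 2))
      (insert t (sobolevSublevel u M n)) :=
    ENNReal.continuous_ofReal.comp_continuousOn (continuousOn_finsetSum _ fun l _ =>
      continuousOn_const.mul ((hu.continuousOn_torusCoeff fin bound l).norm.pow 2))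
  exact ((continuous_partialSum t (Set.mem_insert _ _)).mono (Set.subset_insert _ _)).closure_le ht
    continuousWithinAt_const fun τ hτ => (ofReal_sum_le_sobolevSq F M (u τ)).trans hτ

protected lemma timeReversal (hu : IsNLS p Set.univ u) : IsNLS p Set.univ (timeReversal u) := by
  have time_deriv (x t : ℝ) : HasDerivAt (fun s => _root_.timeReversal u s x)
      (-starRingEnd ℂ (nlsVelocity p (u (-t)) x)) t :=
    ((hu.hasDerivAt (-t) x).scomp t (hasDerivAt_neg t)).star.congr_deriv (by simp)
  refine ⟨fun t _ => (hu.smoothPeriodic (-t)).conj.smooth,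
    fun t _ => (hu.smoothPeriodic (-t)).conj.periodic,
    fun x t _ => (time_deriv x t).differentiableAt, fun t _ x => ?_⟩
  have space_deriv :
      pD 2 (_root_.timeReversal u t) x = starRingEnd ℂ (iteratedDeriv 2 (u (-t)) x) :=
    congrFun (iteratedDeriv_conj (hu.smoothPeriodic (-t)) 2) x
  rw [(time_deriv x t).deriv, space_deriv]
  simp only [_root_.timeReversal, nlsVelocity, powerNonlinearity, RCLike.norm_conj, map_add,
    map_mul, map_neg, Complex.conj_I, map_pow, Complex.conj_ofReal]
  linear_combination (starRingEnd ℂ (iteratedDeriv 2 (u (-t)) x) -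
    starRingEnd ℂ (u (-t) x) * (‖u (-t) x‖ : ℂ) ^ (2 * p)) * Complex.I_sq

lemma exists_sobolevSq_le_of_Ioc_subset (hu : IsNLS p Set.univ u) (hM : 4 ≤ M) (hab : a < b)
    (h : Set.Ioc a b ⊆ locallyBoundedTimes u M) :
    ∃ Q : ℝ≥0∞, Q ≠ ⊤ ∧ ∀ t ∈ Set.Icc a b, sobolevSq M (u t) ≤ Q := by
  have bound_away (s : ℝ) (hs : a < s) :
      ∃ Q : ℝ≥0∞, Q ≠ ⊤ ∧ ∀ t ∈ Set.Icc s b, sobolevSq M (u t) ≤ Q :=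
    exists_sobolevSq_le_of_isCompact isCompact_Icc fun t ht => h ⟨hs.trans_le ht.1, ht.2⟩
  set L := energyBound p (sobolevSq 1 (u b))
  have hL : L ≠ ⊤ := energyBound_ne_top p (sobolevSq_ne_top (hu.smoothPeriodic b) 1)
  have le_L : ∀ t ∈ Set.Ioc a b, sobolevSq 1 (u t) ≤ L := fun t ht => by
    obtain ⟨Q, hQ, hb⟩ := bound_away t ht.1
    exact hu.sobolevSq_one_le_energyBound_of_sobolevSq_le hQ
      (fun τ hτ => (sobolevSq_mono hM _).trans (hb τ hτ)) ⟨le_rfl, ht.2⟩ ⟨ht.2, le_rfl⟩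
  obtain ⟨r, hr, small⟩ := exists_pos_forall_add_one_mul_ofReal_le (tameConst_ne_top M p hL)
  set c := min b (a + r)
  have hac : a < c := lt_min hab (by linarith)
  have hcb : c ≤ b := min_le_left _ _
  have near_a : ∀ s ∈ Set.Ioc a c, sobolevSq M (u s) ≤ 2 * sobolevSq M (u c) := fun s hs => by
    obtain ⟨Q, hQ, hb⟩ := bound_away s hs.1
    exact hu.sobolevSq_le_two_mul hQ (by omega) le_rfl (fun t ht => hb t ⟨ht.1, ht.2.trans hcb⟩) hL
      (fun t ht => le_L t ⟨hs.1.trans_le ht.1, ht.2.trans hcb⟩)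
      (small _ (by linarith [hs.1, min_le_right b (a + r)])) ⟨le_rfl, hs.2⟩ ⟨hs.2, le_rfl⟩
  obtain ⟨Q, hQ, hb⟩ := bound_away c hac
  have fin (t : ℝ) := sobolevSq_ne_top (hu.smoothPeriodic t) M
  refine ⟨sobolevSq M (u a) + 2 * sobolevSq M (u c) + Q, ENNReal.add_ne_top.2 ⟨ENNReal.add_ne_top.2
    ⟨fin a, ENNReal.mul_ne_top ENNReal.ofNat_ne_top (fin c)⟩, hQ⟩, fun t ht => ?_⟩
  rcases eq_or_lt_of_le ht.1 with rfl | hat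
  · exact le_self_add.trans le_self_add
  rcases le_total t c with htc | hct
  · exact (near_a t ⟨hat, htc⟩).trans (le_add_self.trans le_self_add)
  · exact (hb t ⟨hct, ht.2⟩).trans le_add_self

lemma sobolevSq_le_two_mul_of_Ioc_subset (hu : IsNLS p Set.univ u) (hM : 4 ≤ M) (hab : a ≤ b)
    (ha : sobolevSq M (u a) ≤ n) (h : Set.Ioc a b ⊆ locallyBoundedTimes u M)
    (hr : (tameConst M p (energyBound p n) + 1) * ENNReal.ofReal (b - a) ≤ 1 / 2) :
    sobolevSq M (u b) ≤ 2 * n := by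
  rcases eq_or_lt_of_le hab with rfl | hlt
  · exact ha.trans (le_mul_of_one_le_left' one_le_two)
  obtain ⟨Q, hQ, bound⟩ := hu.exists_sobolevSq_le_of_Ioc_subset hM hlt h
  have energy_le : ∀ t ∈ Set.Icc a b, sobolevSq 1 (u t) ≤ energyBound p n := fun t ht =>
    (hu.sobolevSq_one_le_energyBound_of_sobolevSq_le hQ
      (fun τ hτ => (sobolevSq_mono hM _).trans (bound τ hτ)) ht ⟨le_rfl, hab⟩).trans
      (energyBound_mono p ((sobolevSq_mono (by omega) _).trans ha))
  calc sobolevSq M (u b) ≤ 2 * sobolevSq M (u a) :=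
        hu.sobolevSq_le_two_mul hQ (by omega) le_rfl bound
          (energyBound_ne_top p (ENNReal.natCast_ne_top n)) energy_le hr ⟨hab, le_rfl⟩
          ⟨le_rfl, hab⟩
    _ ≤ 2 * n := by gcongr

-- The argument starts from the last time in `[a, b]` at which the norm is not locally bounded.
lemma sobolevSq_le_two_mul_of_forall_notMem (hu : IsNLS p Set.univ u) (hM : 4 ≤ M) (hab : a ≤ b)
    (ha : a ∉ locallyBoundedTimes u M)
    (h : ∀ t ∈ Set.Icc a b, t ∉ locallyBoundedTimes u M → sobolevSq M (u t) ≤ n)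
    (hr : ∀ r ≤ b - a, (tameConst M p (energyBound p n) + 1) * ENNReal.ofReal r ≤ 1 / 2) :
    sobolevSq M (u b) ≤ 2 * n := by
  obtain ⟨c, ⟨hc, hcI⟩, maximal⟩ := ((isCompact_Icc (a := a) (b := b)).inter_left
    isOpen_locallyBoundedTimes.isClosed_compl).exists_isGreatest ⟨a, ha, le_rfl, hab⟩
  refine hu.sobolevSq_le_two_mul_of_Ioc_subset hM hcI.2 (h c hcI hc) (fun t ht => ?_)
    (hr _ (by linarith [hcI.1]))
  by_contra ht'
  exact ht.1.not_ge (maximal ⟨ht', hcI.1.trans ht.1.le, ht.2⟩)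

lemma exists_ball_sobolevSq_le (hu : IsNLS p Set.univ u) (hM : 1 ≤ M)
    (h : locallyBoundedTimes u M ≠ Set.univ) :
    ∃ c ∉ locallyBoundedTimes u M, ∃ n : ℕ, ∃ r > 0,
      ∀ t ∈ Metric.ball c r, t ∉ locallyBoundedTimes u M → sobolevSq M (u t) ≤ n := by
  have closed := (isOpen_locallyBoundedTimes (u := u) (M := M)).isClosed_compl
  have := (Set.nonempty_compl.2 h).to_subtype
  have := closed.completeSpace_coe
  obtain ⟨n, c, hc⟩ := nonempty_interior_of_iUnion_of_closed
    (f := fun n => (Subtype.val ⁻¹' sobolevSublevel u M n : Set ↥(locallyBoundedTimes u M)ᶜ))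
    (fun n => (hu.isClosed_sobolevSublevel hM n).preimage continuous_subtype_val)
    (Set.eq_univ_of_forall fun x => Set.mem_iUnion.2 <|
      (ENNReal.exists_nat_gt (sobolevSq_ne_top (hu.smoothPeriodic x) M)).imp fun _ hn => hn.le)
  rw [mem_interior_iff_mem_nhds, Metric.mem_nhds_iff] at hc
  obtain ⟨r, hr, ball_subset⟩ := hc
  exact ⟨c, c.2, n, r, hr, fun t ht ht' => ball_subset (a := ⟨t, ht'⟩) ht⟩

lemma locallyBoundedTimes_eq_univ (hu : IsNLS p Set.univ u) (hM : 4 ≤ M) :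
    locallyBoundedTimes u M = Set.univ := by
  by_contra hne
  obtain ⟨c, hc, n, r₀, hr₀, bound⟩ := hu.exists_ball_sobolevSq_le (by omega) hne
  obtain ⟨r₁, hr₁, small⟩ := exists_pos_forall_add_one_mul_ofReal_le
    (tameConst_ne_top M p (energyBound_ne_top p (ENNReal.natCast_ne_top n)))
  refine hc (Set.mem_iUnion.2 ⟨2 * n, mem_interior_iff_mem_nhds.2 (Filter.mem_of_superset
    (Metric.ball_mem_nhds c (lt_min hr₀ hr₁)) fun t ht => ?_)⟩)
  rw [Metric.mem_ball, Real.dist_eq, lt_min_iff, abs_lt, abs_lt] at ht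
  suffices sobolevSq M (u t) ≤ 2 * n by simpa [sobolevSublevel]
  have bound_of_abs_lt (τ : ℝ) (hτ : |τ - c| < r₀) :=
    bound τ (by rwa [Metric.mem_ball, Real.dist_eq])
  rcases le_total c t with hct | htc
  · refine hu.sobolevSq_le_two_mul_of_forall_notMem hM hct hc
      (fun τ hτ => bound_of_abs_lt τ (abs_lt.2 ⟨by linarith [hτ.1], by linarith [hτ.2, ht.1.2]⟩))
      (fun r hr => small r (by linarith [ht.2.2]))
  · have reversed := hu.timeReversal.sobolevSq_le_two_mul_of_forall_notMem (n := n) hM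
      (neg_le_neg htc) (by simpa [locallyBoundedTimes_timeReversal])
      (fun τ hτ hτ' => by
        rw [locallyBoundedTimes_timeReversal] at hτ'
        rw [sobolevSq_timeReversal]
        exact bound_of_abs_lt (-τ)
          (abs_lt.2 ⟨by linarith [hτ.2, ht.1.1], by linarith [hτ.1]⟩) hτ')
      (fun r hr => small r (by linarith [ht.2.1]))
    rwa [sobolevSq_timeReversal, neg_neg] at reversed

lemma exists_sobolevSq_le (hu : IsNLS p Set.univ u) (M : ℕ) (a b : ℝ) :
    ∃ Q : ℝ≥0∞, Q ≠ ⊤ ∧ ∀ t ∈ Set.Icc a b, sobolevSq M (u t) ≤ Q := by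
  obtain ⟨Q, hQ, bound⟩ := exists_sobolevSq_le_of_isCompact (u := u) (M := max M 4) isCompact_Icc
    (by rw [hu.locallyBoundedTimes_eq_univ (le_max_right M 4)]; exact Set.subset_univ (Set.Icc a b))
  exact ⟨Q, hQ, fun t ht => (sobolevSq_mono (le_max_left M 4) _).trans (bound t ht)⟩

lemma homogSobolevSq_zero_eq (hu : IsNLS p Set.univ u) (t t' : ℝ) :
    homogSobolevSq 0 (u t) = homogSobolevSq 0 (u t') := by
  obtain ⟨Q, hQ, bound⟩ := hu.exists_sobolevSq_le 3 (min t t') (max t t')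
  exact hu.homogSobolevSq_zero_eq_of_sobolevSq_le hQ bound ⟨min_le_left _ _, le_max_left _ _⟩
    ⟨min_le_right _ _, le_max_right _ _⟩

lemma sobolevSq_one_le_energyBound (hu : IsNLS p Set.univ u) (t t' : ℝ) :
    sobolevSq 1 (u t) ≤ energyBound p (sobolevSq 1 (u t')) := by
  obtain ⟨Q, hQ, bound⟩ := hu.exists_sobolevSq_le 4 (min t t') (max t t')
  exact hu.sobolevSq_one_le_energyBound_of_sobolevSq_le hQ bound
    ⟨min_le_left _ _, le_max_left _ _⟩ ⟨min_le_right _ _, le_max_right _ _⟩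

end IsNLS

/-! ### The bilinear resonance estimate -/

/-- The weight `⟨z⟩^{-γ}` by which integration by parts in time gains on a product of waves with
resonance function `z`. -/
def resonanceWeight (γ : ℝ) (z : ℤ) : ℝ≥0∞ := ENNReal.ofReal ((1 + |(z : ℝ)|) ^ (-γ))

lemma resonanceWeight_mul (γ δ : ℝ) (z : ℤ) :
    resonanceWeight γ z * resonanceWeight δ z = resonanceWeight (γ + δ) z := by
  unfold resonanceWeight
  rw [← ENNReal.ofReal_mul (by positivity), ← Real.rpow_add (by positivity), neg_add]

lemma resonanceWeight_sq (γ : ℝ) (z : ℤ) :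
    resonanceWeight γ z ^ 2 = resonanceWeight (2 * γ) z := by
  rw [sq, resonanceWeight_mul, two_mul]

lemma resonanceWeight_anti {γ δ : ℝ} (h : γ ≤ δ) (z : ℤ) :
    resonanceWeight δ z ≤ resonanceWeight γ z :=
  ENNReal.ofReal_le_ofReal <| Real.rpow_le_rpow_of_exponent_le
    (le_add_of_nonneg_right (abs_nonneg _)) (neg_le_neg h)

lemma resonanceWeight_one (z : ℤ) :
    resonanceWeight 1 z = ENNReal.ofReal ((1 + |(z : ℝ)|)⁻¹) := by
  rw [resonanceWeight, Real.rpow_neg_one]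

lemma resonanceWeight_one_le_one (z : ℤ) : resonanceWeight 1 z ≤ 1 := by
  rw [resonanceWeight_one]
  exact ENNReal.ofReal_le_one.2 (inv_le_one_of_one_le₀ (le_add_of_nonneg_right (abs_nonneg _)))

lemma summable_one_add_abs_rpow_neg {g : ℝ} (hg : 1 < g) :
    Summable fun n : ℤ => (1 + |(n : ℝ)|) ^ (-g) := by
  refine .of_nonneg_of_le (fun n => by positivity) (fun n => ?_)
    ((hasSum_ite_eq 0 (1 : ℝ)).summable.add (Real.summable_abs_int_rpow hg))
  split_ifs with hn
  · rw [hn, Int.cast_zero, abs_zero, add_zero, Real.one_rpow]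
    exact le_add_of_nonneg_right (by positivity)
  · rw [zero_add]
    exact Real.rpow_le_rpow_of_nonpos (by positivity) (by linarith) (by linarith)

lemma summable_half_japaneseSq_rpow {g : ℝ} (hg : 1 / 2 < g) :
    Summable fun n : ℤ => (japaneseSq n / 2) ^ (-g) := by
  refine .of_nonneg_of_le (fun n => Real.rpow_nonneg (half_pos (japaneseSq_pos n)).le _)
    (fun n => ?_) ((summable_one_add_abs_rpow_neg (g := 2 * g) (by linarith)).mul_left (4 ^ g))
  have lower : (1 + |(n : ℝ)|) ^ 2 / 4 ≤ japaneseSq n / 2 := by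
    unfold japaneseSq
    nlinarith [sq_abs (n : ℝ), sq_nonneg (|(n : ℝ)| - 1)]
  calc (japaneseSq n / 2) ^ (-g) ≤ ((1 + |(n : ℝ)|) ^ 2 / 4) ^ (-g) :=
        Real.rpow_le_rpow_of_nonpos (by positivity) lower (by linarith)
    _ = 4 ^ g * (1 + |(n : ℝ)|) ^ (-(2 * g)) := by
        rw [Real.div_rpow (by positivity) (by norm_num), ← Real.rpow_natCast,
          ← Real.rpow_mul (by positivity), Real.rpow_neg (by norm_num : (0 : ℝ) ≤ 4),
          div_inv_eq_mul, mul_comm, Nat.cast_ofNat, mul_neg]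

/-- A bound, uniform in `y`, for `∑ j, (1 + (2j - y)² / 2)^{-3/4}`. -/
def quadraticSumConst : ℝ≥0∞ := ∑' n : ℤ, ENNReal.ofReal ((japaneseSq n / 2) ^ (-(3 / 4 : ℝ)))

lemma quadraticSumConst_ne_top : quadraticSumConst ≠ ⊤ :=
  tsum_ofReal_ne_top (summable_half_japaneseSq_rpow (by norm_num))
    fun n => Real.rpow_nonneg (half_pos (japaneseSq_pos n)).le _

lemma tsum_one_add_sq_rpow_le (y : ℝ) :
    ∑' j : ℤ, ENNReal.ofReal ((1 + (2 * (j : ℝ) - y) ^ 2 / 2) ^ (-(3 / 4 : ℝ))) ≤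
      quadraticSumConst := by
  rw [← (Equiv.addRight (round (y / 2))).tsum_eq]
  refine ENNReal.tsum_le_tsum fun j => ENNReal.ofReal_le_ofReal <|
    Real.rpow_le_rpow_of_nonpos (half_pos (japaneseSq_pos j)) ?_ (by norm_num)
  have near := abs_le.1 (abs_sub_round (y / 2))
  rw [Equiv.coe_addRight, japaneseSq, Int.cast_add]
  nlinarith [sq_nonneg ((j : ℝ) - 2 * (y / 2 - round (y / 2))), near.1, near.2]

lemma exists_min_sq_sub_sq_add_le (D : ℝ) :
    ∃ δ : ℝ, ∀ z : ℝ, min ((z - δ) ^ 2) ((z + δ) ^ 2) ≤ |z ^ 2 + D| := by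
  rcases le_total 0 D with hD | hD
  · refine ⟨0, fun z => (min_le_left _ _).trans ?_⟩
    rw [sub_zero, abs_of_nonneg (by positivity)]
    linarith
  · refine ⟨√(-D), fun z => ?_⟩
    have factor : z ^ 2 + D = (z - √(-D)) * (z + √(-D)) := by
      linear_combination Real.sq_sqrt (neg_nonneg.2 hD)
    rw [factor, abs_mul, ← sq_abs (z - _), ← sq_abs (z + _), min_le_iff, sq, sq]
    rcases le_total |z - √(-D)| |z + √(-D)| with h | h
    · exact .inl (by gcongr)
    · exact .inr (by gcongr)

lemma tsum_resonanceWeight_same_sign_le (l m : ℤ) {s : ℤ} (hs : s = 1 ∨ s = -1) :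
    ∑' j : ℤ, resonanceWeight (3 / 4) (s * j ^ 2 + s * (l - j) ^ 2 + m) ≤
      2 * quadraticSumConst := by
  obtain ⟨δ, hδ⟩ := exists_min_sq_sub_sq_add_le ((l : ℝ) ^ 2 + 2 * (s * m))
  have abs_eq (j : ℤ) : |((s * j ^ 2 + s * (l - j) ^ 2 + m : ℤ) : ℝ)| =
      |(2 * (j : ℝ) - l) ^ 2 + ((l : ℝ) ^ 2 + 2 * (s * m))| / 2 := by
    have complete_square : (2 * (j : ℝ) - l) ^ 2 + ((l : ℝ) ^ 2 + 2 * (s * m)) =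
        2 * s * ((s * j ^ 2 + s * (l - j) ^ 2 + m : ℤ) : ℝ) := by
      rcases hs with rfl | rfl <;> push_cast <;> ring
    rw [complete_square, abs_mul]
    rcases hs with rfl | rfl <;> norm_num
  have pointwise (j : ℤ) : resonanceWeight (3 / 4) (s * j ^ 2 + s * (l - j) ^ 2 + m) ≤
      ENNReal.ofReal ((1 + (2 * (j : ℝ) - (l + δ)) ^ 2 / 2) ^ (-(3 / 4 : ℝ))) +
      ENNReal.ofReal ((1 + (2 * (j : ℝ) - (l - δ)) ^ 2 / 2) ^ (-(3 / 4 : ℝ))) := by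
    have rpow_le (x : ℝ) (hx : x ^ 2 ≤ |(2 * (j : ℝ) - l) ^ 2 + ((l : ℝ) ^ 2 + 2 * (s * m))|) :
        resonanceWeight (3 / 4) (s * j ^ 2 + s * (l - j) ^ 2 + m) ≤
          ENNReal.ofReal ((1 + x ^ 2 / 2) ^ (-(3 / 4 : ℝ))) := by
      rw [resonanceWeight, abs_eq]
      exact ENNReal.ofReal_le_ofReal <| Real.rpow_le_rpow_of_nonpos (by positivity)
        (by linarith) (by norm_num)
    rcases min_le_iff.1 (hδ (2 * j - l)) with h | h
    · exact (rpow_le _ (by rwa [sub_sub] at h)).trans le_self_add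
    · exact (rpow_le _ (by rwa [sub_add] at h)).trans le_add_self
  refine (ENNReal.tsum_le_tsum pointwise).trans ?_
  rw [ENNReal.tsum_add, two_mul]
  exact add_le_add (tsum_one_add_sq_rpow_le _) (tsum_one_add_sq_rpow_le _)

/-- The sum of `⟨z⟩^{-5/4}` over all integers. -/
def linearSumConst : ℝ≥0∞ := ∑' z : ℤ, resonanceWeight (5 / 4) z

lemma linearSumConst_ne_top : linearSumConst ≠ ⊤ :=
  tsum_ofReal_ne_top (summable_one_add_abs_rpow_neg (by norm_num)) fun _ => by positivity

lemma tsum_resonanceWeight_opposite_sign_le {l : ℤ} (hl : l ≠ 0) (m : ℤ) {s : ℤ} (hs : s ≠ 0) :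
    ∑' j : ℤ, resonanceWeight (5 / 4) (s * j ^ 2 + -s * (l - j) ^ 2 + m) ≤ linearSumConst := by
  have injective : Function.Injective fun j : ℤ => s * j ^ 2 + -s * (l - j) ^ 2 + m :=
    fun i j (hij : _ = _) => by
      have factor : s * l * (i - j) = 0 := by linarith
      exact sub_eq_zero.1 ((mul_eq_zero_iff_left (mul_ne_zero hs hl)).1 factor)
  exact ENNReal.tsum_comp_le_tsum_of_injective injective _

lemma tsum_resonanceWeight_le {l : ℤ} (hl : l ≠ 0) (m : ℤ) {s s' : ℤ} (hs : s = 1 ∨ s = -1)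
    (hs' : s' = 1 ∨ s' = -1) :
    ∑' j : ℤ, resonanceWeight (5 / 4) (s * j ^ 2 + s' * (l - j) ^ 2 + m) ≤
      2 * quadraticSumConst + linearSumConst := by
  obtain rfl | rfl : s' = s ∨ s' = -s := by omega
  · exact (ENNReal.tsum_le_tsum fun j => resonanceWeight_anti (by norm_num) _).trans
      ((tsum_resonanceWeight_same_sign_le l m hs).trans le_self_add)
  · exact (tsum_resonanceWeight_opposite_sign_le hl m (by omega)).trans le_add_self

lemma sq_tsum_tsum_mul_le_of_tsum_sq_le {P P' : Type*} (F : P → ℝ≥0∞) (G : P' → ℝ≥0∞)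
    {K₁ K₂ : P → P' → ℝ≥0∞} {C₁ C₂ : ℝ≥0∞} (h₁ : ∀ p, ∑' q, K₁ p q ^ 2 ≤ C₁)
    (h₂ : ∀ q, ∑' p, K₂ p q ^ 2 ≤ C₂) :
    (∑' p, ∑' q, F p * G q * (K₁ p q * K₂ p q)) ^ 2 ≤
      C₁ * C₂ * ((∑' p, F p ^ 2) * ∑' q, G q ^ 2) := by
  calc _ = (∑' x : P × P', (F x.1 * K₁ x.1 x.2) * (G x.2 * K₂ x.1 x.2)) ^ 2 := by
        rw [← ENNReal.tsum_prod (f := fun p q => F p * G q * (K₁ p q * K₂ p q))]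
        simp_rw [mul_mul_mul_comm (F _)]
    _ ≤ (∑' x : P × P', (F x.1 * K₁ x.1 x.2) ^ 2) * ∑' x : P × P', (G x.2 * K₂ x.1 x.2) ^ 2 :=
        sq_tsum_mul_le_tsum_sq_mul_tsum_sq _ _
    _ = (∑' p, F p ^ 2 * ∑' q, K₁ p q ^ 2) * ∑' q, G q ^ 2 * ∑' p, K₂ p q ^ 2 := by
        rw [ENNReal.tsum_prod (f := fun p q => (F p * K₁ p q) ^ 2),
          ENNReal.tsum_prod (f := fun p q => (G q * K₂ p q) ^ 2),
          ENNReal.tsum_comm (f := fun p q => (G q * K₂ p q) ^ 2)]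
        simp_rw [mul_pow, ENNReal.tsum_mul_left]
    _ ≤ (∑' p, F p ^ 2 * C₁) * ∑' q, G q ^ 2 * C₂ := by
        gcongr with p q
        · exact h₁ p
        · exact h₂ q
    _ = _ := by
        rw [ENNReal.tsum_mul_right, ENNReal.tsum_mul_right]
        ring

lemma tsum_ite_add_eq (φ : ℤ → ℤ → ℝ≥0∞) (l : ℤ) :
    ∑' q : ℤ × ℤ, (if q.1 + q.2 = l then φ q.1 q.2 else 0) = ∑' j, φ j (l - j) := by
  rw [ENNReal.tsum_prod (f := fun a b => if a + b = l then φ a b else 0)]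
  refine tsum_congr fun a => ?_
  rw [tsum_eq_single (l - a) fun b hb => if_neg (by omega), if_pos (by omega)]

lemma sq_tsum_ite_add_eq_mul_le (f g : ℤ → ℝ≥0∞) (l : ℤ) :
    (∑' q : ℤ × ℤ, (if q.1 + q.2 = l then f q.1 * g q.2 else 0)) ^ 2 ≤
      (∑' n, f n ^ 2) * ∑' n, g n ^ 2 := by
  rw [tsum_ite_add_eq (fun a b => f a * g b), ← tsum_comp_sub_left (fun n => g n ^ 2) l]
  exact sq_tsum_mul_le_tsum_sq_mul_tsum_sq _ _

lemma tsum_sq_mul_prod (f g : ℤ → ℝ≥0∞) :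
    ∑' q : ℤ × ℤ, (f q.1 * g q.2) ^ 2 = (∑' n, f n ^ 2) * ∑' n, g n ^ 2 := by
  rw [ENNReal.tsum_prod (f := fun a b => (f a * g b) ^ 2)]
  simp_rw [mul_pow, ENNReal.tsum_mul_left, ENNReal.tsum_mul_right]

/-- The resonance function of four frequencies, grouped into two pairs, the first of which consists
of waves of the same sign; `m` is the contribution of the remaining frequencies. -/
def pairResonance (s s₂ s₃ m : ℤ) (P R : ℤ × ℤ) : ℤ :=
  s * P.1 ^ 2 + s * P.2 ^ 2 + s₂ * R.1 ^ 2 + s₃ * R.2 ^ 2 + m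

section PairResonance

variable {s s₂ s₃ : ℤ}

lemma tsum_sq_ite_resonanceWeight_right_le (hs₂ : s₂ = 1 ∨ s₂ = -1) (hs₃ : s₃ = 1 ∨ s₃ = -1)
    (s l m : ℤ) (P : ℤ × ℤ) :
    ∑' R : ℤ × ℤ, (if P.1 + P.2 + R.1 + R.2 = l ∧ R.1 + R.2 ≠ 0 then
      resonanceWeight (5 / 8) (pairResonance s s₂ s₃ m P R) else 0) ^ 2 ≤
        2 * quadraticSumConst + linearSumConst := by
  by_cases hl : l - P.1 - P.2 = 0
  · have vanish (R : ℤ × ℤ) : ¬(P.1 + P.2 + R.1 + R.2 = l ∧ R.1 + R.2 ≠ 0) := by omega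
    simp [vanish]
  have pointwise (R : ℤ × ℤ) : (if P.1 + P.2 + R.1 + R.2 = l ∧ R.1 + R.2 ≠ 0 then
      resonanceWeight (5 / 8) (pairResonance s s₂ s₃ m P R) else 0) ^ 2 ≤
      if R.1 + R.2 = l - P.1 - P.2 then resonanceWeight (5 / 4)
        (s₂ * R.1 ^ 2 + s₃ * R.2 ^ 2 + (s * P.1 ^ 2 + s * P.2 ^ 2 + m)) else 0 := by
    split_ifs with h h'
    · rw [resonanceWeight_sq, pairResonance]
      exact le_of_eq (by congr 1 <;> ring)
    · omega
    · simp
    · simp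
  refine (ENNReal.tsum_le_tsum pointwise).trans ?_
  rw [tsum_ite_add_eq fun a b => resonanceWeight (5 / 4)
    (s₂ * a ^ 2 + s₃ * b ^ 2 + (s * P.1 ^ 2 + s * P.2 ^ 2 + m))]
  exact tsum_resonanceWeight_le hl _ hs₂ hs₃

lemma tsum_sq_ite_resonanceWeight_left_le (hs : s = 1 ∨ s = -1) (s₂ s₃ l m : ℤ) (R : ℤ × ℤ) :
    ∑' P : ℤ × ℤ, (if P.1 + P.2 + R.1 + R.2 = l then
      resonanceWeight (3 / 8) (pairResonance s s₂ s₃ m P R) else 0) ^ 2 ≤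
        2 * quadraticSumConst := by
  have pointwise (P : ℤ × ℤ) : (if P.1 + P.2 + R.1 + R.2 = l then
      resonanceWeight (3 / 8) (pairResonance s s₂ s₃ m P R) else 0) ^ 2 =
      if P.1 + P.2 = l - R.1 - R.2 then resonanceWeight (3 / 4)
        (s * P.1 ^ 2 + s * P.2 ^ 2 + (s₂ * R.1 ^ 2 + s₃ * R.2 ^ 2 + m)) else 0 := by
    split_ifs with h h' h'
    · rw [resonanceWeight_sq, pairResonance]
      congr 1 <;> ring
    · omega
    · omega
    · simp
  simp_rw [pointwise]
  rw [tsum_ite_add_eq fun a b => resonanceWeight (3 / 4)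
    (s * a ^ 2 + s * b ^ 2 + (s₂ * R.1 ^ 2 + s₃ * R.2 ^ 2 + m))]
  exact tsum_resonanceWeight_same_sign_le _ _ hs

lemma sq_tsum_transversal_le (hs : s = 1 ∨ s = -1) (hs₂ : s₂ = 1 ∨ s₂ = -1)
    (hs₃ : s₃ = 1 ∨ s₃ = -1) (F G : ℤ × ℤ → ℝ≥0∞) (l m : ℤ) :
    (∑' P : ℤ × ℤ, ∑' R : ℤ × ℤ, if P.1 + P.2 + R.1 + R.2 = l ∧ R.1 + R.2 ≠ 0 then
      F P * G R * resonanceWeight 1 (pairResonance s s₂ s₃ m P R) else 0) ^ 2 ≤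
      (2 * quadraticSumConst + linearSumConst) * (2 * quadraticSumConst) *
        ((∑' P, F P ^ 2) * ∑' R, G R ^ 2) := by
  have schur := sq_tsum_tsum_mul_le_of_tsum_sq_le F G
    (tsum_sq_ite_resonanceWeight_right_le hs₂ hs₃ s l m)
    (tsum_sq_ite_resonanceWeight_left_le hs s₂ s₃ l m)
  convert schur using 6 with P R
  split_ifs with h h' h'
  · rw [resonanceWeight_mul]
    norm_num
  · omega
  · simp
  · simp

lemma tsum_degenerate_le (f₀ f₁ f₂ f₃ : ℤ → ℝ≥0∞) (s s₂ s₃ l m : ℤ) :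
    (∑' P : ℤ × ℤ, ∑' R : ℤ × ℤ, if P.1 + P.2 + R.1 + R.2 = l ∧ R.1 + R.2 = 0 then
      f₀ P.1 * f₁ P.2 * (f₂ R.1 * f₃ R.2) *
        resonanceWeight 1 (pairResonance s s₂ s₃ m P R) else 0) ^ 2 ≤
      (∑' n, f₀ n ^ 2) * (∑' n, f₁ n ^ 2) * ((∑' n, f₂ n ^ 2) * ∑' n, f₃ n ^ 2) := by
  refine le_trans (pow_le_pow_left' (b := (∑' P : ℤ × ℤ, if P.1 + P.2 = l then f₀ P.1 * f₁ P.2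
      else 0) * ∑' R : ℤ × ℤ, if R.1 + R.2 = 0 then f₂ R.1 * f₃ R.2 else 0) ?_ 2) ?_
  · simp_rw [← ENNReal.tsum_mul_right, ← ENNReal.tsum_mul_left]
    refine ENNReal.tsum_le_tsum fun P => ENNReal.tsum_le_tsum fun R => ?_
    split_ifs
    any_goals first | omega | simp
    exact mul_le_of_le_one_right' (resonanceWeight_one_le_one _)
  · rw [mul_pow]
    exact mul_le_mul' (sq_tsum_ite_add_eq_mul_le f₀ f₁ l) (sq_tsum_ite_add_eq_mul_le f₂ f₃ 0)

/-- The constant of the `L²`-based estimate for four waves weighted by their resonance. -/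
def quadrilinearConst : ℝ≥0∞ :=
  4 * ((2 * quadraticSumConst + linearSumConst) * (2 * quadraticSumConst) + 1)

lemma quadrilinearConst_ne_top : quadrilinearConst ≠ ⊤ := by
  have := quadraticSumConst_ne_top
  have := linearSumConst_ne_top
  unfold quadrilinearConst
  finiteness

lemma sq_tsum_resonanceWeight_mul_le (hs : s = 1 ∨ s = -1) (hs₂ : s₂ = 1 ∨ s₂ = -1)
    (hs₃ : s₃ = 1 ∨ s₃ = -1) (f₀ f₁ f₂ f₃ : ℤ → ℝ≥0∞) (l m : ℤ) :
    (∑' P : ℤ × ℤ, ∑' R : ℤ × ℤ, if P.1 + P.2 + R.1 + R.2 = l then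
      f₀ P.1 * f₁ P.2 * (f₂ R.1 * f₃ R.2) *
        resonanceWeight 1 (pairResonance s s₂ s₃ m P R) else 0) ^ 2 ≤ quadrilinearConst *
      ((∑' n, f₀ n ^ 2) * (∑' n, f₁ n ^ 2) * ((∑' n, f₂ n ^ 2) * ∑' n, f₃ n ^ 2)) := by
  have split (P R : ℤ × ℤ) (x : ℝ≥0∞) : (if P.1 + P.2 + R.1 + R.2 = l then x else 0) =
      (if P.1 + P.2 + R.1 + R.2 = l ∧ R.1 + R.2 ≠ 0 then x else 0) +
        if P.1 + P.2 + R.1 + R.2 = l ∧ R.1 + R.2 = 0 then x else 0 := by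
    split_ifs <;> first | omega | simp
  simp_rw [split, ENNReal.tsum_add]
  refine (sq_add_le_four_mul_sq_add_sq _ _).trans ?_
  have transversal := sq_tsum_transversal_le hs hs₂ hs₃ (fun P => f₀ P.1 * f₁ P.2)
    (fun R => f₂ R.1 * f₃ R.2) l m
  rw [tsum_sq_mul_prod, tsum_sq_mul_prod] at transversal
  rw [quadrilinearConst, mul_assoc, add_mul, one_mul]
  gcongr
  exact tsum_degenerate_le f₀ f₁ f₂ f₃ s s₂ s₃ l m

end PairResonance

/-! ### The energy symbol on the zero-sum hyperplane -/

lemma sq_le_abs_sq_add_sq_sub_sq_add {b c x y z e w : ℝ} (hc : 0 ≤ c) (hcb : c ≤ b)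
    (hxy : b * c ≤ |x * y|) (hsum : x + y + z = e) (he : |e| ≤ c / 4) (hez : |e * z| ≤ b * c / 4)
    (hw : |w| ≤ c ^ 2 / 16) : c ^ 2 ≤ |x ^ 2 + y ^ 2 - z ^ 2 + w| := by
  have expand : x ^ 2 + y ^ 2 - z ^ 2 + w = -(2 * (e * z) - e ^ 2 - w) - 2 * (x * y) := by
    subst hsum; ring
  have he_sq : e ^ 2 ≤ c ^ 2 / 16 := by
    rw [← sq_abs, show c ^ 2 / 16 = (c / 4) ^ 2 by ring]
    gcongr
  have hcbc : c ^ 2 ≤ b * c := by rw [sq]; gcongr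
  have error : |2 * (e * z) - e ^ 2 - w| ≤ b * c := by
    rw [abs_le] at hez hw ⊢
    constructor <;> linarith [sq_nonneg e, sq_nonneg c]
  have main := abs_sub_abs_le_abs_sub (2 * (x * y)) (-(2 * (e * z) - e ^ 2 - w))
  rw [abs_mul, abs_two, abs_neg] at main
  rw [expand, abs_sub_comm]
  linarith

/-- The four members `z₀, z₁, z₂, z₃` of largest modulus, in decreasing order, of a family of reals
with sum zero; `ρ` is the sum of the `q` remaining members. -/
structure IsDominantQuadruple (q z₀ z₁ z₂ z₃ ρ : ℝ) : Prop where
  nonneg : 0 ≤ q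
  le₁₀ : |z₁| ≤ |z₀|
  le₂₁ : |z₂| ≤ |z₁|
  le₃₂ : |z₃| ≤ |z₂|
  rest_le : |ρ| ≤ q * |z₃|
  sum_eq_zero : z₀ + z₁ + z₂ + z₃ + ρ = 0

namespace IsDominantQuadruple

variable {q z₀ z₁ z₂ z₃ ρ s₀ s₁ s₂ s₃ w ω : ℝ}

lemma abs_le_mul_abs (h : IsDominantQuadruple q z₀ z₁ z₂ z₃ ρ) : |z₀| ≤ (3 + q) * |z₁| := by
  have triangle : |z₀| ≤ |z₁ + z₂| + |z₃| + |ρ| := by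
    rw [show z₀ = -(z₁ + z₂ + z₃ + ρ) by linarith [h.sum_eq_zero], abs_neg]
    exact abs_add_three _ _ _
  have := mul_le_mul_of_nonneg_left (h.le₃₂.trans h.le₂₁) h.nonneg
  linarith [abs_add_le z₁ z₂, h.le₂₁, h.le₃₂, h.rest_le]

lemma abs_add_rest_le (h : IsDominantQuadruple q z₀ z₁ z₂ z₃ ρ) :
    |-(z₃ + ρ)| ≤ (1 + q) * |z₃| := by
  rw [abs_neg]
  linarith [abs_add_le z₃ ρ, h.rest_le]

lemma mul_abs_le_quarter (h : IsDominantQuadruple q z₀ z₁ z₂ z₃ ρ)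
    (hsep : 4 * (3 + q) * (1 + q) * |z₃| ≤ |z₂|) : (1 + q) * |z₃| ≤ |z₂| / 4 := by
  have := mul_nonneg (add_nonneg zero_le_one h.nonneg) (abs_nonneg z₃)
  nlinarith [mul_nonneg h.nonneg this]

-- If two of the three largest frequencies carry the sign `+` and the third one the sign `-`, then
-- `x + y + z = O(|z₃|)` makes `x² + y² - z²` equal to `-2xy` up to a small error.
lemma sq_le_abs_of_separated (h : IsDominantQuadruple q z₀ z₁ z₂ z₃ ρ)
    (hsep : 4 * (3 + q) * (1 + q) * |z₃| ≤ |z₂|) (hw : |w| ≤ (1 + q) * |z₃| ^ 2) {x y z : ℝ}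
    (hxy : |z₁| * |z₂| ≤ |x * y|) (hz : |z| ≤ |z₀|) (hsum : x + y + z = -(z₃ + ρ)) :
    |z₂| ^ 2 ≤ |x ^ 2 + y ^ 2 - z ^ 2 + w| := by
  have hq := h.nonneg
  have quarter := h.mul_abs_le_quarter hsep
  refine sq_le_abs_sq_add_sq_sub_sq_add (abs_nonneg z₂) h.le₂₁ hxy hsum
    (h.abs_add_rest_le.trans quarter) ?_ ?_
  · rw [abs_mul]
    calc |-(z₃ + ρ)| * |z| ≤ ((1 + q) * |z₃|) * ((3 + q) * |z₁|) :=
          mul_le_mul h.abs_add_rest_le (hz.trans h.abs_le_mul_abs) (abs_nonneg _) (by positivity)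
      _ = |z₁| * (4 * (3 + q) * (1 + q) * |z₃|) / 4 := by ring
      _ ≤ |z₁| * |z₂| / 4 := by gcongr
  · calc |w| ≤ (1 + q) * |z₃| ^ 2 := hw
      _ ≤ ((1 + q) * |z₃|) ^ 2 := by
          rw [mul_pow]
          gcongr
          nlinarith
      _ ≤ (|z₂| / 4) ^ 2 := by gcongr
      _ = |z₂| ^ 2 / 16 := by ring

lemma sq_le_abs_of_first_sign_one (h : IsDominantQuadruple q z₀ z₁ z₂ z₃ ρ)
    (hsep : 4 * (3 + q) * (1 + q) * |z₃| ≤ |z₂|) (hs₁ : |s₁| = 1) (hs₂ : |s₂| = 1)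
    (hw : |w| ≤ (1 + q) * |z₃| ^ 2) : |z₂| ^ 2 ≤ |z₀ ^ 2 + s₁ * z₁ ^ 2 + s₂ * z₂ ^ 2 + w| := by
  have hsum := h.sum_eq_zero
  have h₂₀ := h.le₂₁.trans h.le₁₀
  rcases eq_or_eq_neg_of_abs_eq hs₁ with rfl | rfl <;>
    rcases eq_or_eq_neg_of_abs_eq hs₂ with rfl | rfl
  · have hw' : |w| ≤ |z₂| ^ 2 := by
      have := h.mul_abs_le_quarter hsep
      nlinarith [h.le₃₂, abs_nonneg z₃, abs_nonneg z₂]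
    refine le_trans ?_ (le_abs_self _)
    linarith [neg_abs_le w, sq_le_sq.2 h₂₀, sq_nonneg z₁, sq_abs z₂]
  · have hxy : |z₁| * |z₂| ≤ |z₀ * z₁| := by
      rw [abs_mul, mul_comm |z₀|]
      gcongr
    simpa [sub_eq_add_neg] using h.sq_le_abs_of_separated hsep hw hxy h₂₀ (by linarith)
  · have hxy : |z₁| * |z₂| ≤ |z₀ * z₂| := by
      rw [abs_mul]
      exact mul_le_mul_of_nonneg_right h.le₁₀ (abs_nonneg _)
    convert h.sq_le_abs_of_separated hsep hw hxy h.le₁₀ (by linarith) using 2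
    ring
  · rw [← abs_neg] at hw
    rw [← abs_neg (z₀ ^ 2 + _ + _ + w)]
    convert h.sq_le_abs_of_separated hsep hw (abs_mul z₁ z₂).ge le_rfl (by linarith) using 2
    ring

lemma sq_le_abs_of_signs (h : IsDominantQuadruple q z₀ z₁ z₂ z₃ ρ)
    (hsep : 4 * (3 + q) * (1 + q) * |z₃| ≤ |z₂|) (hs₀ : |s₀| = 1) (hs₁ : |s₁| = 1)
    (hs₂ : |s₂| = 1) (hw : |w| ≤ (1 + q) * |z₃| ^ 2) :
    |z₂| ^ 2 ≤ |s₀ * z₀ ^ 2 + s₁ * z₁ ^ 2 + s₂ * z₂ ^ 2 + w| := by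
  rcases eq_or_eq_neg_of_abs_eq hs₀ with rfl | rfl
  · rw [one_mul]
    exact h.sq_le_abs_of_first_sign_one hsep hs₁ hs₂ hw
  · rw [← abs_neg] at hs₁ hs₂ hw
    rw [← abs_neg (_ + _ + _ + w)]
    convert h.sq_le_abs_of_first_sign_one hsep hs₁ hs₂ hw using 2
    ring

lemma sq_le_mul_abs_resonance_add (h : IsDominantQuadruple q z₀ z₁ z₂ z₃ ρ) (hs₀ : |s₀| = 1)
    (hs₁ : |s₁| = 1) (hs₂ : |s₂| = 1) (hs₃ : |s₃| = 1) (hω : |ω| ≤ q * |z₃| ^ 2) :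
    |z₂| ^ 2 ≤ 4 * (3 + q) * (1 + q) *
      (|s₀ * z₀ ^ 2 + s₁ * z₁ ^ 2 + s₂ * z₂ ^ 2 + s₃ * z₃ ^ 2 + ω| + |z₂| * |z₃|) := by
  have hq := h.nonneg
  set Ω := s₀ * z₀ ^ 2 + s₁ * z₁ ^ 2 + s₂ * z₂ ^ 2 + s₃ * z₃ ^ 2 + ω with hΩ
  rcases le_total (4 * (3 + q) * (1 + q) * |z₃|) |z₂| with hsep | hclose
  · have hw : |s₃ * z₃ ^ 2 + ω| ≤ (1 + q) * |z₃| ^ 2 := by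
      have := abs_add_le (s₃ * z₃ ^ 2) ω
      rw [abs_mul, hs₃, abs_pow] at this
      linarith
    have := h.sq_le_abs_of_signs hsep hs₀ hs₁ hs₂ hw
    rw [← add_assoc, ← hΩ] at this
    have : (1 : ℝ) ≤ 4 * (3 + q) * (1 + q) := by nlinarith
    nlinarith [mul_nonneg (abs_nonneg z₂) (abs_nonneg z₃), abs_nonneg Ω]
  · calc |z₂| ^ 2 = |z₂| * |z₂| := sq _
      _ ≤ |z₂| * (4 * (3 + q) * (1 + q) * |z₃|) := by gcongr
      _ = 4 * (3 + q) * (1 + q) * (|z₂| * |z₃|) := by ring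
      _ ≤ _ := by
          gcongr
          exact le_add_of_nonneg_left (abs_nonneg _)

lemma abs_first_two_le (h : IsDominantQuadruple q z₀ z₁ z₂ z₃ ρ) (hs₂ : |s₂| = 1)
    (hs₃ : |s₃| = 1) (hω : |ω| ≤ q * |z₃| ^ 2) : |s₀ * z₀ ^ 2 + s₁ * z₁ ^ 2| ≤
      |s₀ * z₀ ^ 2 + s₁ * z₁ ^ 2 + s₂ * z₂ ^ 2 + s₃ * z₃ ^ 2 + ω| + (2 + q) * |z₂| ^ 2 := by
  have hsq : |z₃| ^ 2 ≤ |z₂| ^ 2 := pow_le_pow_left₀ (abs_nonneg _) h.le₃₂ 2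
  have rest := abs_add_three (s₂ * z₂ ^ 2) (s₃ * z₃ ^ 2) ω
  rw [abs_mul, abs_mul, hs₂, hs₃, one_mul, one_mul, abs_pow, abs_pow] at rest
  have triangle := abs_sub_abs_le_abs_sub (s₀ * z₀ ^ 2 + s₁ * z₁ ^ 2)
    (-(s₂ * z₂ ^ 2 + s₃ * z₃ ^ 2 + ω))
  rw [abs_neg, sub_neg_eq_add, ← add_assoc, ← add_assoc] at triangle
  linarith [mul_le_mul_of_nonneg_left hsq h.nonneg]

end IsDominantQuadruple

lemma abs_sign_mul_pow_add_le {a b s t : ℝ} (κ : ℕ) (hb : 0 ≤ b) (hba : b ≤ a) (hs : |s| = 1)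
    (ht : |t| = 1) :
    |s * a ^ (κ + 1) + t * b ^ (κ + 1)| ≤ (κ + 1) * a ^ κ * |s * a + t * b| := by
  have ha := hb.trans hba
  have factor (x y : ℝ) : |s * x + s * y| = |x + y| := by rw [← mul_add, abs_mul, hs, one_mul]
  have factor_neg (x y : ℝ) : |s * x + -s * y| = |x - y| := by
    rw [neg_mul, ← sub_eq_add_neg, ← mul_sub, abs_mul, hs, one_mul]
  rcases abs_eq_abs.1 (ht.trans hs.symm) with rfl | rfl
  · rw [factor, factor, abs_of_nonneg (by positivity), abs_of_nonneg (by positivity)]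
    calc a ^ (κ + 1) + b ^ (κ + 1) = a ^ κ * a + b ^ κ * b := by ring
      _ ≤ a ^ κ * a + a ^ κ * b := by gcongr
      _ = 1 * a ^ κ * (a + b) := by ring
      _ ≤ (κ + 1) * a ^ κ * (a + b) := by gcongr; linarith [κ.cast_nonneg (α := ℝ)]
  · rw [factor_neg, factor_neg]
    refine (abs_pow_sub_pow_le a b (κ + 1)).trans_eq ?_
    rw [abs_of_nonneg ha, abs_of_nonneg hb, max_eq_left hba, Nat.add_sub_cancel]
    push_cast
    ring

/-- Constant of the pointwise bound for the energy symbol of order `κ + 1` with `q` small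
frequencies. -/
def symbolConst (κ : ℕ) (q : ℝ) : ℝ :=
  (κ + 2) * (2 + q) * (1 + 4 * (3 + q) * (1 + q)) * (3 + q) ^ κ

lemma symbolConst_nonneg (κ q : ℕ) : 0 ≤ symbolConst κ q := by
  unfold symbolConst
  positivity

namespace IsDominantQuadruple

variable {q z₀ z₁ z₂ z₃ ρ s₀ s₁ s₂ s₃ ω η : ℝ}

lemma pow_le_pow_mul_sq (h : IsDominantQuadruple q z₀ z₁ z₂ z₃ ρ) (κ : ℕ) {y : ℝ} (hy : 0 ≤ y)
    (hyz : y ≤ |z₂|) : y ^ (2 * (κ + 1)) ≤ |z₀| ^ (2 * κ) * |z₂| ^ 2 := by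
  have := hyz.trans (h.le₂₁.trans h.le₁₀)
  rw [mul_add, pow_add, mul_one]
  gcongr

lemma abs_symbol_le_of_first_two (h : IsDominantQuadruple q z₀ z₁ z₂ z₃ ρ) (κ : ℕ)
    (hs₀ : |s₀| = 1) (hs₁ : |s₁| = 1) (hs₂ : |s₂| = 1) (hs₃ : |s₃| = 1)
    (hη : |η| ≤ q * |z₃| ^ (2 * (κ + 1))) :
    |s₀ * z₀ ^ (2 * (κ + 1)) + s₁ * z₁ ^ (2 * (κ + 1)) + s₂ * z₂ ^ (2 * (κ + 1)) +
        s₃ * z₃ ^ (2 * (κ + 1)) + η| ≤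
      |z₀| ^ (2 * κ) * ((κ + 1) * |s₀ * z₀ ^ 2 + s₁ * z₁ ^ 2| + (2 + q) * |z₂| ^ 2) := by
  have first_two := abs_sign_mul_pow_add_le κ (sq_nonneg z₁) (sq_le_sq.2 h.le₁₀) hs₀ hs₁
  rw [← pow_mul, ← pow_mul, ← pow_mul, ← (even_two_mul κ).pow_abs] at first_two
  have triangle := abs_add_le (s₀ * z₀ ^ (2 * (κ + 1)) + s₁ * z₁ ^ (2 * (κ + 1)) +
    s₂ * z₂ ^ (2 * (κ + 1)) + s₃ * z₃ ^ (2 * (κ + 1))) η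
  have triangle' := abs_add_three (s₀ * z₀ ^ (2 * (κ + 1)) + s₁ * z₁ ^ (2 * (κ + 1)))
    (s₂ * z₂ ^ (2 * (κ + 1))) (s₃ * z₃ ^ (2 * (κ + 1)))
  rw [abs_mul s₂, abs_mul s₃, hs₂, hs₃, abs_pow z₂, abs_pow z₃] at triangle'
  have third := h.pow_le_pow_mul_sq κ (abs_nonneg z₂) le_rfl
  have fourth := h.pow_le_pow_mul_sq κ (abs_nonneg z₃) h.le₃₂
  have rest := mul_le_mul_of_nonneg_left fourth h.nonneg
  linarith

lemma abs_symbol_le (h : IsDominantQuadruple q z₀ z₁ z₂ z₃ ρ) (κ : ℕ)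
    (hs₀ : |s₀| = 1) (hs₁ : |s₁| = 1) (hs₂ : |s₂| = 1) (hs₃ : |s₃| = 1)
    (hω : |ω| ≤ q * |z₃| ^ 2) (hη : |η| ≤ q * |z₃| ^ (2 * (κ + 1))) :
    |s₀ * z₀ ^ (2 * (κ + 1)) + s₁ * z₁ ^ (2 * (κ + 1)) + s₂ * z₂ ^ (2 * (κ + 1)) +
        s₃ * z₃ ^ (2 * (κ + 1)) + η| ≤ symbolConst κ q * (|z₀| ^ κ * |z₁| ^ κ) *
      (|s₀ * z₀ ^ 2 + s₁ * z₁ ^ 2 + s₂ * z₂ ^ 2 + s₃ * z₃ ^ 2 + ω| + |z₂| * |z₃|) := by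
  have hq := h.nonneg
  have first_two := h.abs_first_two_le (s₀ := s₀) (s₁ := s₁) hs₂ hs₃ hω
  have third := h.sq_le_mul_abs_resonance_add hs₀ hs₁ hs₂ hs₃ hω
  refine (h.abs_symbol_le_of_first_two κ hs₀ hs₁ hs₂ hs₃ hη).trans ?_
  set Ω := s₀ * z₀ ^ 2 + s₁ * z₁ ^ 2 + s₂ * z₂ ^ 2 + s₃ * z₃ ^ 2 + ω
  set S := |Ω| + |z₂| * |z₃|
  have hΩS : |Ω| ≤ S := le_add_of_nonneg_right (by positivity)
  have hpow : |z₀| ^ (2 * κ) ≤ (3 + q) ^ κ * (|z₀| ^ κ * |z₁| ^ κ) := by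
    calc |z₀| ^ (2 * κ) = |z₀| ^ κ * |z₀| ^ κ := by rw [two_mul, pow_add]
      _ ≤ |z₀| ^ κ * ((3 + q) * |z₁|) ^ κ := by gcongr; exact h.abs_le_mul_abs
      _ = _ := by rw [mul_pow]; ring
  calc _ ≤ |z₀| ^ (2 * κ) * ((κ + 1) * (|Ω| + (2 + q) * |z₂| ^ 2) + (2 + q) * |z₂| ^ 2) := by
        gcongr
    _ = |z₀| ^ (2 * κ) * ((κ + 1) * |Ω| + (κ + 2) * (2 + q) * |z₂| ^ 2) := by ring
    _ ≤ |z₀| ^ (2 * κ) * ((κ + 2) * (2 + q) * S +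
          (κ + 2) * (2 + q) * (4 * (3 + q) * (1 + q) * S)) := by
        gcongr
        nlinarith [mul_nonneg (κ.cast_nonneg (α := ℝ)) hq]
    _ = (κ + 2) * (2 + q) * (1 + 4 * (3 + q) * (1 + q)) * S * |z₀| ^ (2 * κ) := by ring
    _ ≤ (κ + 2) * (2 + q) * (1 + 4 * (3 + q) * (1 + q)) * S *
          ((3 + q) ^ κ * (|z₀| ^ κ * |z₁| ^ κ)) := by gcongr
    _ = _ := by unfold symbolConst; ring

end IsDominantQuadruple

/-! ### The multilinear estimate -/

lemma tsum_pi_prod_eq_pow (q : ℕ) (B : ℤ → ℝ≥0∞) :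
    ∑' r : Fin q → ℤ, ∏ j, B (r j) = (∑' n, B n) ^ q := by
  induction q with
  | zero => simp
  | succ q ih =>
    rw [← (Fin.consEquiv (fun _ => ℤ)).tsum_eq, ENNReal.tsum_prod']
    simp only [Fin.consEquiv_apply, Fin.prod_univ_succ, Fin.cons_zero, Fin.cons_succ]
    simp_rw [ENNReal.tsum_mul_left, ENNReal.tsum_mul_right, ih]
    rw [pow_succ, mul_comm]

/-- The resonance function `∑ σᵢ nᵢ²` of waves with frequencies `n` and signs `σ`. -/
def resonance {ι : Type*} [Fintype ι] (σ n : ι → ℤ) : ℤ := ∑ i, σ i * n i ^ 2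

/-- The symbol `∑ σᵢ nᵢ^(2(κ + 1))` of the time derivative of the homogeneous Sobolev norm of order
`κ + 1`. -/
def energySymbol {ι : Type*} [Fintype ι] (κ : ℕ) (σ n : ι → ℤ) : ℤ :=
  ∑ i, σ i * n i ^ (2 * (κ + 1))

/-- The modulus of a frequency as an extended nonnegative real, the scalars of the multilinear
estimate. -/
def absWeight (n : ℤ) : ℝ≥0∞ := ENNReal.ofReal |(n : ℝ)|

/-- Coordinates of four integers as two pairs. -/
def finFourArrowEquiv : (Fin 4 → ℤ) ≃ (ℤ × ℤ) × (ℤ × ℤ) where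
  toFun x := ((x 0, x 1), (x 2, x 3))
  invFun y := ![y.1.1, y.1.2, y.2.1, y.2.2]
  left_inv x := by funext i; fin_cases i <;> rfl
  right_inv _ := rfl

section Reindexing

variable {ι : Type*} {q : ℕ} (e : Fin 4 ⊕ Fin q ≃ ι)

/-- The frequency tuple whose four distinguished entries are those of the pairs `P` and `R` and
whose remaining entries are given by `r`. -/
def tupleOfPairs (P R : ℤ × ℤ) (r : Fin q → ℤ) : ι → ℤ :=
  fun i => Sum.elim ![P.1, P.2, R.1, R.2] r (e.symm i)

lemma tupleOfPairs_inl (P R : ℤ × ℤ) (r : Fin q → ℤ) (i : Fin 4) :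
    tupleOfPairs e P R r (e (.inl i)) = ![P.1, P.2, R.1, R.2] i := by
  rw [tupleOfPairs, e.symm_apply_apply, Sum.elim_inl]

lemma tupleOfPairs_inr (P R : ℤ × ℤ) (r : Fin q → ℤ) (j : Fin q) :
    tupleOfPairs e P R r (e (.inr j)) = r j := by
  rw [tupleOfPairs, e.symm_apply_apply, Sum.elim_inr]

lemma tsum_eq_tsum_tupleOfPairs (Φ : (ι → ℤ) → ℝ≥0∞) :
    ∑' n, Φ n = ∑' r : Fin q → ℤ, ∑' P : ℤ × ℤ, ∑' R : ℤ × ℤ, Φ (tupleOfPairs e P R r) := by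
  let E : ((ℤ × ℤ) × (ℤ × ℤ)) × (Fin q → ℤ) ≃ (ι → ℤ) :=
    (Equiv.prodCongr finFourArrowEquiv.symm (Equiv.refl _)).trans
      ((Equiv.sumArrowEquivProdArrow (Fin 4) (Fin q) ℤ).symm.trans
        (Equiv.arrowCongr e (Equiv.refl ℤ)))
  rw [← E.tsum_eq, ENNReal.tsum_prod', ENNReal.tsum_comm]
  refine tsum_congr fun r => ?_
  rw [ENNReal.tsum_prod']
  rfl

variable [Fintype ι]

lemma sum_eq_four_add_sum {M : Type*} [AddCommMonoid M] (h : ι → M) :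
    ∑ i, h i = h (e (.inl 0)) + h (e (.inl 1)) + h (e (.inl 2)) + h (e (.inl 3)) +
      ∑ j, h (e (.inr j)) := by
  rw [← e.sum_comp, Fintype.sum_sum_type, Fin.sum_univ_four]

lemma prod_eq_prod_four_mul_prod {M : Type*} [CommMonoid M] (h : ι → M) :
    ∏ i, h i = (∏ i, h (e (.inl i))) * ∏ j, h (e (.inr j)) := by
  rw [← e.prod_comp, Fintype.prod_sum_type]

lemma sum_tupleOfPairs (P R : ℤ × ℤ) (r : Fin q → ℤ) :
    ∑ i, tupleOfPairs e P R r i = P.1 + P.2 + R.1 + R.2 + ∑ j, r j := by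
  simp [sum_eq_four_add_sum e, tupleOfPairs_inl, tupleOfPairs_inr]

lemma resonance_tupleOfPairs (σ : ι → ℤ) (hσ : σ (e (.inl 0)) = σ (e (.inl 1))) (P R : ℤ × ℤ)
    (r : Fin q → ℤ) : resonance σ (tupleOfPairs e P R r) =
      pairResonance (σ (e (.inl 0))) (σ (e (.inl 2))) (σ (e (.inl 3)))
        (∑ j, σ (e (.inr j)) * r j ^ 2) P R := by
  simp [resonance, sum_eq_four_add_sum e, tupleOfPairs_inl, tupleOfPairs_inr, pairResonance, hσ]

lemma tsum_four_mul_resonanceWeight_le_of_sign_eq {σ : ι → ℤ} (hσ : ∀ i, σ i = 1 ∨ σ i = -1)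
    (f : Fin 4 → ℤ → ℝ≥0∞) (B : ℤ → ℝ≥0∞) {K : ℝ≥0∞}
    (hK : quadrilinearConst * ∏ i, ∑' n, f i n ^ 2 ≤ K ^ 2)
    (h₀₁ : σ (e (.inl 0)) = σ (e (.inl 1))) :
    ∑' n : ι → ℤ, (if ∑ i, n i = 0 then (∏ i, f i (n (e (.inl i)))) *
      (∏ j, B (n (e (.inr j)))) * resonanceWeight 1 (resonance σ n) else 0) ≤
        K * (∑' n, B n) ^ q := by
  rw [tsum_eq_tsum_tupleOfPairs e, ← tsum_pi_prod_eq_pow, ← ENNReal.tsum_mul_left]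
  refine ENNReal.tsum_le_tsum fun r => ?_
  have four := sq_tsum_resonanceWeight_mul_le (hσ (e (.inl 0))) (hσ (e (.inl 2)))
    (hσ (e (.inl 3))) (f 0) (f 1) (f 2) (f 3) (-∑ j, r j) (∑ j, σ (e (.inr j)) * r j ^ 2)
  rw [Fin.prod_univ_four, mul_assoc (_ * _)] at hK
  have four' := (ENNReal.pow_le_pow_left_iff two_ne_zero).1 (four.trans hK)
  rw [mul_comm K]
  refine le_trans (le_of_eq ?_) (mul_le_mul_right four' (∏ j, B (r j)))
  simp_rw [← ENNReal.tsum_mul_left]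
  refine tsum_congr fun P => tsum_congr fun R => ?_
  rw [sum_tupleOfPairs, resonance_tupleOfPairs e σ h₀₁, mul_ite, mul_zero]
  refine if_congr (by omega) ?_ rfl
  simp only [tupleOfPairs_inl, tupleOfPairs_inr, Fin.prod_univ_four, Matrix.cons_val_zero,
    Matrix.cons_val_one, Matrix.cons_val]
  ring

lemma exists_perm_sign_eq {s : Fin 4 → ℤ} (hs : ∀ i, s i = 1 ∨ s i = -1) :
    ∃ τ : Equiv.Perm (Fin 4), s (τ 0) = s (τ 1) := by
  by_cases h₀₁ : s 0 = s 1
  · exact ⟨Equiv.refl _, h₀₁⟩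
  by_cases h₀₂ : s 0 = s 2
  · exact ⟨Equiv.swap 1 2, by simpa [Equiv.swap_apply_of_ne_of_ne] using h₀₂⟩
  · have h₂₁ : s 2 = s 1 := by
      have := hs 0; have := hs 1; have := hs 2
      omega
    exact ⟨Equiv.swap 0 2, by simpa [Equiv.swap_apply_of_ne_of_ne] using h₂₁⟩

lemma tsum_four_mul_resonanceWeight_le {σ : ι → ℤ} (hσ : ∀ i, σ i = 1 ∨ σ i = -1)
    (f : Fin 4 → ℤ → ℝ≥0∞) (B : ℤ → ℝ≥0∞) {K : ℝ≥0∞}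
    (hK : quadrilinearConst * ∏ i, ∑' n, f i n ^ 2 ≤ K ^ 2) :
    ∑' n : ι → ℤ, (if ∑ i, n i = 0 then (∏ i, f i (n (e (.inl i)))) *
      (∏ j, B (n (e (.inr j)))) * resonanceWeight 1 (resonance σ n) else 0) ≤
        K * (∑' n, B n) ^ q := by
  obtain ⟨τ, hτ⟩ := exists_perm_sign_eq fun i => hσ (e (.inl i))
  have permuted := tsum_four_mul_resonanceWeight_le_of_sign_eq
    ((Equiv.sumCongr τ (Equiv.refl _)).trans e) hσ (fun i => f (τ i)) B
    (hK.trans_eq' (by rw [Equiv.prod_comp τ (fun i => ∑' n, f i n ^ 2)])) hτ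
  refine le_trans (le_of_eq (tsum_congr fun n => ?_)) permuted
  simp only [Equiv.trans_apply, Equiv.sumCongr_apply, Sum.map_inl, Sum.map_inr, Equiv.refl_apply]
  rw [Equiv.prod_comp τ (fun i => f i (n (e (.inl i))))]

lemma tsum_two_mul_le (f B : ℤ → ℝ≥0∞) :
    ∑' n : ι → ℤ, (if ∑ i, n i = 0 then f (n (e (.inl 0))) * f (n (e (.inl 1))) *
      (B (n (e (.inl 2))) * B (n (e (.inl 3)))) * (∏ j, B (n (e (.inr j)))) else 0) ≤
        (∑' n, f n ^ 2) * (∑' n, B n) ^ (2 + q) := by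
  have rhs : (∑' n, f n ^ 2) * (∑' n, B n) ^ (2 + q) = ∑' r : Fin q → ℤ, ∑' R : ℤ × ℤ,
      (∑' n, f n ^ 2) * ((B R.1 * B R.2) * ∏ j, B (r j)) := by
    simp_rw [ENNReal.tsum_mul_left, ENNReal.tsum_mul_right, ENNReal.tsum_mul_left,
      tsum_pi_prod_eq_pow]
    rw [ENNReal.tsum_prod (f := fun a b => B a * B b)]
    simp_rw [ENNReal.tsum_mul_left, ENNReal.tsum_mul_right]
    rw [pow_add, sq]
  rw [tsum_eq_tsum_tupleOfPairs e, rhs]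
  refine ENNReal.tsum_le_tsum fun r => ?_
  rw [ENNReal.tsum_comm]
  refine ENNReal.tsum_le_tsum fun R => ?_
  have pair := sq_tsum_ite_add_eq_mul_le f f (-(R.1 + R.2 + ∑ j, r j))
  rw [← sq] at pair
  refine le_trans (le_of_eq ?_) (mul_le_mul_left
    ((ENNReal.pow_le_pow_left_iff two_ne_zero).1 pair) ((B R.1 * B R.2) * ∏ j, B (r j)))
  rw [← ENNReal.tsum_mul_right]
  refine tsum_congr fun P => ?_
  rw [sum_tupleOfPairs, ite_mul, zero_mul]
  refine if_congr (by omega) ?_ rfl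
  simp only [tupleOfPairs_inl, tupleOfPairs_inr, Matrix.cons_val_zero, Matrix.cons_val_one,
    Matrix.cons_val]
  ring

end Reindexing

section Symbol

variable {ι : Type*} [Fintype ι] {q : ℕ}

lemma exists_equiv_natAbs_sorted (hcard : Fintype.card ι = 4 + q) (n : ι → ℤ) :
    ∃ e : Fin 4 ⊕ Fin q ≃ ι, (n (e (.inl 1))).natAbs ≤ (n (e (.inl 0))).natAbs ∧
      (n (e (.inl 2))).natAbs ≤ (n (e (.inl 1))).natAbs ∧
      (n (e (.inl 3))).natAbs ≤ (n (e (.inl 2))).natAbs ∧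
      ∀ j, (n (e (.inr j))).natAbs ≤ (n (e (.inl 3))).natAbs := by
  let e₀ : Fin (4 + q) ≃ ι := (Fintype.equivFinOfCardEq hcard).symm
  let g : Fin (4 + q) → ℕᵒᵈ := fun i => OrderDual.toDual (n (e₀ i)).natAbs
  have sorted (i j : Fin (4 + q)) (hij : i ≤ j) : (n (e₀ (Tuple.sort g j))).natAbs ≤
      (n (e₀ (Tuple.sort g i))).natAbs := Tuple.monotone_sort g hij
  refine ⟨finSumFinEquiv.trans ((Tuple.sort g).trans e₀), sorted _ _ ?_, sorted _ _ ?_,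
    sorted _ _ ?_, fun j => sorted _ _ ?_⟩
  · simp [Fin.le_def]
  · simp [Fin.le_def]
  · simp [Fin.le_def]
  · simp only [finSumFinEquiv_apply_left, finSumFinEquiv_apply_right, Fin.le_def,
      Fin.val_castAdd, Fin.val_natAdd]
    omega

lemma abs_intCast_le_of_natAbs_le {a b : ℤ} (h : a.natAbs ≤ b.natAbs) :
    |(a : ℝ)| ≤ |(b : ℝ)| := by
  rw [← Int.cast_abs, ← Int.cast_abs, Int.cast_le, Int.abs_eq_natAbs, Int.abs_eq_natAbs]
  exact_mod_cast h

lemma abs_sign_sum_pow_le {σ r : Fin q → ℤ} (hσ : ∀ j, |(σ j : ℝ)| = 1) {d : ℝ}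
    (hr : ∀ j, |(r j : ℝ)| ≤ d) (N : ℕ) : |∑ j, (σ j : ℝ) * (r j : ℝ) ^ N| ≤ q * d ^ N := by
  calc |∑ j, (σ j : ℝ) * (r j : ℝ) ^ N| ≤ ∑ j, |(σ j : ℝ) * (r j : ℝ) ^ N| :=
        Finset.abs_sum_le_sum_abs _ _
    _ ≤ ∑ _j : Fin q, d ^ N := by
        gcongr with j
        rw [abs_mul, hσ, one_mul, abs_pow]
        gcongr
        exact hr j
    _ = q * d ^ N := by simp

lemma exists_equiv_abs_energySymbol_le (κ : ℕ) (hcard : Fintype.card ι = 4 + q) {σ : ι → ℤ}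
    (hσ : ∀ i, σ i = 1 ∨ σ i = -1) {n : ι → ℤ} (hn : ∑ i, n i = 0) :
    ∃ e : Fin 4 ⊕ Fin q ≃ ι, |(energySymbol κ σ n : ℝ)| ≤ symbolConst κ q *
      (|(n (e (.inl 0)) : ℝ)| ^ κ * |(n (e (.inl 1)) : ℝ)| ^ κ) *
      (|(resonance σ n : ℝ)| + |(n (e (.inl 2)) : ℝ)| * |(n (e (.inl 3)) : ℝ)|) := by
  obtain ⟨e, h₁₀, h₂₁, h₃₂, hrest⟩ := exists_equiv_natAbs_sorted hcard n
  have hσ' (i : ι) : |(σ i : ℝ)| = 1 := by rcases hσ i with h | h <;> simp [h]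
  have small (j : Fin q) := abs_intCast_le_of_natAbs_le (hrest j)
  have dominant : IsDominantQuadruple q (n (e (.inl 0))) (n (e (.inl 1))) (n (e (.inl 2)))
      (n (e (.inl 3))) (∑ j, (n (e (.inr j)) : ℝ)) :=
    { nonneg := q.cast_nonneg
      le₁₀ := abs_intCast_le_of_natAbs_le h₁₀
      le₂₁ := abs_intCast_le_of_natAbs_le h₂₁
      le₃₂ := abs_intCast_le_of_natAbs_le h₃₂
      rest_le := by simpa using abs_sign_sum_pow_le (σ := fun _ => 1) (by simp) small 1
      sum_eq_zero := by rw [sum_eq_four_add_sum e] at hn; exact_mod_cast hn }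
  have rest_pow := abs_sign_sum_pow_le (fun j => hσ' (e (.inr j))) small
  have key := dominant.abs_symbol_le κ (hσ' (e (.inl 0))) (hσ' (e (.inl 1))) (hσ' (e (.inl 2)))
    (hσ' (e (.inl 3))) (rest_pow 2) (rest_pow (2 * (κ + 1)))
  refine ⟨e, ?_⟩
  rw [energySymbol, resonance, sum_eq_four_add_sum e, sum_eq_four_add_sum e]
  push_cast
  exact key

/-- The multiplier which dominates the energy symbol divided by the resonance function at those
frequency tuples whose four largest entries, in decreasing order, are the first four in the ordering
`e`. -/
def dominantMultiplier (κ : ℕ) (σ : ι → ℤ) (e : Fin 4 ⊕ Fin q ≃ ι) (n : ι → ℤ) : ℝ≥0∞ :=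
  absWeight (n (e (.inl 0))) ^ κ * absWeight (n (e (.inl 1))) ^ κ *
    (1 + absWeight (n (e (.inl 2))) * absWeight (n (e (.inl 3))) *
      resonanceWeight 1 (resonance σ n))

lemma exists_equiv_energySymbol_mul_resonanceWeight_le (κ : ℕ) (hcard : Fintype.card ι = 4 + q)
    {σ : ι → ℤ} (hσ : ∀ i, σ i = 1 ∨ σ i = -1) {n : ι → ℤ} (hn : ∑ i, n i = 0) :
    ∃ e : Fin 4 ⊕ Fin q ≃ ι, ENNReal.ofReal |(energySymbol κ σ n : ℝ)| *
      resonanceWeight 1 (resonance σ n) ≤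
        ENNReal.ofReal (symbolConst κ q) * dominantMultiplier κ σ e n := by
  obtain ⟨e, he⟩ := exists_equiv_abs_energySymbol_le κ hcard hσ hn
  refine ⟨e, ?_⟩
  have hC := symbolConst_nonneg κ q
  unfold dominantMultiplier absWeight
  rw [resonanceWeight_one, ← ENNReal.ofReal_mul (abs_nonneg _), ← ENNReal.ofReal_one,
    ← ENNReal.ofReal_mul (abs_nonneg _), ← ENNReal.ofReal_mul (by positivity),
    ← ENNReal.ofReal_add zero_le_one (by positivity), ← ENNReal.ofReal_pow (abs_nonneg _),
    ← ENNReal.ofReal_pow (abs_nonneg _), ← ENNReal.ofReal_mul (by positivity),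
    ← ENNReal.ofReal_mul (by positivity), ← ENNReal.ofReal_mul hC]
  refine ENNReal.ofReal_le_ofReal ?_
  set a := |(n (e (.inl 0)) : ℝ)| ^ κ * |(n (e (.inl 1)) : ℝ)| ^ κ
  set b := |(n (e (.inl 2)) : ℝ)| * |(n (e (.inl 3)) : ℝ)|
  set Ω := |(resonance σ n : ℝ)|
  calc _ ≤ symbolConst κ q * a * (Ω + b) * (1 + Ω)⁻¹ := by gcongr
    _ = symbolConst κ q * (a * (Ω * (1 + Ω)⁻¹ + b * (1 + Ω)⁻¹)) := by ring
    _ ≤ symbolConst κ q * (a * (1 + b * (1 + Ω)⁻¹)) := by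
        gcongr
        exact mul_inv_le_one_of_le₀ (by linarith) (by positivity)

lemma tsum_dominantMultiplier_mul_prod_le (κ : ℕ) {σ : ι → ℤ} (hσ : ∀ i, σ i = 1 ∨ σ i = -1)
    (e : Fin 4 ⊕ Fin q ≃ ι) (A : ℤ → ℝ≥0∞) :
    ∑' n : ι → ℤ, (if ∑ i, n i = 0 then dominantMultiplier κ σ e n * ∏ i, A (n i) else 0) ≤
      (quadrilinearConst + 1) *
        ((∑' n, (absWeight n ^ κ * A n) ^ 2) * (∑' n, A n) ^ (2 + q) +
          (∑' n, (absWeight n ^ κ * A n) ^ 2) * (∑' n, (absWeight n * A n) ^ 2) *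
            (∑' n, A n) ^ q) := by
  set X := ∑' n, (absWeight n ^ κ * A n) ^ 2
  set Y := ∑' n, (absWeight n * A n) ^ 2
  set L := ∑' n, A n
  set g : ℤ → ℝ≥0∞ := fun n => absWeight n ^ κ * A n
  set h : ℤ → ℝ≥0∞ := fun n => absWeight n * A n
  have nonresonant := tsum_two_mul_le e g A
  have hK : quadrilinearConst * ∏ i, ∑' n, (![g, g, h, h] i n) ^ 2 ≤
      ((quadrilinearConst + 1) * (X * Y)) ^ 2 := by
    have hq : quadrilinearConst ≤ (quadrilinearConst + 1) ^ 2 :=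
      le_self_add.trans (le_self_pow₀ le_add_self two_ne_zero)
    calc _ = quadrilinearConst * (X * Y) ^ 2 := by
          simp only [Fin.prod_univ_four, Matrix.cons_val_zero, Matrix.cons_val_one,
            Matrix.cons_val]
          ring
      _ ≤ _ := by rw [mul_pow (quadrilinearConst + 1)]; gcongr
  have resonant := tsum_four_mul_resonanceWeight_le e hσ ![g, g, h, h] A hK
  calc _ = _ := tsum_congr fun n => ?_
    _ ≤ _ := (ENNReal.tsum_add).trans_le (add_le_add nonresonant resonant)
    _ ≤ _ := by
        rw [mul_add, ← mul_assoc _ (X * Y)]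
        exact add_le_add (le_mul_of_one_le_left' le_add_self) le_rfl
  rw [← ite_add_zero]
  refine if_congr Iff.rfl ?_ rfl
  simp only [dominantMultiplier, prod_eq_prod_four_mul_prod e, Fin.prod_univ_four,
    Matrix.cons_val_zero, Matrix.cons_val_one, Matrix.cons_val, g, h]
  ring

/-- Constant of the multilinear estimate; the factorial counts the orderings of the `4 + q`
frequencies. -/
def multilinearConst (κ q : ℕ) : ℝ≥0∞ :=
  (4 + q).factorial * (ENNReal.ofReal (symbolConst κ q) * (quadrilinearConst + 1))

lemma multilinearConst_ne_top (κ q : ℕ) : multilinearConst κ q ≠ ⊤ := by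
  have := quadrilinearConst_ne_top
  unfold multilinearConst
  finiteness

lemma tsum_energySymbol_mul_resonanceWeight_mul_prod_le (κ : ℕ) (hcard : Fintype.card ι = 4 + q)
    {σ : ι → ℤ} (hσ : ∀ i, σ i = 1 ∨ σ i = -1) (A : ℤ → ℝ≥0∞) :
    ∑' n : ι → ℤ, (if ∑ i, n i = 0 then ENNReal.ofReal |(energySymbol κ σ n : ℝ)| *
      resonanceWeight 1 (resonance σ n) * ∏ i, A (n i) else 0) ≤
      multilinearConst κ q * ((∑' n, (absWeight n ^ κ * A n) ^ 2) * (∑' n, A n) ^ (2 + q) +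
        (∑' n, (absWeight n ^ κ * A n) ^ 2) * (∑' n, (absWeight n * A n) ^ 2) *
          (∑' n, A n) ^ q) := by
  classical
  set C := ENNReal.ofReal (symbolConst κ q)
  have pointwise (n : ι → ℤ) : (if ∑ i, n i = 0 then ENNReal.ofReal |(energySymbol κ σ n : ℝ)| *
      resonanceWeight 1 (resonance σ n) * ∏ i, A (n i) else 0) ≤ ∑ e : Fin 4 ⊕ Fin q ≃ ι,
        C * if ∑ i, n i = 0 then dominantMultiplier κ σ e n * ∏ i, A (n i) else 0 := by
    split_ifs with hn
    · obtain ⟨e, he⟩ := exists_equiv_energySymbol_mul_resonanceWeight_le κ hcard hσ hn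
      refine le_trans ?_ (Finset.single_le_sum (fun _ _ => zero_le) (Finset.mem_univ e))
      rw [← mul_assoc]
      gcongr
    · exact zero_le
  have card_equiv : Fintype.card (Fin 4 ⊕ Fin q ≃ ι) = (4 + q).factorial := by
    rw [Fintype.card_equiv (finSumFinEquiv.trans (Fintype.equivFinOfCardEq hcard).symm),
      Fintype.card_sum, Fintype.card_fin, Fintype.card_fin]
  refine (ENNReal.tsum_le_tsum pointwise).trans ?_
  rw [Summable.tsum_finsetSum (fun _ _ => ENNReal.summable)]
  simp_rw [ENNReal.tsum_mul_left]
  refine (Finset.sum_le_card_nsmul _ _ _ fun e _ => mul_le_mul_right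
    (tsum_dominantMultiplier_mul_prod_le κ hσ e A) C).trans_eq ?_
  rw [Finset.card_univ, card_equiv, nsmul_eq_mul, multilinearConst]
  ring

end Symbol

/-! ### Symmetrised multilinear expansion of the energy derivative -/

/-- Index set of the `2 (p + 1)` factors of the symmetrised nonlinearity: the left copy indexes the
factors `u`, the right copy the factors `conj u`. -/
abbrev SlotIndex (p : ℕ) := Fin (p + 1) ⊕ Fin (p + 1)

/-- Sign of the phase of each factor: `1` for `u` and `-1` for `conj u`. -/
def slotSign (p : ℕ) : SlotIndex p → ℤ := Sum.elim (fun _ => 1) (fun _ => -1)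

lemma slotSign_eq_one_or (p : ℕ) (i : SlotIndex p) : slotSign p i = 1 ∨ slotSign p i = -1 := by
  rcases i with _ | _ <;> simp [slotSign]

lemma card_slotIndex (p : ℕ) : (Fintype.card (SlotIndex p) : ℝ) = 2 * p + 2 := by
  rw [Fintype.card_sum, Fintype.card_fin]
  push_cast
  ring

/-- The factor contributed by `f` to the slot `i`: `f` or `conj f`. -/
def slotFunction {p : ℕ} (i : SlotIndex p) (f : ℝ → ℂ) : ℝ → ℂ :=
  Sum.elim (fun _ => f) (fun _ x => starRingEnd ℂ (f x)) i

/-- Fourier coefficients of the factor in the slot `i`. -/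
def slotCoeff {p : ℕ} (i : SlotIndex p) (f : ℝ → ℂ) (l : ℤ) : ℂ := torusCoeff (slotFunction i f) l

/-- The contribution of the frequencies `n` to the symmetrised time derivative of the homogeneous
Sobolev energy of order `κ + 1`. -/
def energyTerm (p κ : ℕ) (f : ℝ → ℂ) (n : SlotIndex p → ℤ) : ℂ :=
  if ∑ i, n i = 0 then (energySymbol κ (slotSign p) n : ℂ) * ∏ i, slotCoeff i f (n i) else 0

section Slots

variable {p : ℕ} {f : ℝ → ℂ}

lemma SmoothPeriodic.slotFunction (hf : SmoothPeriodic f) (i : SlotIndex p) :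
    SmoothPeriodic (slotFunction i f) := by
  rcases i with _ | _
  · exact hf
  · exact hf.conj

lemma slotCoeff_inl (i : Fin (p + 1)) (f : ℝ → ℂ) (l : ℤ) :
    slotCoeff (p := p) (Sum.inl i) f l = torusCoeff f l := rfl

lemma slotCoeff_inr (i : Fin (p + 1)) (f : ℝ → ℂ) (l : ℤ) :
    slotCoeff (p := p) (Sum.inr i) f l = starRingEnd ℂ (torusCoeff f (-l)) := torusCoeff_conj f l

lemma slotCoeff_negLaplacianPow (hf : SmoothPeriodic f) (i : SlotIndex p) (s : ℕ) (l : ℤ) :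
    slotCoeff i (negLaplacianPow s f) l = (l : ℂ) ^ (2 * s) * slotCoeff i f l := by
  rcases i with _ | _
  · rw [slotCoeff_inl, slotCoeff_inl, torusCoeff_negLaplacianPow hf]
    push_cast
    rfl
  · rw [slotCoeff_inr, slotCoeff_inr, torusCoeff_negLaplacianPow hf, map_mul,
      Complex.conj_ofReal]
    push_cast
    rw [pow_mul, pow_mul, neg_sq]

lemma prod_ite_eq_mul_pow (j : Fin (p + 1)) (a b : ℂ) :
    ∏ i : Fin (p + 1), (if i = j then a else b) = a * b ^ p := by
  rw [← Finset.mul_prod_erase _ _ (Finset.mem_univ j), if_pos rfl,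
    Finset.prod_congr rfl fun i hi => if_neg (Finset.ne_of_mem_erase hi), Finset.prod_const,
    Finset.card_erase_of_mem (Finset.mem_univ j), Finset.card_univ, Fintype.card_fin,
    add_tsub_cancel_right]

lemma prod_slotFunction_ite_inl (f g : ℝ → ℂ) (j : Fin (p + 1)) (x : ℝ) :
    ∏ i : SlotIndex p, slotFunction i (if i = Sum.inl j then g else f) x =
      starRingEnd ℂ (powerNonlinearity p f x * starRingEnd ℂ (g x)) := by
  have left (i : Fin (p + 1)) : slotFunction (Sum.inl i : SlotIndex p)
      (if (Sum.inl i : SlotIndex p) = Sum.inl j then g else f) x =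
        if i = j then g x else f x := by
    simp only [slotFunction, Sum.elim_inl, Sum.inl.injEq]
    split_ifs <;> rfl
  rw [Fintype.prod_sum_type, powerNonlinearity_eq]
  simp_rw [left, prod_ite_eq_mul_pow]
  simp only [slotFunction, reduceCtorEq, if_false, Sum.elim_inr, Finset.prod_const,
    Finset.card_univ, Fintype.card_fin, map_mul, map_pow, Complex.conj_conj]
  ring

lemma prod_slotFunction_ite_inr (f g : ℝ → ℂ) (j : Fin (p + 1)) (x : ℝ) :
    ∏ i : SlotIndex p, slotFunction i (if i = Sum.inr j then g else f) x =
      powerNonlinearity p f x * starRingEnd ℂ (g x) := by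
  have right (i : Fin (p + 1)) : slotFunction (Sum.inr i : SlotIndex p)
      (if (Sum.inr i : SlotIndex p) = Sum.inr j then g else f) x =
        if i = j then starRingEnd ℂ (g x) else starRingEnd ℂ (f x) := by
    simp only [slotFunction, Sum.elim_inr, Sum.inr.injEq]
    split_ifs <;> rfl
  rw [Fintype.prod_sum_type, powerNonlinearity_eq]
  simp_rw [right, prod_ite_eq_mul_pow]
  simp only [slotFunction, reduceCtorEq, if_false, Sum.elim_inl, Finset.prod_const,
    Finset.card_univ, Fintype.card_fin]
  ring

lemma sum_slotSign_mul_torusCoeff_prod (f g : ℝ → ℂ) :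
    ∑ j : SlotIndex p, (slotSign p j : ℂ) *
      torusCoeff (fun x => ∏ i, slotFunction i (if i = j then g else f) x) 0 =
        -(2 * (p + 1) * Complex.I) *
          ((torusCoeff (fun x => powerNonlinearity p f x * starRingEnd ℂ (g x)) 0).im : ℂ) := by
  rw [Fintype.sum_sum_type]
  simp_rw [prod_slotFunction_ite_inl, prod_slotFunction_ite_inr]
  rw [torusCoeff_conj (fun x => powerNonlinearity p f x * starRingEnd ℂ (g x)) 0, neg_zero]
  simp only [slotSign, Sum.elim_inl, Sum.elim_inr, Finset.sum_const, Finset.card_univ,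
    Fintype.card_fin, nsmul_eq_mul]
  apply Complex.ext <;> simp
  ring

lemma prod_torusCoeff_ite_negLaplacianPow (hf : SmoothPeriodic f) (s : ℕ) (j : SlotIndex p)
    (n : SlotIndex p → ℤ) :
    ∏ i, torusCoeff (slotFunction i (if i = j then negLaplacianPow s f else f)) (n i) =
      (n j : ℂ) ^ (2 * s) * ∏ i, slotCoeff i f (n i) := by
  have factor (i : SlotIndex p) :
      torusCoeff (slotFunction i (if i = j then negLaplacianPow s f else f)) (n i) =
        (if i = j then (n i : ℂ) ^ (2 * s) else 1) * slotCoeff i f (n i) := by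
    split_ifs with hij
    · exact slotCoeff_negLaplacianPow hf i s (n i)
    · exact (one_mul _).symm
  simp_rw [factor]
  rw [Finset.prod_mul_distrib, Finset.prod_ite_eq' Finset.univ j, if_pos (Finset.mem_univ j)]

lemma hasSum_energyTerm (p κ : ℕ) (hf : SmoothPeriodic f) :
    HasSum (energyTerm p κ f) (-(2 * (p + 1) * Complex.I) * ((torusCoeff (fun x =>
      powerNonlinearity p f x * starRingEnd ℂ (negLaplacianPow (κ + 1) f x)) 0).im : ℂ)) := by
  set g := negLaplacianPow (κ + 1) f
  have perSlot (j : SlotIndex p) : HasSum (fun n : SlotIndex p → ℤ => (slotSign p j : ℂ) *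
      (if ∑ i, n i = 0 then
        ∏ i, torusCoeff (slotFunction i (if i = j then g else f)) (n i) else 0))
      ((slotSign p j : ℂ) *
        torusCoeff (fun x => ∏ i, slotFunction i (if i = j then g else f) x) 0) := by
    refine (hasSum_torusCoeff_prod _ (fun i => SmoothPeriodic.slotFunction ?_ i) 0).mul_left _
    split_ifs
    · exact hf.negLaplacianPow _
    · exact hf
  have total := hasSum_sum (s := Finset.univ) fun j _ => perSlot j
  rw [sum_slotSign_mul_torusCoeff_prod] at total
  refine total.congr_fun fun n => ?_
  unfold energyTerm
  split_ifs with hn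
  · simp_rw [g, prod_torusCoeff_ite_negLaplacianPow hf]
    unfold energySymbol
    push_cast
    rw [Finset.sum_mul]
    exact Finset.sum_congr rfl fun j _ => mul_assoc _ _ _
  · simp only [mul_zero, Finset.sum_const_zero]

lemma abs_energySymbol_le_prod_japaneseSq (κ : ℕ) (n : SlotIndex p → ℤ) :
    |(energySymbol κ (slotSign p) n : ℝ)| ≤ (2 * p + 2) * ∏ i, japaneseSq (n i) ^ (κ + 1) := by
  have term_le (j : SlotIndex p) :
      |(slotSign p j : ℝ) * (n j : ℝ) ^ (2 * (κ + 1))| ≤ ∏ i, japaneseSq (n i) ^ (κ + 1) := by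
    have hsign : |(slotSign p j : ℝ)| = 1 := by
      rcases slotSign_eq_one_or p j with h | h <;> simp [h]
    rw [abs_mul, hsign, one_mul, abs_of_nonneg (pow_two_mul_nonneg (n j) (κ + 1)),
      ← Finset.mul_prod_erase Finset.univ _ (Finset.mem_univ j)]
    exact (pow_two_mul_le_japaneseSq_pow (n j) (κ + 1)).trans <|
      le_mul_of_one_le_right (pow_nonneg (japaneseSq_pos _).le _)
        (Finset.one_le_prod fun i _ => one_le_pow₀ (one_le_japaneseSq _))
  unfold energySymbol
  push_cast
  calc _ ≤ ∑ j, |(slotSign p j : ℝ) * (n j : ℝ) ^ (2 * (κ + 1))| := Finset.abs_sum_le_sum_abs _ _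
    _ ≤ ∑ _j : SlotIndex p, ∏ i, japaneseSq (n i) ^ (κ + 1) :=
        Finset.sum_le_sum fun j _ => term_le j
    _ = _ := by rw [Finset.sum_const, Finset.card_univ, nsmul_eq_mul, card_slotIndex]

lemma japaneseSq_pow_mul_norm_slotCoeff_le {Q : ℝ≥0∞} (hQ : Q ≠ ⊤) {s : ℕ}
    (h : sobolevSq (2 * (s + 1)) f ≤ Q) (i : SlotIndex p) (l : ℤ) :
    japaneseSq l ^ s * ‖slotCoeff i f l‖ ≤ √Q.toReal * (japaneseSq l)⁻¹ := by
  rcases i with _ | _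
  · exact japaneseSq_pow_mul_norm_torusCoeff_le_inv hQ h l
  · rw [slotCoeff_inr, Complex.norm_conj, ← japaneseSq_neg l]
    exact japaneseSq_pow_mul_norm_torusCoeff_le_inv hQ h (-l)

/-- Summable majorant of `energyTerm` for data whose squared Sobolev norm of order `2 (κ + 2)` is
at most `Q`. -/
def energyTermBound (p : ℕ) (Q : ℝ≥0∞) (n : SlotIndex p → ℤ) : ℝ :=
  (2 * p + 2) * ∏ i, (√Q.toReal * (japaneseSq (n i))⁻¹)

lemma summable_energyTermBound (p : ℕ) (Q : ℝ≥0∞) : Summable (energyTermBound p Q) :=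
  (summable_prod_pi (fun (_ : SlotIndex p) l => √Q.toReal * (japaneseSq l)⁻¹)
    (fun _ l => mul_nonneg (Real.sqrt_nonneg _) (inv_nonneg.2 (japaneseSq_pos l).le))
    (fun _ => summable_inv_japaneseSq.mul_left _)).mul_left _

lemma norm_energyTerm_le {Q : ℝ≥0∞} (hQ : Q ≠ ⊤) {κ : ℕ} (h : sobolevSq (2 * (κ + 1 + 1)) f ≤ Q)
    (n : SlotIndex p → ℤ) : ‖energyTerm p κ f n‖ ≤ energyTermBound p Q n := by
  have hpos (l : ℤ) := (japaneseSq_pos l).le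
  unfold energyTerm energyTermBound
  split_ifs
  · rw [norm_mul, norm_prod, Complex.norm_intCast]
    calc _ ≤ (2 * p + 2) * (∏ i, japaneseSq (n i) ^ (κ + 1)) * ∏ i, ‖slotCoeff i f (n i)‖ := by
          gcongr
          exact abs_energySymbol_le_prod_japaneseSq κ n
      _ = (2 * p + 2) * ∏ i, japaneseSq (n i) ^ (κ + 1) * ‖slotCoeff i f (n i)‖ := by
          rw [mul_assoc, Finset.prod_mul_distrib]
      _ ≤ _ := mul_le_mul_of_nonneg_left (Finset.prod_le_prod
          (fun i _ => mul_nonneg (pow_nonneg (hpos _) _) (norm_nonneg _))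
          fun i _ => japaneseSq_pow_mul_norm_slotCoeff_le hQ h i (n i)) (by positivity)
  · rw [norm_zero]
    exact mul_nonneg (by positivity) <| Finset.prod_nonneg fun i _ =>
      mul_nonneg (Real.sqrt_nonneg _) (inv_nonneg.2 (hpos _))

end Slots

/-! ### Time oscillation of products of Fourier coefficients -/

section Oscillation

variable {t₁ t₂ : ℝ}

lemma norm_exp_I_mul_ofReal_mul (ω t : ℝ) : ‖Complex.exp (Complex.I * ω * t)‖ = 1 := by
  rw [mul_assoc, mul_comm, ← Complex.ofReal_mul, Complex.norm_exp_ofReal_mul_I]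

lemma hasDerivAt_exp_I_mul_mul {c h : ℝ → ℂ} {ω t : ℝ}
    (hc : HasDerivAt c (-(Complex.I * ω) * c t + h t) t) :
    HasDerivAt (fun s : ℝ => Complex.exp (Complex.I * ω * s) * c s)
      (Complex.exp (Complex.I * ω * t) * h t) t := by
  have hlin : HasDerivAt (fun s : ℝ => Complex.I * ω * (s : ℂ)) (Complex.I * ω) t := by
    simpa using (Complex.ofRealCLM.hasDerivAt (x := t)).const_mul (Complex.I * (ω : ℂ))
  exact (hlin.cexp.mul hc).congr_deriv (by ring)

lemma norm_le_norm_add_integral_of_oscillating {c h : ℝ → ℂ} {ω t : ℝ}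
    (hc : ∀ s, HasDerivAt c (-(Complex.I * ω) * c s + h s) s) (hh : Continuous h)
    (ht : t ∈ Set.Icc t₁ t₂) : ‖c t‖ ≤ ‖c t₁‖ + ∫ s in t₁..t₂, ‖h s‖ := by
  have ftc := intervalIntegral.integral_eq_sub_of_hasDerivAt (a := t₁) (b := t)
    (fun s _ => hasDerivAt_exp_I_mul_mul (hc s))
    (Continuous.intervalIntegrable (by fun_prop) _ _)
  have increment_le := intervalIntegral.norm_integral_le_integral_norm (μ := volume)
    (f := fun s : ℝ => Complex.exp (Complex.I * ω * s) * h s) ht.1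
  simp_rw [norm_mul, norm_exp_I_mul_ofReal_mul, one_mul] at increment_le
  rw [ftc] at increment_le
  have extend : ∫ s in t₁..t, ‖h s‖ ≤ ∫ s in t₁..t₂, ‖h s‖ :=
    intervalIntegral.integral_mono_interval le_rfl ht.1 ht.2
      (Filter.Eventually.of_forall fun s => norm_nonneg _) (hh.norm.intervalIntegrable _ _)
  have reverse_triangle := norm_sub_norm_le (Complex.exp (Complex.I * ω * t) * c t)
    (Complex.exp (Complex.I * ω * t₁) * c t₁)
  simp_rw [norm_mul, norm_exp_I_mul_ofReal_mul, one_mul] at reverse_triangle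
  linarith

variable {ι : Type*}

lemma norm_prod_le_prod {s : Finset ι} {z : ι → ℂ} {A : ι → ℝ} (hzA : ∀ i, ‖z i‖ ≤ A i) :
    ‖∏ i ∈ s, z i‖ ≤ ∏ i ∈ s, A i := by
  rw [norm_prod]
  exact Finset.prod_le_prod (fun i _ => norm_nonneg _) fun i _ => hzA i

variable [Fintype ι] {c h : ι → ℝ → ℂ} {ω : ι → ℝ} {A : ι → ℝ}

lemma hasDerivAt_prod_of_oscillating [DecidableEq ι] {t : ℝ}
    (hc : ∀ i, HasDerivAt (c i) (-(Complex.I * ω i) * c i t + h i t) t) :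
    HasDerivAt (fun s => ∏ i, c i s) (-(Complex.I * ((∑ i, ω i : ℝ) : ℂ)) * ∏ i, c i t +
      ∑ j, h j t * ∏ i ∈ Finset.univ.erase j, c i t) t := by
  refine (HasDerivAt.fun_finsetProd (u := Finset.univ) fun i _ => hc i).congr_deriv ?_
  push_cast
  rw [Finset.mul_sum, ← Finset.sum_neg_distrib, Finset.sum_mul, ← Finset.sum_add_distrib]
  refine Finset.sum_congr rfl fun j _ => ?_
  rw [smul_eq_mul, ← Finset.mul_prod_erase Finset.univ (fun i => c i t) (Finset.mem_univ j)]
  ring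

lemma norm_integral_prod_le (h₁₂ : t₁ ≤ t₂) (hlen : t₂ - t₁ ≤ 1)
    (hcA : ∀ i, ∀ t ∈ Set.Icc t₁ t₂, ‖c i t‖ ≤ A i) :
    ‖∫ s in t₁..t₂, ∏ i, c i s‖ ≤ ∏ i, A i := by
  have hA : 0 ≤ ∏ i, A i := Finset.prod_nonneg fun i _ =>
    (norm_nonneg _).trans (hcA i t₁ (Set.left_mem_Icc.2 h₁₂))
  refine (intervalIntegral.norm_integral_le_of_norm_le_const (C := ∏ i, A i)
    fun s hs => ?_).trans ?_
  · rw [Set.uIoc_of_le h₁₂] at hs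
    exact norm_prod_le_prod fun i => hcA i s (Set.Ioc_subset_Icc_self hs)
  · rw [abs_of_nonneg (sub_nonneg.2 h₁₂)]
    exact mul_le_of_le_one_right hA hlen

lemma norm_integral_mul_prod_erase_le [DecidableEq ι] (h₁₂ : t₁ ≤ t₂)
    (hcc : ∀ i, Continuous (c i)) (hh : ∀ i, Continuous (h i))
    (hcA : ∀ i, ∀ t ∈ Set.Icc t₁ t₂, ‖c i t‖ ≤ A i)
    (hhA : ∀ i, ∫ s in t₁..t₂, ‖h i s‖ ≤ A i) (j : ι) :
    ‖∫ s in t₁..t₂, h j s * ∏ i ∈ Finset.univ.erase j, c i s‖ ≤ ∏ i, A i := by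
  have hA : 0 ≤ ∏ i ∈ Finset.univ.erase j, A i := Finset.prod_nonneg fun i _ =>
    (norm_nonneg _).trans (hcA i t₁ (Set.left_mem_Icc.2 h₁₂))
  calc _ ≤ ∫ s in t₁..t₂, ‖h j s * ∏ i ∈ Finset.univ.erase j, c i s‖ :=
        intervalIntegral.norm_integral_le_integral_norm h₁₂
    _ ≤ ∫ s in t₁..t₂, ‖h j s‖ * ∏ i ∈ Finset.univ.erase j, A i := by
        refine intervalIntegral.integral_mono_on h₁₂
          (Continuous.intervalIntegrable (by fun_prop) _ _)
          (Continuous.intervalIntegrable (by fun_prop) _ _) fun s hs => ?_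
        rw [norm_mul]
        exact mul_le_mul_of_nonneg_left (norm_prod_le_prod fun i => hcA i s hs) (norm_nonneg _)
    _ ≤ A j * ∏ i ∈ Finset.univ.erase j, A i := by
        rw [intervalIntegral.integral_mul_const]
        exact mul_le_mul_of_nonneg_right (hhA j) hA
    _ = _ := Finset.mul_prod_erase _ _ (Finset.mem_univ j)

lemma abs_sum_mul_norm_integral_prod_le (h₁₂ : t₁ ≤ t₂)
    (hc : ∀ i t, HasDerivAt (c i) (-(Complex.I * ω i) * c i t + h i t) t)
    (hh : ∀ i, Continuous (h i)) (hcA : ∀ i, ∀ t ∈ Set.Icc t₁ t₂, ‖c i t‖ ≤ A i)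
    (hhA : ∀ i, ∫ s in t₁..t₂, ‖h i s‖ ≤ A i) :
    |∑ i, ω i| * ‖∫ s in t₁..t₂, ∏ i, c i s‖ ≤ (Fintype.card ι + 2) * ∏ i, A i := by
  classical
  have hcc (i : ι) : Continuous (c i) :=
    continuous_iff_continuousAt.2 fun t => (hc i t).continuousAt
  have ftc := intervalIntegral.integral_eq_sub_of_hasDerivAt (a := t₁) (b := t₂)
    (fun s _ => hasDerivAt_prod_of_oscillating fun i => hc i s)
    (Continuous.intervalIntegrable (by fun_prop) _ _)
  rw [intervalIntegral.integral_add (Continuous.intervalIntegrable (by fun_prop) _ _)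
      (Continuous.intervalIntegrable (by fun_prop) _ _), intervalIntegral.integral_const_mul,
    intervalIntegral.integral_finsetSum fun j _ =>
      Continuous.intervalIntegrable (by fun_prop) _ _] at ftc
  have boundary := (norm_sub_le (∏ i, c i t₂) (∏ i, c i t₁)).trans <| add_le_add
    (norm_prod_le_prod fun i => hcA i t₂ (Set.right_mem_Icc.2 h₁₂))
    (norm_prod_le_prod fun i => hcA i t₁ (Set.left_mem_Icc.2 h₁₂))
  have forcing : ‖∑ j, ∫ s in t₁..t₂, h j s * ∏ i ∈ Finset.univ.erase j, c i s‖ ≤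
      Fintype.card ι * ∏ i, A i := by
    refine (norm_sum_le_of_le _ fun j _ =>
      norm_integral_mul_prod_erase_le h₁₂ hcc hh hcA hhA j).trans_eq ?_
    rw [Finset.sum_const, Finset.card_univ, nsmul_eq_mul]
  calc _ = ‖-(Complex.I * ((∑ i, ω i : ℝ) : ℂ)) * ∫ s in t₁..t₂, ∏ i, c i s‖ := by
        rw [norm_mul, norm_neg, norm_mul, Complex.norm_I, one_mul, Complex.norm_real,
          Real.norm_eq_abs]
    _ ≤ _ := by
        rw [eq_sub_of_add_eq ftc]
        linarith [norm_sub_le (∏ i, c i t₂ - ∏ i, c i t₁)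
          (∑ j, ∫ s in t₁..t₂, h j s * ∏ i ∈ Finset.univ.erase j, c i s)]

-- One integration by parts in time gains the inverse of the total frequency `∑ i, ω i`.
lemma norm_integral_prod_le_of_oscillating (h₁₂ : t₁ ≤ t₂) (hlen : t₂ - t₁ ≤ 1)
    (hc : ∀ i t, HasDerivAt (c i) (-(Complex.I * ω i) * c i t + h i t) t)
    (hh : ∀ i, Continuous (h i)) (hcA : ∀ i, ∀ t ∈ Set.Icc t₁ t₂, ‖c i t‖ ≤ A i)
    (hhA : ∀ i, ∫ s in t₁..t₂, ‖h i s‖ ≤ A i) :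
    ‖∫ s in t₁..t₂, ∏ i, c i s‖ ≤
      (Fintype.card ι + 3) * ((1 + |∑ i, ω i|)⁻¹ * ∏ i, A i) := by
  have hpos : 0 < 1 + |∑ i, ω i| := by positivity
  rw [mul_left_comm, inv_mul_eq_div, le_div_iff₀ hpos]
  linarith [norm_integral_prod_le h₁₂ hlen hcA,
    abs_sum_mul_norm_integral_prod_le h₁₂ hc hh hcA hhA]

end Oscillation

/-- Majorant of `‖torusCoeff (u t) l‖` for `t` between `t₁` and `t₂`, given by Duhamel's formula. -/
def duhamelMajorant (p : ℕ) (u : ℝ → ℝ → ℂ) (t₁ t₂ : ℝ) (l : ℤ) : ℝ :=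
  ‖torusCoeff (u t₁) l‖ + ∫ s in t₁..t₂, ‖torusCoeff (powerNonlinearity p (u s)) l‖

/-- Symmetrisation of `duhamelMajorant` in the frequency: a common majorant for the coefficients of
`u` and of `conj u`. -/
def envelope (p : ℕ) (u : ℝ → ℝ → ℂ) (t₁ t₂ : ℝ) (l : ℤ) : ℝ :=
  duhamelMajorant p u t₁ t₂ l + duhamelMajorant p u t₁ t₂ (-l)

section Envelope

variable {p : ℕ} {u : ℝ → ℝ → ℂ} {t₁ t₂ : ℝ}

lemma duhamelMajorant_nonneg (h₁₂ : t₁ ≤ t₂) (l : ℤ) : 0 ≤ duhamelMajorant p u t₁ t₂ l :=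
  add_nonneg (norm_nonneg _) (intervalIntegral.integral_nonneg h₁₂ fun _ _ => norm_nonneg _)

lemma envelope_nonneg (h₁₂ : t₁ ≤ t₂) (l : ℤ) : 0 ≤ envelope p u t₁ t₂ l :=
  add_nonneg (duhamelMajorant_nonneg h₁₂ l) (duhamelMajorant_nonneg h₁₂ _)

lemma integral_norm_slotCoeff_powerNonlinearity_le_envelope (h₁₂ : t₁ ≤ t₂) (i : SlotIndex p)
    (l : ℤ) :
    ∫ s in t₁..t₂, ‖slotCoeff i (powerNonlinearity p (u s)) l‖ ≤ envelope p u t₁ t₂ l := by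
  rcases i with _ | _
  · exact (le_add_of_nonneg_left (norm_nonneg _)).trans
      (le_add_of_nonneg_right (duhamelMajorant_nonneg h₁₂ _))
  · simp_rw [slotCoeff_inr, Complex.norm_conj]
    exact (le_add_of_nonneg_left (norm_nonneg _)).trans
      (le_add_of_nonneg_left (duhamelMajorant_nonneg h₁₂ _))

end Envelope

namespace IsNLS

variable {p : ℕ} {u : ℝ → ℝ → ℂ} {t₁ t₂ : ℝ}

lemma hasDerivAt_torusCoeff_univ (hu : IsNLS p Set.univ u) (t : ℝ) (l : ℤ) :
    HasDerivAt (fun t => torusCoeff (u t) l)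
      (-Complex.I * ((l : ℂ) ^ 2 * torusCoeff (u t) l +
        torusCoeff (powerNonlinearity p (u t)) l)) t := by
  obtain ⟨Q, hQ, h⟩ := hu.exists_sobolevSq_le 3 (t - 1) (t + 1)
  exact hu.hasDerivAt_torusCoeff hQ h (Icc_mem_nhds (sub_one_lt t) (lt_add_one t)) l

lemma continuous_torusCoeff_powerNonlinearity (hu : IsNLS p Set.univ u) (l : ℤ) :
    Continuous fun t => torusCoeff (powerNonlinearity p (u t)) l := by
  refine continuous_iff_continuousAt.2 fun t => ?_
  obtain ⟨Q, hQ, h⟩ := hu.exists_sobolevSq_le 1 (t - 1) (t + 1)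
  exact (hu.continuousOn_torusCoeff_powerNonlinearity hQ h l).continuousAt
    (Icc_mem_nhds (sub_one_lt t) (lt_add_one t))

lemma continuous_slotCoeff_powerNonlinearity (hu : IsNLS p Set.univ u) (i : SlotIndex p)
    (l : ℤ) : Continuous fun t => slotCoeff i (powerNonlinearity p (u t)) l := by
  rcases i with _ | _
  · exact hu.continuous_torusCoeff_powerNonlinearity l
  · simp_rw [slotCoeff_inr]
    exact Complex.continuous_conj.comp (hu.continuous_torusCoeff_powerNonlinearity (-l))

lemma hasDerivAt_slotCoeff (hu : IsNLS p Set.univ u) (i : SlotIndex p) (t : ℝ) (l : ℤ) :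
    HasDerivAt (fun t => slotCoeff i (u t) l)
      (-(Complex.I * ((slotSign p i * l ^ 2 : ℝ) : ℂ)) * slotCoeff i (u t) l +
        -(Complex.I * slotSign p i) * slotCoeff i (powerNonlinearity p (u t)) l) t := by
  rcases i with _ | _
  · refine (hu.hasDerivAt_torusCoeff_univ t l).congr_deriv ?_
    simp only [slotCoeff_inl, slotSign, Sum.elim_inl]
    push_cast
    ring
  · simp_rw [slotCoeff_inr]
    refine (hu.hasDerivAt_torusCoeff_univ t (-l)).star.congr_deriv ?_
    rw [← starRingEnd_apply]
    simp only [slotSign, Sum.elim_inr, Int.reduceNeg, Int.cast_neg, Int.cast_one, map_neg, map_mul,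
      map_add, map_pow, map_intCast, Complex.conj_I, Complex.ofReal_neg, Complex.ofReal_pow,
      Complex.ofReal_intCast, Complex.ofReal_mul, Complex.ofReal_one]
    ring

lemma continuous_slotCoeff (hu : IsNLS p Set.univ u) (i : SlotIndex p) (l : ℤ) :
    Continuous fun t => slotCoeff i (u t) l :=
  continuous_iff_continuousAt.2 fun t => (hu.hasDerivAt_slotCoeff i t l).continuousAt

lemma norm_torusCoeff_le_duhamelMajorant (hu : IsNLS p Set.univ u) {t : ℝ}
    (ht : t ∈ Set.Icc t₁ t₂) (l : ℤ) : ‖torusCoeff (u t) l‖ ≤ duhamelMajorant p u t₁ t₂ l := by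
  have oscillating (s : ℝ) : HasDerivAt (fun s => torusCoeff (u s) l)
      (-(Complex.I * ((l ^ 2 : ℝ) : ℂ)) * torusCoeff (u s) l +
        -Complex.I * torusCoeff (powerNonlinearity p (u s)) l) s :=
    (hu.hasDerivAt_torusCoeff_univ s l).congr_deriv (by push_cast; ring)
  have := norm_le_norm_add_integral_of_oscillating oscillating
    (continuous_const.mul (hu.continuous_torusCoeff_powerNonlinearity l)) ht
  simpa only [norm_mul, norm_neg, Complex.norm_I, one_mul, duhamelMajorant] using this

lemma norm_slotCoeff_le_envelope (hu : IsNLS p Set.univ u) {t : ℝ} (ht : t ∈ Set.Icc t₁ t₂)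
    (i : SlotIndex p) (l : ℤ) : ‖slotCoeff i (u t) l‖ ≤ envelope p u t₁ t₂ l := by
  have h₁₂ := ht.1.trans ht.2
  rcases i with _ | _
  · exact (hu.norm_torusCoeff_le_duhamelMajorant ht l).trans
      (le_add_of_nonneg_right (duhamelMajorant_nonneg h₁₂ _))
  · rw [slotCoeff_inr, Complex.norm_conj]
    exact (hu.norm_torusCoeff_le_duhamelMajorant ht _).trans
      (le_add_of_nonneg_left (duhamelMajorant_nonneg h₁₂ _))

lemma norm_integral_prod_slotCoeff_le (hu : IsNLS p Set.univ u) (h₁₂ : t₁ ≤ t₂)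
    (hlen : t₂ - t₁ ≤ 1) (n : SlotIndex p → ℤ) :
    ‖∫ s in t₁..t₂, ∏ i, slotCoeff i (u s) (n i)‖ ≤ (2 * p + 5) *
      ((1 + |(resonance (slotSign p) n : ℝ)|)⁻¹ * ∏ i, envelope p u t₁ t₂ (n i)) := by
  have norm_forcing (i : SlotIndex p) (s : ℝ) :
      ‖-(Complex.I * slotSign p i) * slotCoeff i (powerNonlinearity p (u s)) (n i)‖ =
        ‖slotCoeff i (powerNonlinearity p (u s)) (n i)‖ := by
    rcases slotSign_eq_one_or p i with h | h <;> simp [h]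
  have := norm_integral_prod_le_of_oscillating h₁₂ hlen
    (fun i t => hu.hasDerivAt_slotCoeff i t (n i))
    (fun i => continuous_const.mul (hu.continuous_slotCoeff_powerNonlinearity i (n i)))
    (fun i t ht => hu.norm_slotCoeff_le_envelope ht i (n i))
    (fun i => by
      simp_rw [norm_forcing]
      exact integral_norm_slotCoeff_powerNonlinearity_le_envelope h₁₂ i (n i))
  rw [card_slotIndex] at this
  convert this using 2
  · ring
  · unfold resonance
    push_cast
    rfl

end IsNLS

/-! ### The energy increment -/

lemma two_mul_im_eq_div_mul_tsum_energyTerm (p κ : ℕ) {f : ℝ → ℂ} (hf : SmoothPeriodic f) :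
    ((2 * (torusCoeff (fun x =>
      powerNonlinearity p f x * starRingEnd ℂ (negLaplacianPow (κ + 1) f x)) 0).im : ℝ) : ℂ) =
        Complex.I / (p + 1) * ∑' n, energyTerm p κ f n := by
  rw [(hasSum_energyTerm p κ hf).tsum_eq]
  have hp : (p : ℂ) + 1 ≠ 0 := Nat.cast_add_one_ne_zero p
  field_simp
  push_cast
  rw [Complex.I_sq]
  ring

lemma enorm_I_div_natCast_add_one_le (p : ℕ) : ‖Complex.I / ((p : ℂ) + 1)‖ₑ ≤ 1 := by
  have hnorm : ‖(p : ℂ) + 1‖ = (p : ℝ) + 1 := mod_cast Complex.norm_natCast (p + 1)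
  rw [← ofReal_norm, norm_div, Complex.norm_I, hnorm, ← ENNReal.ofReal_one]
  exact ENNReal.ofReal_le_ofReal
    (div_le_one_of_le₀ (le_add_of_nonneg_left p.cast_nonneg) (by positivity))

namespace IsNLS

variable {p : ℕ} {u : ℝ → ℝ → ℂ} {t₁ t₂ : ℝ}

lemma continuous_energyTerm (hu : IsNLS p Set.univ u) (κ : ℕ) (n : SlotIndex p → ℤ) :
    Continuous fun t => energyTerm p κ (u t) n := by
  unfold energyTerm
  split_ifs
  · exact continuous_const.mul (continuous_finsetProd _ fun i _ => hu.continuous_slotCoeff i _)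
  · exact continuous_const

lemma homogSobolevSq_sub_eq_tsum_integral (hu : IsNLS p Set.univ u) (κ : ℕ) (h₁₂ : t₁ ≤ t₂) :
    ((homogSobolevSq (κ + 1) (u t₂) - homogSobolevSq (κ + 1) (u t₁) : ℝ) : ℂ) =
      Complex.I / (p + 1) * ∑' n, ∫ t in t₁..t₂, energyTerm p κ (u t) n := by
  obtain ⟨Q, hQ, hQb⟩ := hu.exists_sobolevSq_le (2 * (κ + 1 + 1)) (t₁ - 1) (t₂ + 1)
  have bound (n : SlotIndex p → ℤ) (t : ℝ) (ht : t ∈ Set.Icc t₁ t₂) :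
      ‖energyTerm p κ (u t) n‖ ≤ energyTermBound p Q n :=
    norm_energyTerm_le hQ (hQb t ⟨by linarith [ht.1], by linarith [ht.2]⟩) n
  have hsum := summable_energyTermBound p Q
  have continuousOn_tsum : ContinuousOn (fun t => ∑' n, energyTerm p κ (u t) n)
      (Set.Icc t₁ t₂) :=
    continuousOn_tsum (fun n => (hu.continuous_energyTerm κ n).continuousOn) hsum bound
  have deriv (t : ℝ) (ht : t ∈ Set.uIcc t₁ t₂) :
      HasDerivAt (fun t => ((homogSobolevSq (κ + 1) (u t) : ℝ) : ℂ))
        (Complex.I / (p + 1) * ∑' n, energyTerm p κ (u t) n) t := by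
    rw [Set.uIcc_of_le h₁₂] at ht
    rw [← two_mul_im_eq_div_mul_tsum_energyTerm p κ (hu.smoothPeriodic t)]
    exact (hu.hasDerivAt_homogSobolevSq hQ (by omega) le_rfl hQb
      ⟨by linarith [ht.1], by linarith [ht.2]⟩).ofReal_comp
  have ftc := intervalIntegral.integral_eq_sub_of_hasDerivAt deriv
    (ContinuousOn.intervalIntegrable
      (by rw [Set.uIcc_of_le h₁₂]; exact continuousOn_const.mul continuousOn_tsum))
  have exchange := intervalIntegral.hasSum_integral_of_dominated_convergence (μ := volume)
    (F := fun n t => energyTerm p κ (u t) n) (fun n _ => energyTermBound p Q n)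
    (fun n => (hu.continuous_energyTerm κ n).aestronglyMeasurable)
    (fun n => Filter.Eventually.of_forall fun t ht => bound n t <| by
      rw [Set.uIoc_of_le h₁₂] at ht
      exact Set.Ioc_subset_Icc_self ht)
    (Filter.Eventually.of_forall fun t _ => hsum) intervalIntegrable_const
    (Filter.Eventually.of_forall fun t _ =>
      (hasSum_energyTerm p κ (hu.smoothPeriodic t)).summable.hasSum)
  rw [exchange.tsum_eq, ← intervalIntegral.integral_const_mul, ftc, Complex.ofReal_sub]

lemma enorm_integral_energyTerm_le (hu : IsNLS p Set.univ u) (κ : ℕ) (h₁₂ : t₁ ≤ t₂)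
    (hlen : t₂ - t₁ ≤ 1) (n : SlotIndex p → ℤ) :
    ‖∫ t in t₁..t₂, energyTerm p κ (u t) n‖ₑ ≤ ENNReal.ofReal (2 * p + 5) *
      (if ∑ i, n i = 0 then ENNReal.ofReal |(energySymbol κ (slotSign p) n : ℝ)| *
        resonanceWeight 1 (resonance (slotSign p) n) *
          ∏ i, ENNReal.ofReal (envelope p u t₁ t₂ (n i)) else 0) := by
  unfold energyTerm
  split_ifs
  · rw [intervalIntegral.integral_const_mul, ← ofReal_norm, norm_mul, Complex.norm_intCast,
      resonanceWeight_one, ← ENNReal.ofReal_prod_of_nonneg fun i _ => envelope_nonneg h₁₂ _,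
      ← ENNReal.ofReal_mul (abs_nonneg _), ← ENNReal.ofReal_mul (by positivity),
      ← ENNReal.ofReal_mul (by positivity)]
    refine ENNReal.ofReal_le_ofReal ((mul_le_mul_of_nonneg_left
      (hu.norm_integral_prod_slotCoeff_le h₁₂ hlen n) (abs_nonneg _)).trans_eq ?_)
    ring
  · simp

lemma ofReal_abs_homogSobolevSq_sub_le (hu : IsNLS p Set.univ u) (κ : ℕ) (h₁₂ : t₁ ≤ t₂)
    (hlen : t₂ - t₁ ≤ 1) :
    ENNReal.ofReal |homogSobolevSq (κ + 1) (u t₂) - homogSobolevSq (κ + 1) (u t₁)| ≤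
      ENNReal.ofReal (2 * p + 5) * ∑' n : SlotIndex p → ℤ,
        (if ∑ i, n i = 0 then ENNReal.ofReal |(energySymbol κ (slotSign p) n : ℝ)| *
          resonanceWeight 1 (resonance (slotSign p) n) *
            ∏ i, ENNReal.ofReal (envelope p u t₁ t₂ (n i)) else 0) := by
  rw [← Real.norm_eq_abs, ← Complex.norm_real, ofReal_norm,
    hu.homogSobolevSq_sub_eq_tsum_integral κ h₁₂, enorm_mul, ← ENNReal.tsum_mul_left]
  exact (mul_le_of_le_one_left' (enorm_I_div_natCast_add_one_le p)).trans <|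
    enorm_tsum_le_tsum_enorm.trans <|
      ENNReal.tsum_le_tsum fun n => hu.enorm_integral_energyTerm_le κ h₁₂ hlen n

end IsNLS

section Interpolation

variable (A : ℤ → ℝ≥0∞)

lemma sq_absWeight_pow_mul (n : ℤ) (s : ℕ) (a : ℝ≥0∞) :
    (absWeight n ^ s * a) ^ 2 = ENNReal.ofReal ((n : ℝ) ^ (2 * s)) * a ^ 2 := by
  unfold absWeight
  rw [mul_pow, ← ENNReal.ofReal_pow (abs_nonneg _), ← ENNReal.ofReal_pow (by positivity),
    ← pow_mul, mul_comm s 2, pow_mul, sq_abs, pow_mul]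

-- Optimising over `ρ` recovers the multiplicative interpolation inequality.
lemma pow_two_mul_le_add_of_pos (n : ℤ) (κ : ℕ) {ρ : ℝ} (hρ : 0 < ρ) :
    (n : ℝ) ^ (2 * (κ + 1)) ≤ ρ ^ κ * japaneseSq n ^ 1 + ρ⁻¹ * japaneseSq n ^ (κ + 2) := by
  have hj := japaneseSq_pos n
  have hle : (n : ℝ) ^ 2 ≤ japaneseSq n := by simpa using pow_two_mul_le_japaneseSq_pow n 1
  rw [pow_mul]
  rcases le_total ((n : ℝ) ^ 2) ρ with low | high
  · refine le_add_of_le_of_nonneg ?_ (by positivity)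
    rw [pow_succ, pow_one]
    gcongr
  · refine le_add_of_nonneg_of_le (by positivity) ?_
    rw [inv_mul_eq_div, le_div_iff₀ hρ]
    calc ((n : ℝ) ^ 2) ^ (κ + 1) * ρ ≤ ((n : ℝ) ^ 2) ^ (κ + 1) * (n : ℝ) ^ 2 := by gcongr
      _ = ((n : ℝ) ^ 2) ^ (κ + 2) := (pow_succ _ _).symm
      _ ≤ _ := by gcongr

lemma tsum_sq_absWeight_pow_mul_le (κ : ℕ) {ρ : ℝ} (hρ : 0 < ρ) :
    ∑' n, (absWeight n ^ (κ + 1) * A n) ^ 2 ≤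
      ENNReal.ofReal (ρ ^ κ) * (∑' n, ENNReal.ofReal (japaneseSq n ^ 1) * A n ^ 2) +
      ENNReal.ofReal ρ⁻¹ * ∑' n, ENNReal.ofReal (japaneseSq n ^ (κ + 2)) * A n ^ 2 := by
  rw [← ENNReal.tsum_mul_left, ← ENNReal.tsum_mul_left, ← ENNReal.tsum_add]
  refine ENNReal.tsum_le_tsum fun n => ?_
  have hj := japaneseSq_pos n
  rw [sq_absWeight_pow_mul, ← mul_assoc, ← mul_assoc, ← ENNReal.ofReal_mul (by positivity),
    ← ENNReal.ofReal_mul (by positivity), ← add_mul,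
    ← ENNReal.ofReal_add (by positivity) (by positivity)]
  gcongr
  exact pow_two_mul_le_add_of_pos n κ hρ

lemma tsum_sq_absWeight_mul_le :
    ∑' n, (absWeight n * A n) ^ 2 ≤ ∑' n, ENNReal.ofReal (japaneseSq n ^ 1) * A n ^ 2 := by
  refine ENNReal.tsum_le_tsum fun n => ?_
  rw [← pow_one (absWeight n), sq_absWeight_pow_mul]
  gcongr
  exact pow_two_mul_le_japaneseSq_pow n 1

lemma tsum_sq_absWeight_pow_mul_le_rpow (κ : ℕ) {N : ℝ} (hN : 0 < N) {W W' : ℝ≥0∞}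
    (hW : ∑' n, ENNReal.ofReal (japaneseSq n ^ 1) * A n ^ 2 ≤ W)
    (hW' : ∑' n, ENNReal.ofReal (japaneseSq n ^ (κ + 2)) * A n ^ 2 ≤
      W' * ENNReal.ofReal (N ^ 2)) :
    ∑' n, (absWeight n ^ (κ + 1) * A n) ^ 2 ≤
      (W + W') * ENNReal.ofReal (N ^ (2 * (κ : ℝ) / (κ + 1))) := by
  set ρ : ℝ := N ^ (2 / ((κ : ℝ) + 1))
  have hρ : 0 < ρ := Real.rpow_pos_of_pos hN _
  have low : ρ ^ κ = N ^ (2 * (κ : ℝ) / (κ + 1)) := by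
    rw [← Real.rpow_natCast, ← Real.rpow_mul hN.le]
    congr 1
    ring
  have high : ρ⁻¹ * N ^ 2 = N ^ (2 * (κ : ℝ) / (κ + 1)) := by
    rw [← Real.rpow_natCast N 2, ← Real.rpow_neg hN.le, ← Real.rpow_add hN]
    congr 1
    push_cast
    field_simp
    ring
  calc _ ≤ ENNReal.ofReal (ρ ^ κ) * W + ENNReal.ofReal ρ⁻¹ * (W' * ENNReal.ofReal (N ^ 2)) :=
        (tsum_sq_absWeight_pow_mul_le A κ hρ).trans (by gcongr)
    _ = ENNReal.ofReal (ρ ^ κ) * W + W' * (ENNReal.ofReal ρ⁻¹ * ENNReal.ofReal (N ^ 2)) := by ring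
    _ = _ := by rw [← ENNReal.ofReal_mul (by positivity), low, high]; ring

end Interpolation

section

variable {t₁ t₂ : ℝ}

lemma sq_ofReal_integral_norm_le_lintegral {E : Type*} [NormedAddCommGroup E]
    {g : ℝ → E} (hg : Continuous g) (h₁₂ : t₁ ≤ t₂) (hlen : t₂ - t₁ ≤ 1) :
    ENNReal.ofReal (∫ s in t₁..t₂, ‖g s‖) ^ 2 ≤ ∫⁻ s in Set.Ioc t₁ t₂, ‖g s‖ₑ ^ 2 := by
  have sq_eq_rpow (x : ℝ≥0∞) : x ^ (2 : ℝ) = x ^ 2 := by exact_mod_cast ENNReal.rpow_natCast x 2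
  have sq_rpow_half (x : ℝ≥0∞) : (x ^ (1 / 2 : ℝ)) ^ 2 = x := by
    rw [← sq_eq_rpow, ← ENNReal.rpow_mul]
    norm_num
  have cauchySchwarz := ENNReal.lintegral_mul_le_Lp_mul_Lq (volume.restrict (Set.Ioc t₁ t₂))
    Real.HolderConjugate.two_two (f := fun _ => 1) (g := fun s => ‖g s‖ₑ)
    aemeasurable_const hg.enorm.measurable.aemeasurable
  simp only [Pi.mul_apply, one_mul, sq_eq_rpow, one_pow, setLIntegral_const, Real.volume_Ioc]
    at cauchySchwarz
  rw [intervalIntegral.integral_of_le h₁₂,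
    ofReal_integral_norm_eq_lintegral_enorm (hg.intervalIntegrable t₁ t₂).1]
  calc _ ≤ _ := pow_le_pow_left' cauchySchwarz 2
    _ = ENNReal.ofReal (t₂ - t₁) * ∫⁻ s in Set.Ioc t₁ t₂, ‖g s‖ₑ ^ 2 := by
        rw [mul_pow, sq_rpow_half, sq_rpow_half]
    _ ≤ _ := mul_le_of_le_one_left' (ENNReal.ofReal_le_one.2 hlen)

lemma setLIntegral_Ioc_le_of_le {f : ℝ → ℝ≥0∞} {V : ℝ≥0∞} (hlen : t₂ - t₁ ≤ 1)
    (hV : ∀ τ ∈ Set.Icc t₁ t₂, f τ ≤ V) : ∫⁻ τ in Set.Ioc t₁ t₂, f τ ≤ V := by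
  calc _ ≤ ∫⁻ _ in Set.Ioc t₁ t₂, V :=
        setLIntegral_mono measurable_const fun τ hτ => hV τ ⟨hτ.1.le, hτ.2⟩
    _ = V * ENNReal.ofReal (t₂ - t₁) := by rw [setLIntegral_const, Real.volume_Ioc]
    _ ≤ V := mul_le_of_le_one_right' (ENNReal.ofReal_le_one.2 hlen)

namespace IsNLS

variable {p : ℕ} {u : ℝ → ℝ → ℂ}

lemma ofReal_duhamelMajorant_sq_le (hu : IsNLS p Set.univ u) (h₁₂ : t₁ ≤ t₂)
    (hlen : t₂ - t₁ ≤ 1) (l : ℤ) :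
    ENNReal.ofReal (duhamelMajorant p u t₁ t₂ l) ^ 2 ≤
      4 * (‖torusCoeff (u t₁) l‖ₑ ^ 2 +
        ∫⁻ τ in Set.Ioc t₁ t₂, ‖torusCoeff (powerNonlinearity p (u τ)) l‖ₑ ^ 2) := by
  rw [duhamelMajorant, ENNReal.ofReal_add (norm_nonneg _)
    (intervalIntegral.integral_nonneg h₁₂ fun _ _ => norm_nonneg _), ofReal_norm]
  refine (sq_add_le_four_mul_sq_add_sq _ _).trans ?_
  gcongr
  exact sq_ofReal_integral_norm_le_lintegral (hu.continuous_torusCoeff_powerNonlinearity l)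
    h₁₂ hlen

lemma tsum_japaneseSq_pow_mul_duhamelMajorant_sq_le (hu : IsNLS p Set.univ u) (s : ℕ)
    (h₁₂ : t₁ ≤ t₂) (hlen : t₂ - t₁ ≤ 1) {V : ℝ≥0∞}
    (hV : ∀ τ ∈ Set.Icc t₁ t₂, sobolevSq s (powerNonlinearity p (u τ)) ≤ V) :
    ∑' l, ENNReal.ofReal (japaneseSq l ^ s) * ENNReal.ofReal (duhamelMajorant p u t₁ t₂ l) ^ 2 ≤
      4 * (sobolevSq s (u t₁) + V) := by
  have measurable_forcing (l : ℤ) :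
      Measurable fun τ => ‖torusCoeff (powerNonlinearity p (u τ)) l‖ₑ ^ 2 :=
    (hu.continuous_torusCoeff_powerNonlinearity l).enorm.measurable.pow_const 2
  calc _ ≤ ∑' l, 4 * (ENNReal.ofReal (japaneseSq l ^ s) * ‖torusCoeff (u t₁) l‖ₑ ^ 2 +
        ∫⁻ τ in Set.Ioc t₁ t₂, ENNReal.ofReal (japaneseSq l ^ s) *
          ‖torusCoeff (powerNonlinearity p (u τ)) l‖ₑ ^ 2) := by
        refine ENNReal.tsum_le_tsum fun l => ?_
        rw [lintegral_const_mul _ (measurable_forcing l), ← mul_add, mul_left_comm]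
        exact mul_le_mul_right (hu.ofReal_duhamelMajorant_sq_le h₁₂ hlen l) _
    _ = 4 * (sobolevSq s (u t₁) +
        ∫⁻ τ in Set.Ioc t₁ t₂, sobolevSq s (powerNonlinearity p (u τ))) := by
        rw [ENNReal.tsum_mul_left, ENNReal.tsum_add, ← lintegral_tsum fun l =>
          ((measurable_forcing l).const_mul _).aemeasurable]
        rfl
    _ ≤ _ := by
        gcongr
        exact setLIntegral_Ioc_le_of_le hlen hV

lemma tsum_japaneseSq_pow_mul_envelope_sq_le (hu : IsNLS p Set.univ u) (s : ℕ)
    (h₁₂ : t₁ ≤ t₂) (hlen : t₂ - t₁ ≤ 1) {V : ℝ≥0∞}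
    (hV : ∀ τ ∈ Set.Icc t₁ t₂, sobolevSq s (powerNonlinearity p (u τ)) ≤ V) :
    ∑' l, ENNReal.ofReal (japaneseSq l ^ s) * ENNReal.ofReal (envelope p u t₁ t₂ l) ^ 2 ≤
      32 * (sobolevSq s (u t₁) + V) := by
  let weightedSq (l : ℤ) : ℝ≥0∞ :=
    ENNReal.ofReal (japaneseSq l ^ s) * ENNReal.ofReal (duhamelMajorant p u t₁ t₂ l) ^ 2
  have bound : ∑' l, weightedSq l ≤ 4 * (sobolevSq s (u t₁) + V) :=
    hu.tsum_japaneseSq_pow_mul_duhamelMajorant_sq_le s h₁₂ hlen hV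
  calc _ ≤ ∑' l, 4 * (weightedSq l + weightedSq (-l)) := by
        refine ENNReal.tsum_le_tsum fun l => ?_
        simp only [weightedSq]
        rw [envelope, ENNReal.ofReal_add (duhamelMajorant_nonneg h₁₂ l)
          (duhamelMajorant_nonneg h₁₂ _), japaneseSq_neg, ← mul_add, mul_left_comm]
        exact mul_le_mul_right (sq_add_le_four_mul_sq_add_sq _ _) _
    _ = 4 * (∑' l, weightedSq l + ∑' l, weightedSq l) := by
        rw [ENNReal.tsum_mul_left, ENNReal.tsum_add]
        congr 2
        exact (Equiv.neg ℤ).tsum_eq weightedSq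
    _ ≤ 4 * (4 * (sobolevSq s (u t₁) + V) + 4 * (sobolevSq s (u t₁) + V)) := by gcongr
    _ = _ := by ring

lemma tsum_japaneseSq_pow_mul_envelope_sq_le_tameConst (hu : IsNLS p Set.univ u) (s : ℕ)
    (h₁₂ : t₁ ≤ t₂) (hlen : t₂ - t₁ ≤ 1) {L S : ℝ≥0∞}
    (hL : ∀ τ ∈ Set.Icc t₁ t₂, sobolevSq 1 (u τ) ≤ L)
    (hS : ∀ τ ∈ Set.Icc t₁ t₂, sobolevSq s (u τ) ≤ S) :
    ∑' l, ENNReal.ofReal (japaneseSq l ^ s) * ENNReal.ofReal (envelope p u t₁ t₂ l) ^ 2 ≤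
      32 * (1 + tameConst s p L) * S := by
  have forcing_le (τ) (hτ : τ ∈ Set.Icc t₁ t₂) :
      sobolevSq s (powerNonlinearity p (u τ)) ≤ tameConst s p L * S :=
    (sobolevSq_powerNonlinearity_le_tameConst_mul s p (hu.smoothPeriodic τ) (hL τ hτ)).trans
      (mul_le_mul_right (hS τ hτ) _)
  calc _ ≤ 32 * (sobolevSq s (u t₁) + tameConst s p L * S) :=
        hu.tsum_japaneseSq_pow_mul_envelope_sq_le s h₁₂ hlen forcing_le
    _ ≤ 32 * (S + tameConst s p L * S) := by
        gcongr
        exact hS t₁ (Set.left_mem_Icc.2 h₁₂)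
    _ = _ := by ring

end IsNLS

end

/-- The constant of the multilinear estimate with `2q + 4` factors when the squared `H¹` and
`H^{κ+2}` norms of the factors are bounded by `W` and `W' N²`. -/
def interpolatedConst (κ q : ℕ) (W W' : ℝ≥0∞) : ℝ≥0∞ :=
  multilinearConst (κ + 1) (2 * q) * ((W + W') *
    ((sumInvJapaneseSq * W) ^ (q + 1) + W * (sumInvJapaneseSq * W) ^ q))

lemma interpolatedConst_ne_top (κ q : ℕ) {W W' : ℝ≥0∞} (hW : W ≠ ⊤) (hW' : W' ≠ ⊤) :
    interpolatedConst κ q W W' ≠ ⊤ := by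
  have := multilinearConst_ne_top (κ + 1) (2 * q)
  have := sumInvJapaneseSq_ne_top
  unfold interpolatedConst
  finiteness

lemma tsum_energySymbol_mul_prod_le_interpolatedConst {ι : Type*} [Fintype ι] {q : ℕ} (κ : ℕ)
    (hcard : Fintype.card ι = 4 + 2 * q) {σ : ι → ℤ} (hσ : ∀ i, σ i = 1 ∨ σ i = -1)
    (A : ℤ → ℝ≥0∞) {N : ℝ} (hN : 0 < N) {W W' : ℝ≥0∞}
    (hW : ∑' n, ENNReal.ofReal (japaneseSq n ^ 1) * A n ^ 2 ≤ W)
    (hW' : ∑' n, ENNReal.ofReal (japaneseSq n ^ (κ + 2)) * A n ^ 2 ≤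
      W' * ENNReal.ofReal (N ^ 2)) :
    ∑' n : ι → ℤ, (if ∑ i, n i = 0 then ENNReal.ofReal |(energySymbol (κ + 1) σ n : ℝ)| *
        resonanceWeight 1 (resonance σ n) * ∏ i, A (n i) else 0) ≤
      interpolatedConst κ q W W' * ENNReal.ofReal (N ^ (2 * (κ : ℝ) / (κ + 1))) := by
  have sq_tsum_le : (∑' n, A n) ^ 2 ≤ sumInvJapaneseSq * W :=
    (sq_tsum_le_sumInvJapaneseSq_mul A).trans
      (mul_le_mul_right (by simpa only [pow_one] using hW) _)
  have tsum_pow_le (m : ℕ) : (∑' n, A n) ^ (2 * m) ≤ (sumInvJapaneseSq * W) ^ m := by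
    rw [pow_mul]
    exact pow_le_pow_left' sq_tsum_le m
  have high_le := tsum_sq_absWeight_pow_mul_le_rpow A κ hN hW hW'
  have low_le := (tsum_sq_absWeight_mul_le A).trans hW
  have exponent : 2 + 2 * q = 2 * (q + 1) := by ring
  refine (tsum_energySymbol_mul_resonanceWeight_mul_prod_le (κ + 1) hcard hσ A).trans ?_
  rw [interpolatedConst, mul_assoc (multilinearConst _ _), exponent]
  refine mul_le_mul_right ((add_le_add (mul_le_mul' high_le (tsum_pow_le (q + 1)))
    (mul_le_mul' (mul_le_mul' high_le low_le) (tsum_pow_le q))).trans_eq ?_) _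
  ring

lemma exists_forall_ofReal_abs_homogSobolevSq_sub_le {p : ℕ} (hp : 1 ≤ p) (κ : ℕ) {L D : ℝ≥0∞}
    (hL : L ≠ ⊤) (hD : D ≠ ⊤) :
    ∃ K : ℝ≥0∞, K ≠ ⊤ ∧ ∀ u, IsNLS p Set.univ u → ∀ t₁ t₂ N : ℝ, t₁ ≤ t₂ → t₂ - t₁ ≤ 1 →
      0 < N → (∀ τ ∈ Set.Icc t₁ t₂, sobolevSq 1 (u τ) ≤ L) →
      (∀ τ ∈ Set.Icc t₁ t₂, sobolevSq (κ + 2) (u τ) ≤ D * ENNReal.ofReal (N ^ 2)) →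
      ENNReal.ofReal |homogSobolevSq (κ + 2) (u t₂) - homogSobolevSq (κ + 2) (u t₁)| ≤
        K * ENNReal.ofReal (N ^ (2 * (κ : ℝ) / (κ + 1))) := by
  obtain ⟨q, rfl⟩ : ∃ q, p = q + 1 := ⟨p - 1, by omega⟩
  let W := 32 * (1 + tameConst 1 (q + 1) L) * L
  let W' := 32 * (1 + tameConst (κ + 2) (q + 1) L) * D
  have hW : W ≠ ⊤ := by
    have := tameConst_ne_top 1 (q + 1) hL
    finiteness
  have hW' : W' ≠ ⊤ := by
    have := tameConst_ne_top (κ + 2) (q + 1) hL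
    finiteness
  have hK := interpolatedConst_ne_top κ q hW hW'
  refine ⟨ENNReal.ofReal (2 * (q + 1 : ℕ) + 5) * interpolatedConst κ q W W', by finiteness, ?_⟩
  intro u hu t₁ t₂ N h₁₂ hlen hN h1 hk
  have hcard : Fintype.card (SlotIndex (q + 1)) = 4 + 2 * q := by
    simp only [SlotIndex, Fintype.card_sum, Fintype.card_fin]
    ring
  refine (hu.ofReal_abs_homogSobolevSq_sub_le (κ + 1) h₁₂ hlen).trans ?_
  rw [mul_assoc]
  refine mul_le_mul_right (tsum_energySymbol_mul_prod_le_interpolatedConst κ hcard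
    (slotSign_eq_one_or _) (fun l => ENNReal.ofReal (envelope (q + 1) u t₁ t₂ l)) hN
    (hu.tsum_japaneseSq_pow_mul_envelope_sq_le_tameConst 1 h₁₂ hlen h1 h1) ?_) _
  rw [mul_assoc]
  exact hu.tsum_japaneseSq_pow_mul_envelope_sq_le_tameConst (κ + 2) h₁₂ hlen h1 hk

/-! ### Almost conservation of the `Hᵏ` norm -/

lemma HkSq_nonneg (k : ℕ) (f : ℝ → ℂ) : 0 ≤ HkSq k f :=
  add_nonneg (intervalIntegral.integral_nonneg Real.two_pi_pos.le fun _ _ => by positivity)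
    (intervalIntegral.integral_nonneg Real.two_pi_pos.le fun _ _ => by positivity)

lemma HkNorm_nonneg (k : ℕ) (f : ℝ → ℂ) : 0 ≤ HkNorm k f := Real.sqrt_nonneg _

lemma HkNorm_sq (k : ℕ) (f : ℝ → ℂ) : HkNorm k f ^ 2 = HkSq k f := Real.sq_sqrt (HkSq_nonneg k f)

section Comparison

variable {f : ℝ → ℂ}

lemma HkSq_eq_homogSobolevSq (hf : SmoothPeriodic f) (k : ℕ) :
    HkSq k f = 2 * π * (homogSobolevSq 0 f + homogSobolevSq k f) := by
  rw [← (hasSum_HkSq hf k).tsum_eq, tsum_mul_left, homogSobolevSq, homogSobolevSq,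
    ← (summable_pow_mul_sq_norm_torusCoeff hf 0).tsum_add
      (summable_pow_mul_sq_norm_torusCoeff hf k)]
  congr 2 with l
  ring

lemma HkSq_le_toReal_sobolevSq (hf : SmoothPeriodic f) (k : ℕ) :
    HkSq k f ≤ 4 * π * (sobolevSq k f).toReal := by
  rw [← (hasSum_HkSq hf k).tsum_eq, toReal_sobolevSq hf, ← tsum_mul_left]
  refine (hasSum_HkSq hf k).summable.tsum_le_tsum (fun l => ?_)
    ((summable_japaneseSq_pow_mul_sq_norm_torusCoeff hf k).mul_left _)
  have weight_le : 1 + (l : ℝ) ^ (2 * k) ≤ 2 * japaneseSq l ^ k := by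
    have := pow_two_mul_le_japaneseSq_pow l k
    have := one_le_pow₀ (one_le_japaneseSq l) (n := k)
    linarith
  calc _ ≤ 2 * π * ((2 * japaneseSq l ^ k) * ‖torusCoeff f l‖ ^ 2) := by gcongr
    _ = _ := by ring

lemma japaneseSq_pow_le (l : ℤ) (k : ℕ) : japaneseSq l ^ k ≤ 2 ^ k * (1 + (l : ℝ) ^ (2 * k)) := by
  have hl := pow_two_mul_nonneg l k
  calc japaneseSq l ^ k ≤ 2 ^ (k - 1) * (1 ^ k + ((l : ℝ) ^ 2) ^ k) :=
        add_pow_le zero_le_one (sq_nonneg _) k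
    _ = 2 ^ (k - 1) * (1 + (l : ℝ) ^ (2 * k)) := by rw [one_pow, pow_mul]
    _ ≤ _ := by
        gcongr
        · norm_num
        · exact k.sub_le 1

lemma sobolevSq_le_ofReal_HkSq (hf : SmoothPeriodic f) (k : ℕ) :
    sobolevSq k f ≤ 2 ^ k * ENNReal.ofReal (HkSq k f) := by
  have real_bound : ∑' l : ℤ, japaneseSq l ^ k * ‖torusCoeff f l‖ ^ 2 ≤ 2 ^ k * HkSq k f := by
    rw [← (hasSum_HkSq hf k).tsum_eq, ← tsum_mul_left]
    refine (summable_japaneseSq_pow_mul_sq_norm_torusCoeff hf k).tsum_le_tsum (fun l => ?_)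
      ((hasSum_HkSq hf k).summable.mul_left _)
    have hl := pow_two_mul_nonneg l k
    calc _ ≤ 2 ^ k * (1 + (l : ℝ) ^ (2 * k)) * ‖torusCoeff f l‖ ^ 2 := by
          gcongr
          exact japaneseSq_pow_le l k
      _ ≤ 2 * π * (2 ^ k * (1 + (l : ℝ) ^ (2 * k)) * ‖torusCoeff f l‖ ^ 2) :=
          le_mul_of_one_le_left (by positivity) (by linarith [Real.pi_gt_three])
      _ = _ := by ring
  calc _ ≤ ENNReal.ofReal (2 ^ k * HkSq k f) := by
        rw [sobolevSq_eq_ofReal hf]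
        exact ENNReal.ofReal_le_ofReal real_bound
    _ = _ := by rw [ENNReal.ofReal_mul (by positivity), ENNReal.ofReal_pow zero_le_two,
        ENNReal.ofReal_ofNat]

lemma HkNorm_le_of_sobolevSq_le (hf : SmoothPeriodic f) {k : ℕ} {D : ℝ≥0∞} (hD : D ≠ ⊤) {N : ℝ}
    (hN : 0 ≤ N) (h : sobolevSq k f ≤ D * ENNReal.ofReal (N ^ 2)) :
    HkNorm k f ≤ √(4 * π * D.toReal) * N := by
  have toReal_le : (sobolevSq k f).toReal ≤ D.toReal * N ^ 2 := by
    simpa [ENNReal.toReal_mul, ENNReal.toReal_ofReal (sq_nonneg N)]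
      using ENNReal.toReal_mono (by finiteness) h
  refine Real.sqrt_le_iff.2 ⟨by positivity, ?_⟩
  calc HkSq k f ≤ 4 * π * (sobolevSq k f).toReal := HkSq_le_toReal_sobolevSq hf k
    _ ≤ 4 * π * (D.toReal * N ^ 2) := by gcongr
    _ = _ := by rw [mul_pow, Real.sq_sqrt (by positivity), mul_assoc (4 * π)]

end Comparison

lemma IsNLS.sobolevSq_one_le_of_HkNorm_le {p : ℕ} {u : ℝ → ℝ → ℂ} (hu : IsNLS p Set.univ u)
    {t₀ R : ℝ} (hR : HkNorm 1 (u t₀) ≤ R) (t : ℝ) :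
    sobolevSq 1 (u t) ≤ energyBound p (2 ^ 1 * ENNReal.ofReal (R ^ 2)) := by
  refine (hu.sobolevSq_one_le_energyBound t t₀).trans (energyBound_mono p ?_)
  refine (sobolevSq_le_ofReal_HkSq (hu.smoothPeriodic t₀) 1).trans ?_
  rw [← HkNorm_sq]
  gcongr
  exact HkNorm_nonneg _ _

lemma exists_time_forall_sobolevSq_le (s p : ℕ) {L : ℝ≥0∞} (hL : L ≠ ⊤) :
    ∃ T : ℝ, 0 < T ∧ T ≤ 1 ∧ ∀ u, IsNLS p Set.univ u → (∀ t, sobolevSq 1 (u t) ≤ L) →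
      ∀ t₀, ∀ t ∈ Set.Icc (t₀ - T) (t₀ + T),
        sobolevSq s (u t) ≤ 2 * 2 ^ s * ENNReal.ofReal (HkNorm s (u t₀) ^ 2) := by
  obtain ⟨r, hr, small⟩ := exists_pos_forall_add_one_mul_ofReal_le (tameConst_ne_top s p hL)
  have hTr : min (r / 2) 1 ≤ r / 2 := min_le_left _ _
  have hT : 0 < min (r / 2) 1 := by positivity
  refine ⟨min (r / 2) 1, hT, min_le_right _ _, fun u hu h1 t₀ t ht => ?_⟩
  obtain ⟨Q, hQ, bound⟩ :=
    hu.exists_sobolevSq_le (max s 3) (t₀ - min (r / 2) 1) (t₀ + min (r / 2) 1)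
  calc sobolevSq s (u t) ≤ 2 * sobolevSq s (u t₀) :=
        hu.sobolevSq_le_two_mul hQ (le_max_right s 3) (le_max_left s 3) bound hL
          (fun t _ => h1 t) (small _ (by linarith)) ht ⟨by linarith, by linarith⟩
    _ ≤ _ := by
        rw [HkNorm_sq, mul_assoc]
        exact mul_le_mul_right (sobolevSq_le_ofReal_HkSq (hu.smoothPeriodic t₀) s) _

lemma IsNLS.abs_HkSq_sub (k : ℕ) {p : ℕ} {u : ℝ → ℝ → ℂ} (hu : IsNLS p Set.univ u) (t t' : ℝ) :
    |HkSq k (u t) - HkSq k (u t')| =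
      2 * π * |homogSobolevSq k (u t) - homogSobolevSq k (u t')| := by
  rw [HkSq_eq_homogSobolevSq (hu.smoothPeriodic t), HkSq_eq_homogSobolevSq (hu.smoothPeriodic t'),
    hu.homogSobolevSq_zero_eq t t', ← mul_sub, add_sub_add_left_eq_sub, abs_mul,
    abs_of_pos Real.two_pi_pos]

lemma exists_forall_abs_HkSq_sub_le {p : ℕ} (hp : 1 ≤ p) (κ : ℕ) {L D : ℝ≥0∞}
    (hL : L ≠ ⊤) (hD : D ≠ ⊤) :
    ∃ K : ℝ, 0 ≤ K ∧ ∀ u, IsNLS p Set.univ u → ∀ t₀ T N : ℝ, T ≤ 1 → 0 < N →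
      (∀ τ, sobolevSq 1 (u τ) ≤ L) →
      (∀ τ ∈ Set.Icc (t₀ - T) (t₀ + T), sobolevSq (κ + 2) (u τ) ≤ D * ENNReal.ofReal (N ^ 2)) →
      ∀ t ∈ Set.Icc (t₀ - T) (t₀ + T),
        |HkSq (κ + 2) (u t) - HkSq (κ + 2) (u t₀)| ≤ K * N ^ (2 * (κ : ℝ) / (κ + 1)) := by
  obtain ⟨K, hK, increment⟩ := exists_forall_ofReal_abs_homogSobolevSq_sub_le hp κ hL hD
  refine ⟨2 * π * K.toReal, by positivity, fun u hu t₀ T N hT hN h1 hk t ht => ?_⟩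
  have increment_le : ENNReal.ofReal |homogSobolevSq (κ + 2) (u t) - homogSobolevSq (κ + 2) (u t₀)|
      ≤ K * ENNReal.ofReal (N ^ (2 * (κ : ℝ) / (κ + 1))) := by
    obtain ⟨ht_left, ht_right⟩ := ht
    rcases le_total t t₀ with htt₀ | ht₀t
    · rw [abs_sub_comm]
      exact increment u hu t t₀ N htt₀ (by linarith) hN (fun τ _ => h1 τ)
        fun τ hτ => hk τ ⟨ht_left.trans hτ.1, by linarith [hτ.2]⟩
    · exact increment u hu t₀ t N ht₀t (by linarith) hN (fun τ _ => h1 τ)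
        fun τ hτ => hk τ ⟨by linarith [hτ.1], hτ.2.trans ht_right⟩
  have real_le : |homogSobolevSq (κ + 2) (u t) - homogSobolevSq (κ + 2) (u t₀)| ≤
      K.toReal * N ^ (2 * (κ : ℝ) / (κ + 1)) := by
    have := ENNReal.toReal_mono (by finiteness) increment_le
    rwa [ENNReal.toReal_mul, ENNReal.toReal_ofReal (abs_nonneg _),
      ENNReal.toReal_ofReal (by positivity)] at this
  rw [hu.abs_HkSq_sub, mul_assoc (2 * π)]
  gcongr

lemma exists_forall_HkNorm_le_and_abs_HkSq_sub_le {p : ℕ} (hp : 1 ≤ p) (κ : ℕ) (R : ℝ) :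
    ∃ C T : ℝ, 1 ≤ C ∧ 0 < T ∧ ∀ u, IsNLS p Set.univ u → ∀ t₀, HkNorm 1 (u t₀) ≤ R →
      ∀ t ∈ Set.Ioo (t₀ - T) (t₀ + T),
        HkNorm (κ + 2) (u t) ≤ C * HkNorm (κ + 2) (u t₀) ∧
        |HkSq (κ + 2) (u t) - HkSq (κ + 2) (u t₀)| ≤
          C * HkNorm (κ + 2) (u t₀) ^ (2 * (κ : ℝ) / (κ + 1)) := by
  have hL := energyBound_ne_top p (x := 2 ^ 1 * ENNReal.ofReal (R ^ 2)) (by finiteness)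
  have hD : (2 * 2 ^ (κ + 2) : ℝ≥0∞) ≠ ⊤ := by finiteness
  obtain ⟨K, hK, increment⟩ := exists_forall_abs_HkSq_sub_le hp κ hL hD
  obtain ⟨T, hT, hT1, growth⟩ := exists_time_forall_sobolevSq_le (κ + 2) p hL
  set A := √(4 * π * (2 * 2 ^ (κ + 2) : ℝ≥0∞).toReal)
  have hA : 0 ≤ A := Real.sqrt_nonneg _
  refine ⟨1 + A + K, T, by linarith, hT, fun u hu t₀ hR t ht => ?_⟩
  replace ht := Set.Ioo_subset_Icc_self ht
  have H1_le := hu.sobolevSq_one_le_of_HkNorm_le hR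
  have Hk_le := growth u hu H1_le t₀
  have hN : 0 ≤ HkNorm (κ + 2) (u t₀) := HkNorm_nonneg _ _
  have norm_le : HkNorm (κ + 2) (u t) ≤ A * HkNorm (κ + 2) (u t₀) :=
    HkNorm_le_of_sobolevSq_le (hu.smoothPeriodic t) hD hN (Hk_le t ht)
  refine ⟨norm_le.trans (by gcongr; linarith), ?_⟩
  rcases hN.eq_or_lt with hN0 | hNpos
  · have vanish : HkNorm (κ + 2) (u t) = 0 :=
      le_antisymm (by simpa only [← hN0, mul_zero] using norm_le) (HkNorm_nonneg _ _)
    rw [← HkNorm_sq, ← HkNorm_sq, vanish, ← hN0, sub_self, abs_zero]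
    positivity
  · refine (increment u hu t₀ T _ hT1 hNpos H1_le Hk_le t ht).trans ?_
    gcongr
    linarith

/-! ### The modified energy -/

/-- The correction `𝓕ₖ`. Since `‖u‖²_{Hᵏ}` is itself almost conserved, the modified energy only has
to cut off small norms, where a power with exponent larger than `(2k-4)/(k-1)` is too small to
control the increment: `‖u‖²_{Hᵏ} + 𝓕ₖ(u)` is the positive part of `‖u‖²_{Hᵏ} - 1`. -/
def energyCorrection (k : ℕ) (f : ℝ → ℂ) : ℝ := -min (HkSq k f) 1

lemma min_sq_one_le_rpow {x α : ℝ} (hx : 0 ≤ x) (hα : 0 ≤ α) (hα2 : α ≤ 2) :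
    min (x ^ 2) 1 ≤ x ^ α := by
  rcases le_total 1 x with large | small
  · exact (min_le_right _ _).trans (Real.one_le_rpow large hα)
  · refine (min_le_left _ _).trans ?_
    rcases hx.eq_or_lt with rfl | hpos
    · simpa using Real.rpow_nonneg le_rfl α
    · rw [← Real.rpow_two]
      exact Real.rpow_le_rpow_of_exponent_ge hpos small hα2

lemma abs_energyCorrection_le (k : ℕ) (f : ℝ → ℂ) {α : ℝ} (hα : 0 ≤ α) (hα2 : α ≤ 2) :
    |energyCorrection k f| ≤ HkNorm k f ^ α := by
  rw [energyCorrection, abs_neg, abs_of_nonneg (le_min (HkSq_nonneg k f) zero_le_one), ← HkNorm_sq]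
  exact min_sq_one_le_rpow (HkNorm_nonneg k f) hα hα2

lemma rpow_le_mul_rpow_add {C N α δ : ℝ} (hC : 1 ≤ C) (hN : 0 ≤ N) (hδ : 0 ≤ δ)
    (hCN : 1 ≤ C * N) : N ^ α ≤ C ^ δ * N ^ (α + δ) := by
  have hNpos : 0 < N := hN.lt_of_ne (by rintro rfl; linarith)
  calc N ^ α ≤ (C * N) ^ δ * N ^ α :=
        le_mul_of_one_le_left (by positivity) (Real.one_le_rpow hCN hδ)
    _ = _ := by rw [Real.mul_rpow (by linarith) hN, Real.rpow_add hNpos]; ring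

lemma HkSq_add_energyCorrection_le {k : ℕ} {f g : ℝ → ℂ} {C α δ : ℝ} (hC : 1 ≤ C) (hδ : 0 ≤ δ)
    (norm_le : HkNorm k f ≤ C * HkNorm k g)
    (increment_le : |HkSq k f - HkSq k g| ≤ C * HkNorm k g ^ α) :
    HkSq k f + energyCorrection k f ≤
      HkSq k g + energyCorrection k g + C * C ^ δ * HkNorm k g ^ (α + δ) := by
  have hN := HkNorm_nonneg k g
  have energy_nonneg : 0 ≤ HkSq k g + energyCorrection k g := by
    rw [energyCorrection]
    linarith [min_le_left (HkSq k g) 1]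
  rcases le_total (C * HkNorm k g) 1 with small | large
  · have energy_eq_zero : HkSq k f + energyCorrection k f = 0 := by
      have : HkSq k f ≤ 1 := by
        rw [← HkNorm_sq]
        exact pow_le_one₀ (HkNorm_nonneg k f) (norm_le.trans small)
      rw [energyCorrection, min_eq_left this, add_neg_cancel]
    rw [energy_eq_zero]
    positivity
  · have lipschitz : HkSq k f + energyCorrection k f ≤
        HkSq k g + energyCorrection k g + |HkSq k f - HkSq k g| := by
      rw [energyCorrection, energyCorrection]
      grind
    calc _ ≤ HkSq k g + energyCorrection k g + C * HkNorm k g ^ α := by linarith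
      _ ≤ HkSq k g + energyCorrection k g + C * (C ^ δ * HkNorm k g ^ (α + δ)) := by
          gcongr
          exact rpow_le_mul_rpow_add hC hN hδ large
      _ = _ := by rw [mul_assoc]

theorem nls_modified_energy_bounds_general (k p : ℕ) (hk : 2 ≤ k) (hp : 1 ≤ p) (R ε : ℝ) :
    ∃ C T : ℝ, 0 < C ∧ 0 < T ∧ ∃ F : (ℝ → ℂ) → ℝ,
      ∀ u : ℝ → ℝ → ℂ, IsNLS p Set.univ u → ∀ t₀ : ℝ, HkNorm 1 (u t₀) ≤ R →
        ∀ t ∈ Set.Ioo (t₀ - T) (t₀ + T),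
          |F (u t)| ≤ C * HkNorm k (u t₀) ^ ((2 * (k : ℝ) - 4) / ((k : ℝ) - 1)) ∧
          ∀ δ ∈ Set.Icc 0 ε, HkSq k (u t) + F (u t) ≤ HkSq k (u t₀) + F (u t₀)
            + C * HkNorm k (u t₀) ^ ((2 * (k : ℝ) - 4) / ((k : ℝ) - 1) + δ) := by
  obtain ⟨κ, rfl⟩ : ∃ κ, k = κ + 2 := ⟨k - 2, by omega⟩
  have exponent :
      (2 * ((κ + 2 : ℕ) : ℝ) - 4) / (((κ + 2 : ℕ) : ℝ) - 1) = 2 * (κ : ℝ) / (κ + 1) := by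
    push_cast
    congr 1 <;> ring
  rw [exponent]
  set α : ℝ := 2 * (κ : ℝ) / (κ + 1)
  have hα : 0 ≤ α := by positivity
  have hα2 : α ≤ 2 := (div_le_iff₀ (by positivity)).2 (by linarith)
  obtain ⟨C, T, hC, hT, conservation⟩ := exists_forall_HkNorm_le_and_abs_HkSq_sub_le hp κ R
  refine ⟨C ^ α + C * C ^ ε, T, by positivity, hT, energyCorrection (κ + 2),
    fun u hu t₀ hR t ht => ?_⟩
  have hN := HkNorm_nonneg (κ + 2) (u t₀)
  obtain ⟨norm_le, increment_le⟩ := conservation u hu t₀ hR t ht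
  refine ⟨?_, fun δ hδ => ?_⟩
  · calc _ ≤ HkNorm (κ + 2) (u t) ^ α := abs_energyCorrection_le _ _ hα hα2
      _ ≤ (C * HkNorm (κ + 2) (u t₀)) ^ α :=
          Real.rpow_le_rpow (HkNorm_nonneg _ _) norm_le hα
      _ = C ^ α * HkNorm (κ + 2) (u t₀) ^ α := Real.mul_rpow (by positivity) hN
      _ ≤ _ := by
          gcongr
          exact le_add_of_nonneg_right (by positivity)
  · refine (HkSq_add_energyCorrection_le hC hδ.1 norm_le increment_le).trans ?_
    gcongr
    calc C * C ^ δ ≤ C * C ^ ε := by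
          gcongr
          exact hδ.2
      _ ≤ _ := le_add_of_nonneg_left (by positivity)

/-- Theorem 1.1: modified energies and their almost-conservation bounds. -/
theorem nls_modified_energy_bounds
    (t₀ : ℝ) (k p : ℕ) (hk : 2 ≤ k) (hp : 2 ≤ p) (R ε : ℝ) (hR : 0 < R) (hε : 0 < ε) :
    ∃ C T : ℝ, 0 < C ∧ 0 < T ∧ ∃ F : (ℝ → ℂ) → ℝ,
      (∀ u : ℝ → ℝ → ℂ, IsNLS p Set.univ u → HkNorm 1 (u t₀) ≤ R →
        (∀ t ∈ Set.Ioo (t₀ - T) (t₀ + T),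
            |F (u t)| ≤ C * HkNorm k (u t₀) ^ ((2 * (k : ℝ) - 4) / ((k : ℝ) - 1))) ∧
        (∀ t ∈ Set.Ioo (t₀ - T) (t₀ + T),
            HkSq k (u t) + F (u t) ≤ HkSq k (u t₀) + F (u t₀)
              + C * HkNorm k (u t₀) ^ ((2 * (k : ℝ) - 4) / ((k : ℝ) - 1) + ε))) ∧
      (¬ (3 ∣ k) → ∀ u : ℝ → ℝ → ℂ, IsNLS p Set.univ u → HkNorm 1 (u t₀) ≤ R →
        ∀ t ∈ Set.Ioo (t₀ - T) (t₀ + T),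
          HkSq k (u t) + F (u t) ≤ HkSq k (u t₀) + F (u t₀)
            + C * HkNorm k (u t₀) ^ ((2 * (k : ℝ) - 4) / ((k : ℝ) - 1))) := by
  obtain ⟨C, T, hC, hT, F, bounds⟩ :=
    nls_modified_energy_bounds_general k p hk (one_le_two.trans hp) R ε
  refine ⟨C, T, hC, hT, F, fun u hu hu₀ => ⟨fun t ht => (bounds u hu t₀ hu₀ t ht).1,
    fun t ht => (bounds u hu t₀ hu₀ t ht).2 ε (Set.right_mem_Icc.2 hε.le)⟩,
    fun _ u hu hu₀ t ht => ?_⟩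
  simpa only [add_zero] using (bounds u hu t₀ hu₀ t ht).2 0 (Set.left_mem_Icc.2 hε.le)
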